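/- arXiv:1612.06618 — 3 statements merged into one kernel-verified Lean document; each statement's English description precedes it below -/
import Mathlib

section
/- Fix ν > 0 and define c₀ = 1, c₁ = (ν²−1)/24, c₂ = (ν²−1)(ν²+23)/1152, c₃ = (ν²−1)(5ν⁴−298ν²+11237)/414720, c₄ = (ν²−1)(5ν⁶−1887ν⁴−241041ν²+2482411)/39813120, c₅ = (ν²−1)(7ν⁸−7420ν⁶+1451274ν⁴−220083004ν²+1363929895)/6688604160, c₆ = (ν²−1)(35ν¹⁰−78295ν⁸+76299326ν⁶+25171388146ν⁴−915974552561ν²+4175309343349)/4815794995200, and c₇ = (ν²−1)(5ν¹²−20190ν¹⁰+45700491ν⁸−19956117988ν⁶+7134232164555ν⁴−142838662997982ν²+525035501918789)/115579079884800. Then there exist constants C > 0 and Λ > 0 (depending only on ν) such that for all λ ≥ Λ, |Z(λ,ν) · λ^((ν-1)/(2ν)) · (2π)^((ν-1)/2) · √ν · exp(−ν·λ^(1/ν)) − Σ_{k=0}^{7} c_k·(ν·λ^(1/ν))^(−k)| ≤ C·λ^(−8/ν). -/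
open scoped BigOperators

/-- The Conway-Maxwell-Poisson normalizing constant `Z(λ,ν) = ∑_{i=0}^∞ λ^i/(i!)^ν`. -/
noncomputable def cmpZ (lam nu : ℝ) : ℝ := ∑' i : ℕ, lam ^ i / (i.factorial : ℝ) ^ nu

/-- The first eight coefficients `c₀,…,c₇` in the asymptotic expansion of `Z(λ,ν)`. -/
noncomputable def cmpCoeff (ν : ℝ) : ℕ → ℝ
  | 0 => 1
  | 1 => (ν ^ 2 - 1) / 24
  | 2 => (ν ^ 2 - 1) * (ν ^ 2 + 23) / 1152
  | 3 => (ν ^ 2 - 1) * (5 * ν ^ 4 - 298 * ν ^ 2 + 11237) / 414720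
  | 4 => (ν ^ 2 - 1) * (5 * ν ^ 6 - 1887 * ν ^ 4 - 241041 * ν ^ 2 + 2482411) / 39813120
  | 5 => (ν ^ 2 - 1) *
      (7 * ν ^ 8 - 7420 * ν ^ 6 + 1451274 * ν ^ 4 - 220083004 * ν ^ 2 + 1363929895) /
      6688604160
  | 6 => (ν ^ 2 - 1) *
      (35 * ν ^ 10 - 78295 * ν ^ 8 + 76299326 * ν ^ 6 + 25171388146 * ν ^ 4 -
        915974552561 * ν ^ 2 + 4175309343349) / 4815794995200
  | 7 => (ν ^ 2 - 1) *
      (5 * ν ^ 12 - 20190 * ν ^ 10 + 45700491 * ν ^ 8 - 19956117988 * ν ^ 6 +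
        7134232164555 * ν ^ 4 - 142838662997982 * ν ^ 2 + 525035501918789) /
      115579079884800
  | _ => 0


open Filter Topology

/-- Stirling main term for `log Γ(u + 1/2)`. -/
noncomputable def cmpStir (u : ℝ) : ℝ :=
  u * Real.log u - u + Real.log (2 * Real.pi) / 2 +
    ((-1 / 24) * u⁻¹ + (7 / 2880) * (u ^ 3)⁻¹ + (-31 / 40320) * (u ^ 5)⁻¹
      + (127 / 215040) * (u ^ 7)⁻¹)

noncomputable def cmpG (u : ℝ) : ℝ := Real.log (Real.Gamma (u + 1 / 2)) - cmpStir u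

theorem cmp_rat_identity (q : ℝ) (h0 : 0 < q) (h1 : q < 1) :
    1 - (1 / (2 * q)) * ((1 + q) * (q - q ^ 2 / 2 + q ^ 3 / 3 - q ^ 4 / 4 + q ^ 5 / 5 - q ^ 6 / 6
        + q ^ 7 / 7 - q ^ 8 / 8 + q ^ 9 / 9)
      + (1 - q) * (q + q ^ 2 / 2 + q ^ 3 / 3 + q ^ 4 / 4 + q ^ 5 / 5 + q ^ 6 / 6
        + q ^ 7 / 7 + q ^ 8 / 8 + q ^ 9 / 9))
    - ((-1 / 24) * (2 * q) * ((1 + q)⁻¹ - (1 - q)⁻¹)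
      + (7 / 2880) * (2 * q) ^ 3 * (((1 + q) ^ 3)⁻¹ - ((1 - q) ^ 3)⁻¹)
      + (-31 / 40320) * (2 * q) ^ 5 * (((1 + q) ^ 5)⁻¹ - ((1 - q) ^ 5)⁻¹)
      + (127 / 215040) * (2 * q) ^ 7 * (((1 + q) ^ 7)⁻¹ - ((1 - q) ^ 7)⁻¹))
    = q ^ 10 * (116 / 15 + 457 / 315 * q ^ 2 + 46 / 105 * q ^ 4 + 61 / 360 * q ^ 6
        - 7 / 40 * q ^ 8 + 37 / 504 * q ^ 10 - 1 / 72 * q ^ 12)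
      / ((1 + q) ^ 7 * (1 - q) ^ 7) := by
  have hq : q ≠ 0 := h0.ne'
  have ha : 1 + q ≠ 0 := by positivity
  have hb : 1 - q ≠ 0 := by linarith
  field_simp
  ring

theorem cmp_log_taylor (q : ℝ) (h0 : 0 < q) (h1 : q ≤ 1 / 2) :
    |Real.log (1 - q) + (q + q ^ 2 / 2 + q ^ 3 / 3 + q ^ 4 / 4 + q ^ 5 / 5 + q ^ 6 / 6
        + q ^ 7 / 7 + q ^ 8 / 8 + q ^ 9 / 9)| ≤ 2 * q ^ 10 ∧
    |Real.log (1 + q) - (q - q ^ 2 / 2 + q ^ 3 / 3 - q ^ 4 / 4 + q ^ 5 / 5 - q ^ 6 / 6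
        + q ^ 7 / 7 - q ^ 8 / 8 + q ^ 9 / 9)| ≤ 2 * q ^ 10 := by
  have hb : q ^ 10 / (1 - q) ≤ 2 * q ^ 10 := by
    rw [div_le_iff₀ (by linarith)]
    nlinarith [pow_pos h0 10]
  have hq : |q| = q := abs_of_pos h0
  constructor
  · have := Real.abs_log_sub_add_sum_range_le (x := q) (by rw [hq]; linarith) 9
    rw [hq] at this
    refine le_trans (le_of_eq ?_) (this.trans hb)
    congr 1
    simp [Finset.sum_range_succ]
    ring
  · have := Real.abs_log_sub_add_sum_range_le (x := -q) (by rw [abs_neg, hq]; linarith) 9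
    rw [abs_neg, hq] at this
    refine le_trans (le_of_eq ?_) (this.trans hb)
    congr 1
    simp [Finset.sum_range_succ]
    ring

theorem cmp_rat_bound (q : ℝ) (hq0 : 0 < q) (hq1 : q ≤ 1 / 2) :
    |q ^ 10 * (116 / 15 + 457 / 315 * q ^ 2 + 46 / 105 * q ^ 4 + 61 / 360 * q ^ 6
        - 7 / 40 * q ^ 8 + 37 / 504 * q ^ 10 - 1 / 72 * q ^ 12)
      / ((1 + q) ^ 7 * (1 - q) ^ 7)| ≤ 100 * 2 ^ 12 * q ^ 9 := by
  have hp : 0 ≤ 116 / 15 + 457 / 315 * q ^ 2 + 46 / 105 * q ^ 4 + 61 / 360 * q ^ 6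
      - 7 / 40 * q ^ 8 + 37 / 504 * q ^ 10 - 1 / 72 * q ^ 12 := by
    have : q ^ 8 ≤ 1 := pow_le_one₀ hq0.le (by linarith)
    have : q ^ 12 ≤ 1 := pow_le_one₀ hq0.le (by linarith)
    have : 0 ≤ 457 / 315 * q ^ 2 + 46 / 105 * q ^ 4 + 61 / 360 * q ^ 6 + 37 / 504 * q ^ 10 := by
      positivity
    linarith
  have hp' : 116 / 15 + 457 / 315 * q ^ 2 + 46 / 105 * q ^ 4 + 61 / 360 * q ^ 6
      - 7 / 40 * q ^ 8 + 37 / 504 * q ^ 10 - 1 / 72 * q ^ 12 ≤ 100 := by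
    have : q ^ 2 ≤ 1 := pow_le_one₀ hq0.le (by linarith)
    have : q ^ 4 ≤ 1 := pow_le_one₀ hq0.le (by linarith)
    have : q ^ 6 ≤ 1 := pow_le_one₀ hq0.le (by linarith)
    have : q ^ 10 ≤ 1 := pow_le_one₀ hq0.le (by linarith)
    have : 0 ≤ q ^ 8 := by positivity
    have : 0 ≤ q ^ 12 := by positivity
    linarith
  have hd : (1 / 2 : ℝ) ^ 7 ≤ (1 + q) ^ 7 * (1 - q) ^ 7 := by
    have : (1 / 2 : ℝ) ^ 7 ≤ (1 - q) ^ 7 := by gcongr; linarith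
    have h2 : 1 ≤ (1 + q) ^ 7 := one_le_pow₀ (by linarith)
    calc (1 / 2 : ℝ) ^ 7 = 1 * (1 / 2 : ℝ) ^ 7 := by ring
      _ ≤ _ := by gcongr
  have hdpos : 0 < (1 + q) ^ 7 * (1 - q) ^ 7 := lt_of_lt_of_le (by positivity) hd
  rw [abs_of_nonneg (by positivity), div_le_iff₀ hdpos]
  have h10 : q ^ 10 ≤ q ^ 9 := pow_le_pow_of_le_one hq0.le (by linarith) (by norm_num)
  calc _ ≤ q ^ 9 * 100 := by gcongr
    _ = 100 * 2 ^ 7 * q ^ 9 * (1 / 2 : ℝ) ^ 7 := by ring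
    _ ≤ 100 * 2 ^ 12 * q ^ 9 * ((1 + q) ^ 7 * (1 - q) ^ 7) := by gcongr <;> norm_num

set_option maxHeartbeats 1000000 in
theorem cmpG_step : ∃ C > 0, ∀ u : ℝ, 1 ≤ u → |cmpG (u + 1) - cmpG u| ≤ C * (u ^ 9)⁻¹ := by
  refine ⟨100 * 2 ^ 14, by positivity, fun u hu => ?_⟩
  obtain ⟨v, hv⟩ : ∃ v, v = u + 1 / 2 := ⟨_, rfl⟩
  obtain ⟨q, hq⟩ : ∃ q, q = 1 / (2 * v) := ⟨_, rfl⟩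
  have hvpos : 1 < v := by linarith
  have hq0 : 0 < q := by rw [hq]; positivity
  have hq1 : q ≤ 1 / 2 := by
    rw [hq]; gcongr; linarith
  have hvq : v = 1 / (2 * q) := by rw [hq]; field_simp
  have hvne : v ≠ 0 := by linarith
  have e1 : u = v * (1 - q) := by
    rw [hq]; field_simp; linarith
  have e2 : u + 1 = v * (1 + q) := by
    rw [hq]; field_simp; linarith
  have hL1 : Real.log u = Real.log v + Real.log (1 - q) := by
    rw [e1, Real.log_mul hvne (by linarith)]
  have hL2 : Real.log (u + 1) = Real.log v + Real.log (1 + q) := by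
    rw [e2, Real.log_mul hvne (by linarith)]
  have hG : Real.log (Real.Gamma (u + 1 + 1 / 2)) = Real.log (Real.Gamma (u + 1 / 2)) + Real.log v := by
    rw [show u + 1 + 1 / 2 = v + 1 by linarith, ← hv, Real.Gamma_add_one hvne,
      Real.log_mul hvne (Real.Gamma_pos_of_pos (by linarith)).ne']
    ring
  obtain ⟨t1, t2⟩ := cmp_log_taylor q hq0 hq1
  set T1 := (q + q ^ 2 / 2 + q ^ 3 / 3 + q ^ 4 / 4 + q ^ 5 / 5 + q ^ 6 / 6
        + q ^ 7 / 7 + q ^ 8 / 8 + q ^ 9 / 9) with hT1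
  set T2 := (q - q ^ 2 / 2 + q ^ 3 / 3 - q ^ 4 / 4 + q ^ 5 / 5 - q ^ 6 / 6
        + q ^ 7 / 7 - q ^ 8 / 8 + q ^ 9 / 9) with hT2
  set r1 := Real.log (1 - q) + T1 with hr1
  set r2 := Real.log (1 + q) - T2 with hr2
  have hrat := cmp_rat_identity q hq0 (by linarith)
  rw [← hT1, ← hT2] at hrat
  set Q := q ^ 10 * (116 / 15 + 457 / 315 * q ^ 2 + 46 / 105 * q ^ 4 + 61 / 360 * q ^ 6
        - 7 / 40 * q ^ 8 + 37 / 504 * q ^ 10 - 1 / 72 * q ^ 12)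
      / ((1 + q) ^ 7 * (1 - q) ^ 7) with hQ
  have hinv : ∀ m : ℕ, (u ^ m)⁻¹ = (2 * q) ^ m * ((1 - q) ^ m)⁻¹ := by
    intro m; rw [e1, hvq, mul_pow, mul_inv, ← inv_pow, one_div, inv_inv]
  have hinv' : ∀ m : ℕ, ((u + 1) ^ m)⁻¹ = (2 * q) ^ m * ((1 + q) ^ m)⁻¹ := by
    intro m; rw [e2, hvq, mul_pow, mul_inv, ← inv_pow, one_div, inv_inv]
  have hdiff : cmpG (u + 1) - cmpG u = Q - v * (1 + q) * r2 + v * (1 - q) * r1 := by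
    unfold cmpG cmpStir
    have i1 := hinv 1
    have i1' := hinv' 1
    simp only [pow_one] at i1 i1'
    rw [hG, hL1, hL2, hinv 3, hinv 5, hinv 7, hinv' 3, hinv' 5, hinv' 7, i1, i1', ← hrat, hr1, hr2,
      ← hvq]
    have e3 : (u + 1) * Real.log v = u * Real.log v + Real.log v := by ring
    have e4 : (u + 1) * Real.log (1 + q) = v * (1 + q) * Real.log (1 + q) := by rw [e2]
    have e5 : u * Real.log (1 - q) = v * (1 - q) * Real.log (1 - q) := by rw [← e1]
    linear_combination (-1 : ℝ) * e4 + e5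
  have hQb : |Q| ≤ 100 * 2 ^ 12 * q ^ 9 := cmp_rat_bound q hq0 hq1
  have hv1 : |v * (1 + q) * r2| ≤ 2 * q ^ 9 := by
    rw [abs_mul, abs_of_pos (by positivity)]
    calc _ ≤ v * (1 + q) * (2 * q ^ 10) := by gcongr
      _ = (1 + q) * q ^ 9 := by rw [hvq]; field_simp
      _ ≤ 2 * q ^ 9 := by gcongr; linarith
  have hv2 : |v * (1 - q) * r1| ≤ 2 * q ^ 9 := by
    have : 0 < 1 - q := by linarith
    rw [abs_mul, abs_of_pos (by positivity)]
    calc _ ≤ v * (1 - q) * (2 * q ^ 10) := by gcongr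
      _ = (1 - q) * q ^ 9 := by rw [hvq]; field_simp
      _ ≤ 2 * q ^ 9 := by gcongr; linarith
  have hfin : q ^ 9 ≤ (u ^ 9)⁻¹ := by
    rw [← inv_pow]; gcongr
    rw [hq, one_div]; gcongr; linarith
  rw [hdiff]
  calc _ ≤ |Q| + |v * (1 + q) * r2| + |v * (1 - q) * r1| := by
        refine (abs_add_le _ _).trans ?_
        gcongr
        exact abs_sub _ _
    _ ≤ 100 * 2 ^ 12 * q ^ 9 + 2 * q ^ 9 + 2 * q ^ 9 := by gcongr
    _ ≤ 100 * 2 ^ 14 * q ^ 9 := by nlinarith [pow_pos hq0 9]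
    _ ≤ _ := by gcongr

theorem cmpG_tendsto (s : ℝ) (hs : 0 < s) :
    Tendsto (fun n : ℕ => cmpG (s + n + 1 / 2)) atTop (𝓝 0) := by
  have h1 := (Real.BohrMollerup.tendsto_log_gamma hs).const_sub (Real.log (Real.Gamma s))
  have h2 := (Stirling.tendsto_stirlingSeq_sqrt_pi.log (by positivity)).sub_const (Real.log (√Real.pi))
  have hnat : Tendsto (fun n : ℕ => (n : ℝ)) atTop atTop := tendsto_natCast_atTop_atTop
  have h3 := ((Real.tendsto_mul_log_one_add_div_atTop (s + 1 / 2)).comp hnat).const_sub (s + 1 / 2)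
  have h4 : Tendsto (fun n : ℕ => (s + 1 / 2) * Real.log (1 + (s + 1 / 2) / (n : ℝ))) atTop (𝓝 0) := by
    have : Tendsto (fun n : ℕ => 1 + (s + 1 / 2) / (n : ℝ)) atTop (𝓝 (1 + 0)) :=
      (tendsto_const_div_atTop_nhds_zero_nat _).const_add 1
    have := (this.log (by norm_num)).const_mul (s + 1 / 2)
    simpa using this
  have hU : Tendsto (fun n : ℕ => (s + n + 1 / 2)) atTop atTop :=
    tendsto_atTop_add_const_right _ _ (tendsto_atTop_add_const_left _ _ hnat)
  have hk : ∀ k : ℕ, k ≠ 0 → Tendsto (fun n : ℕ => ((s + n + 1 / 2) ^ k)⁻¹) atTop (𝓝 0) := fun k hk =>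
    ((tendsto_pow_atTop hk).comp hU).inv_tendsto_atTop
  have h5 := ((((hk 1 (by norm_num)).const_mul (-1 / 24)).add
    ((hk 3 (by norm_num)).const_mul (7 / 2880))).add
    ((hk 5 (by norm_num)).const_mul (-31 / 40320))).add
    ((hk 7 (by norm_num)).const_mul (127 / 215040))
  have := (((h1.add h2).add h3).sub h4).sub h5
  simp only [sub_self, mul_zero, add_zero] at this
  refine this.congr' ?_
  filter_upwards [eventually_gt_atTop 0] with n hn
  have hn0 : (0 : ℝ) < n := by exact_mod_cast hn
  have hGam : ∀ m : ℕ, Real.log (Real.Gamma (s + m)) =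
      Real.log (Real.Gamma s) + ∑ j ∈ Finset.range m, Real.log (s + j) := by
    intro m
    induction m with
    | zero => simp
    | succ m ih =>
      have hp : 0 < s + m := by positivity
      rw [Finset.sum_range_succ, ← add_assoc, ← ih]
      push_cast
      rw [← add_assoc, Real.Gamma_add_one hp.ne', Real.log_mul hp.ne' (Real.Gamma_pos_of_pos hp).ne']
      ring
  unfold cmpG cmpStir
  have hU0 : s + n + 1 / 2 = n * (1 + (s + 1 / 2) / n) := by field_simp; ring
  have hlogU : Real.log (s + n + 1 / 2) = Real.log n + Real.log (1 + (s + 1 / 2) / n) := by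
    rw [hU0, Real.log_mul hn0.ne' (by positivity)]
  have hg := hGam (n + 1)
  push_cast at hg
  have hst := Stirling.log_stirlingSeq_formula n
  rw [Real.log_mul (by norm_num) hn0.ne', Real.log_div hn0.ne' (Real.exp_ne_zero _), Real.log_exp] at hst
  rw [show s + (n : ℝ) + 1 / 2 + 1 / 2 = s + (n + 1) by ring, hg, hlogU, hst,
    Real.log_sqrt Real.pi_pos.le, Real.log_mul (by norm_num) Real.pi_pos.ne']
  unfold Real.BohrMollerup.logGammaSeq
  simp only [Function.comp, pow_one]
  ring

theorem cmpG_bound : ∃ C > 0, ∀ u : ℝ, 1 ≤ u → |cmpG u| ≤ C * (u ^ 8)⁻¹ := by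
  obtain ⟨C, hC, h⟩ := cmpG_step
  refine ⟨32 * C, by positivity, fun u hu => ?_⟩
  have hphi : ∀ u : ℝ, 1 ≤ u → (u ^ 9)⁻¹ ≤ 32 * ((u ^ 8)⁻¹ - ((u + 1) ^ 8)⁻¹) := by
    intro u hu
    have h0 : 0 < u := by linarith
    have h8 : u ^ 8 + 8 * u ^ 7 ≤ (u + 1) ^ 8 := by
      have : (u + 1) ^ 8 = u ^ 8 + 8 * u ^ 7 + (28 * u ^ 6 + 56 * u ^ 5 + 70 * u ^ 4 + 56 * u ^ 3
        + 28 * u ^ 2 + 8 * u + 1) := by ring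
      rw [this]
      have : 0 ≤ 28 * u ^ 6 + 56 * u ^ 5 + 70 * u ^ 4 + 56 * u ^ 3
        + 28 * u ^ 2 + 8 * u + 1 := by positivity
      linarith
    have h9 : (u + 1) ^ 8 ≤ 256 * u ^ 8 := by
      calc (u + 1) ^ 8 ≤ (2 * u) ^ 8 := by gcongr; linarith
        _ = _ := by ring
    rw [inv_sub_inv (by positivity) (by positivity), ← mul_div_assoc, inv_eq_one_div,
      div_le_div_iff₀ (by positivity) (by positivity)]
    calc 1 * (u ^ 8 * (u + 1) ^ 8) ≤ 1 * (u ^ 8 * (256 * u ^ 8)) := by gcongr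
      _ = 32 * (8 * u ^ 7) * u ^ 9 := by ring
      _ ≤ _ := by gcongr; linarith
  have hn : ∀ n : ℕ, |cmpG u - cmpG (u + n)| ≤ 32 * C * ((u ^ 8)⁻¹ - ((u + n) ^ 8)⁻¹) := by
    intro n
    induction n with
    | zero => simp
    | succ n ih =>
      have hun : 1 ≤ u + n := by linarith [show (0 : ℝ) ≤ n from n.cast_nonneg]
      have a1 := h (u + n) hun
      have a2 := hphi (u + n) hun
      have a3 : |cmpG u - cmpG (u + n + 1)| ≤ |cmpG u - cmpG (u + n)| + |cmpG (u + n + 1) - cmpG (u + n)| := by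
        rw [abs_sub_comm (cmpG (u + n + 1))]
        exact abs_sub_le _ _ _
      push_cast
      rw [← add_assoc]
      have a4 := mul_le_mul_of_nonneg_left a2 hC.le
      linarith
  have hlim : Tendsto (fun n : ℕ => |cmpG u - cmpG (u + n)|) atTop (𝓝 |cmpG u|) := by
    have := ((cmpG_tendsto (u - 1 / 2) (by linarith)).const_sub (cmpG u)).abs
    rw [sub_zero] at this
    refine this.congr fun n => ?_
    congr 3; ring
  refine le_of_tendsto' hlim fun n => (hn n).trans ?_
  have : 0 ≤ ((u + n) ^ 8)⁻¹ := by positivity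
  gcongr
  linarith

open Filter Topology

noncomputable def cmpH (x t : ℝ) : ℝ := Real.exp (-x) * x ^ (t - 1) * (Real.Gamma t)⁻¹

noncomputable def cmpHC (x : ℝ) (z : ℂ) : ℂ :=
  Complex.exp (-x) * (x : ℂ) ^ (z - 1) * (Complex.Gamma z)⁻¹

theorem cmpHC_ofReal (x t : ℝ) (hx : 0 < x) : cmpHC x t = (cmpH x t : ℝ) := by
  unfold cmpHC cmpH
  push_cast
  rw [Complex.Gamma_ofReal, Complex.ofReal_cpow hx.le]
  push_cast
  rfl

theorem cmpHC_diff (x : ℝ) (hx : 0 < x) : Differentiable ℂ (cmpHC x) := by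
  unfold cmpHC
  refine Differentiable.mul (Differentiable.mul (differentiable_const _) ?_)
    Complex.differentiable_one_div_Gamma
  intro z
  refine DifferentiableAt.const_cpow (by fun_prop) (Or.inl ?_)
  exact_mod_cast hx.ne'

theorem cmp_Gamma_lower (t y : ℝ) (ht : 1 < t) :
    Real.Gamma t ≤ ‖Complex.Gamma (t + y * Complex.I)‖ * Real.exp (y ^ 2 / (2 * (t - 1))) := by
  have h1 := Real.GammaSeq_tendsto_Gamma t
  have h2 := ((Complex.GammaSeq_tendsto_Gamma (t + y * Complex.I)).norm).mul_const
    (Real.exp (y ^ 2 / (2 * (t - 1))))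
  refine le_of_tendsto_of_tendsto h1 h2 ?_
  filter_upwards [eventually_gt_atTop 0] with n hn
  have hn0 : (0 : ℝ) < n := by exact_mod_cast hn
  have hpos : ∀ j : ℕ, 0 < t + j := fun j => by positivity
  have hnorm : ‖Complex.GammaSeq (t + y * Complex.I) n‖ =
      (n : ℝ) ^ t * n.factorial / ∏ j ∈ Finset.range (n + 1), ‖(t + y * Complex.I + j : ℂ)‖ := by
    unfold Complex.GammaSeq
    rw [norm_div, norm_mul, norm_prod, Complex.norm_natCast_cpow_of_pos hn]
    simp
  have hnpos : ∀ j : ℕ, 0 < ‖(t + y * Complex.I + j : ℂ)‖ := by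
    intro j
    rw [norm_pos_iff]
    intro h
    have := congrArg Complex.re h
    simp at this
    linarith [hpos j]
  have hfac : ∀ j : ℕ, ‖(t + y * Complex.I + j : ℂ)‖ ≤ (t + j) *
      Real.exp (y ^ 2 / 2 * (1 / (t + j - 1) - 1 / (t + (j + 1 : ℕ) - 1))) := by
    intro j
    have hj := hpos j
    have hj1 : 0 < t + j - 1 := by have : (0 : ℝ) ≤ j := j.cast_nonneg
                                   linarith
    have hsq : ‖(t + y * Complex.I + j : ℂ)‖ ^ 2 = (t + j) ^ 2 + y ^ 2 := by
      rw [Complex.sq_norm, Complex.normSq_apply]; simp; ring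
    refine le_of_sq_le_sq ?_ (by positivity)
    rw [hsq, mul_pow, ← Real.exp_nat_mul]
    have he : 1 / (t + j - 1) - 1 / (t + (j + 1 : ℕ) - 1) = 1 / ((t + j - 1) * (t + j)) := by
      push_cast
      rw [show t + (j + 1 : ℝ) - 1 = t + j by ring]
      field_simp
      ring
    rw [he]
    have h3 : 1 + y ^ 2 / (t + j) ^ 2 ≤
        Real.exp ((2 : ℕ) * (y ^ 2 / 2 * (1 / ((t + j - 1) * (t + j))))) := by
      refine le_trans ?_ (Real.add_one_le_exp _)
      rw [add_comm]
      gcongr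
      rw [show ((2 : ℕ) : ℝ) * (y ^ 2 / 2 * (1 / ((t + j - 1) * (t + j)))) =
        y ^ 2 / ((t + j - 1) * (t + j)) by push_cast; ring]
      gcongr
      nlinarith
    calc (t + j) ^ 2 + y ^ 2 = (t + j) ^ 2 * (1 + y ^ 2 / (t + j) ^ 2) := by field_simp
      _ ≤ _ := by gcongr
  have hprod : ∏ j ∈ Finset.range (n + 1), ‖(t + y * Complex.I + j : ℂ)‖ ≤
      (∏ j ∈ Finset.range (n + 1), (t + j)) * Real.exp (y ^ 2 / (2 * (t - 1))) := by
    calc _ ≤ ∏ j ∈ Finset.range (n + 1), ((t + j) *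
      Real.exp (y ^ 2 / 2 * (1 / (t + j - 1) - 1 / (t + (j + 1 : ℕ) - 1)))) :=
          Finset.prod_le_prod (fun j _ => (hnpos j).le) fun j _ => hfac j
      _ = (∏ j ∈ Finset.range (n + 1), (t + j)) *
        Real.exp (y ^ 2 / 2 * (1 / (t - 1) - 1 / (t + (n + 1 : ℕ) - 1))) := by
          rw [Finset.prod_mul_distrib, ← Real.exp_sum, ← Finset.mul_sum,
            Finset.sum_range_sub' (fun j : ℕ => 1 / (t + j - 1))]
          simp
      _ ≤ _ := by
          have hp : 0 ≤ ∏ j ∈ Finset.range (n + 1), (t + j) :=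
            Finset.prod_nonneg fun j _ => (hpos j).le
          gcongr
          have : 0 ≤ 1 / (t + (n + 1 : ℕ) - 1) := by
            push_cast
            have : 0 < t + (n + 1 : ℝ) - 1 := by linarith
            positivity
          calc _ ≤ y ^ 2 / 2 * (1 / (t - 1)) := by gcongr; linarith
            _ = _ := by rw [div_mul_div_comm, mul_one]
  rw [hnorm]
  unfold Real.GammaSeq
  have hP1 : 0 < ∏ j ∈ Finset.range (n + 1), (t + j) := Finset.prod_pos fun j _ => hpos j
  have hP2 : 0 < ∏ j ∈ Finset.range (n + 1), ‖(t + y * Complex.I + j : ℂ)‖ :=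
    Finset.prod_pos fun j _ => hnpos j
  rw [div_mul_eq_mul_div, div_le_div_iff₀ hP1 hP2]
  calc _ ≤ (n : ℝ) ^ t * n.factorial * ((∏ j ∈ Finset.range (n + 1), (t + j)) * Real.exp (y ^ 2 / (2 * (t - 1)))) := by
        gcongr
    _ = _ := by ring

theorem cmpHC_norm (x : ℝ) (hx : 0 < x) (z : ℂ) (hz : 1 < z.re) :
    ‖cmpHC x z‖ ≤ cmpH x z.re * Real.exp (z.im ^ 2 / (2 * (z.re - 1))) := by
  have hg := cmp_Gamma_lower z.re z.im hz
  rw [Complex.re_add_im] at hg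
  have h0 : 0 < Real.Gamma z.re := Real.Gamma_pos_of_pos (by linarith)
  have h1 : 0 < ‖Complex.Gamma z‖ := norm_pos_iff.mpr (Complex.Gamma_ne_zero_of_re_pos (by linarith))
  unfold cmpHC cmpH
  rw [norm_mul, norm_mul, norm_inv, Complex.norm_cpow_eq_rpow_re_of_pos hx, Complex.norm_exp]
  simp only [Complex.neg_re, Complex.ofReal_re, Complex.sub_re, Complex.one_re]
  rw [mul_assoc _ (Real.Gamma z.re)⁻¹]
  gcongr
  rw [inv_mul_eq_div, inv_eq_one_div, div_le_div_iff₀ h1 h0]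
  linarith

theorem cmpH_pos (x t : ℝ) (hx : 0 < x) (ht : 0 < t) : 0 < cmpH x t := by
  unfold cmpH
  have := Real.Gamma_pos_of_pos ht
  positivity

theorem cmpH_rec (x t : ℝ) (hx : 0 < x) (ht : 0 < t) : cmpH x t = cmpH x (t + 1) * (t / x) := by
  unfold cmpH
  rw [Real.Gamma_add_one ht.ne', show t + 1 - 1 = (t - 1) + 1 by ring, Real.rpow_add_one hx.ne']
  have := (Real.Gamma_pos_of_pos ht).ne'
  field_simp

theorem cmpH_le (x t : ℝ) (hx : 0 < x) (ht : 1 ≤ t) : cmpH x t ≤ 3 := by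
  have hG : Real.exp (-x - 1) * x ^ (t - 1) ≤ Real.Gamma t := by
    rw [Real.Gamma_eq_integral (by linarith)]
    have hint := Real.GammaIntegral_convergent (s := t) (by linarith)
    have hsub : Set.Ioc x (x + 1) ⊆ Set.Ioi 0 := fun s hs => lt_trans hx hs.1
    calc Real.exp (-x - 1) * x ^ (t - 1)
        = ∫ s in Set.Ioc x (x + 1), Real.exp (-x - 1) * x ^ (t - 1) := by
          simp
      _ ≤ ∫ s in Set.Ioc x (x + 1), Real.exp (-s) * s ^ (t - 1) := by
          refine MeasureTheory.setIntegral_mono_on continuous_const.integrableOn_Ioc (hint.mono_set hsub)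
            measurableSet_Ioc fun s hs => ?_
          have h1 : 0 ≤ t - 1 := by linarith
          have h2 : x ≤ s := hs.1.le
          have h3 : -x - 1 ≤ -s := by linarith [hs.2]
          gcongr
      _ ≤ _ := by
          refine MeasureTheory.setIntegral_mono_set hint ?_ (Eventually.of_forall hsub)
          refine (MeasureTheory.ae_restrict_iff' measurableSet_Ioi).mpr (Eventually.of_forall fun s hs => ?_)
          have : (0 : ℝ) < s := hs
          simp only [Pi.zero_apply]
          positivity
  have h0 : 0 < Real.Gamma t := Real.Gamma_pos_of_pos (by linarith)
  unfold cmpH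
  rw [← div_eq_mul_inv, div_le_iff₀ h0]
  have he : Real.exp (-x) = Real.exp 1 * Real.exp (-x - 1) := by
    rw [← Real.exp_add]; ring_nf
  rw [he, mul_assoc]
  have := Real.exp_one_lt_d9
  have h3 : 0 < Real.exp (-x - 1) * x ^ (t - 1) := by positivity
  nlinarith

theorem cmpH_le_sq (x t : ℝ) (hx : 0 < x) (ht : 3 ≤ t) : cmpH x t ≤ 3 * x ^ 2 / (t - 2) ^ 2 := by
  have h1 := cmpH_rec x (t - 1) hx (by linarith)
  have h2 := cmpH_rec x (t - 2) hx (by linarith)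
  have h3 := cmpH_le x (t - 2) hx (by linarith)
  rw [show t - 1 + 1 = t by ring] at h1
  rw [show t - 2 + 1 = t - 1 by ring, h1] at h2
  rw [h2] at h3
  have h4 := cmpH_pos x t hx (by linarith)
  have h5 : 0 < t - 2 := by linarith
  rw [le_div_iff₀ (by positivity)]
  have h6 : cmpH x t * ((t - 1) / x) * ((t - 2) / x) * x ^ 2 = cmpH x t * ((t - 1) * (t - 2)) := by
    field_simp
  have h7 : cmpH x t * ((t - 1) / x) * ((t - 2) / x) * x ^ 2 ≤ 3 * x ^ 2 := by gcongr
  rw [h6] at h7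
  refine le_trans ?_ h7
  gcongr
  nlinarith

theorem cmpH_small (k : ℕ) (x t : ℝ) (hx : 0 < x) (ht : 0 < t) :
    cmpH x t ≤ 3 * ((t + k + 1) / x) ^ (k + 1) := by
  have h : ∀ m : ℕ, m ≤ k + 1 → cmpH x t ≤ cmpH x (t + m) * ((t + k + 1) / x) ^ m := by
    intro m
    induction m with
    | zero => simp
    | succ m ih =>
      intro hm
      have hm' : (m : ℝ) ≤ k := by exact_mod_cast Nat.le_of_succ_le_succ hm
      have h1 := ih (by omega)
      rw [cmpH_rec x (t + m) hx (by positivity)] at h1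
      have hp := cmpH_pos x (t + m + 1) hx (by positivity)
      push_cast
      rw [← add_assoc]
      refine h1.trans ?_
      rw [pow_succ', ← mul_assoc]
      have hd : (t + m) / x ≤ (t + k + 1) / x := div_le_div_of_nonneg_right (by linarith) hx.le
      exact mul_le_mul_of_nonneg_right (mul_le_mul_of_nonneg_left hd hp.le) (by positivity)
  refine (h (k + 1) le_rfl).trans ?_
  gcongr
  refine cmpH_le x _ hx ?_
  push_cast
  have : (0 : ℝ) ≤ k := k.cast_nonneg
  linarith

open Filter Topology

theorem cmp_mean (φ ψ χ : ℝ → ℂ) (h1 : ∀ t, HasDerivAt φ (ψ t) t) (h2 : ∀ t, HasDerivAt ψ (χ t) t)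
    (a ν B : ℝ) (hν : 0 < ν) (hB : ∀ t ∈ Set.Icc a (a + ν), ‖χ t‖ ≤ B) (t : ℝ)
    (ht : t ∈ Set.Icc a (a + ν)) : ‖φ (a + ν) - φ a - ν * ψ t‖ ≤ ν ^ 2 * B := by
  have hB0 : 0 ≤ B := (norm_nonneg _).trans (hB t ht)
  have hψ : ∀ s ∈ Set.Icc a (a + ν), ‖ψ s - ψ t‖ ≤ B * ν := by
    intro s hs
    refine ((convex_Icc a (a + ν)).norm_image_sub_le_of_norm_hasDerivWithin_le
      (fun r hr => (h2 r).hasDerivWithinAt) hB ht hs).trans ?_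
    gcongr
    rw [Real.norm_eq_abs, abs_le]
    constructor <;> linarith [hs.1, hs.2, ht.1, ht.2]
  have hg : ∀ s, HasDerivAt (fun s : ℝ => φ s - (s : ℂ) * ψ t) (ψ s - ψ t) s := by
    intro s
    have := (h1 s).fun_sub ((Complex.ofRealCLM.hasDerivAt (x := s)).mul_const (ψ t))
    simpa using this
  have := (convex_Icc a (a + ν)).norm_image_sub_le_of_norm_hasDerivWithin_le
      (fun r hr => (hg r).hasDerivWithinAt) hψ (x := a) (y := a + ν) ⟨le_rfl, by linarith⟩
      ⟨by linarith, le_rfl⟩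
  rw [add_sub_cancel_left, Real.norm_of_nonneg hν.le] at this
  refine le_trans (le_of_eq ?_) (this.trans (le_of_eq (by ring)))
  congr 1
  push_cast
  ring

theorem cmp_chain (ν : ℝ) (hν : 0 < ν) (N : ℕ) : ∃ K > 0, ∀ (a ε B : ℝ) (χ : ℕ → ℝ → ℂ),
    (∀ k t, HasDerivAt (χ k) (χ (k + 1) t) t) →
    (∀ k < N + 1, ‖χ k (a + ν) - χ k a‖ ≤ ε) →
    (∀ t ∈ Set.Icc a (a + ν), ‖χ (N + 1) t‖ ≤ B) →
    ∀ t ∈ Set.Icc a (a + ν), ‖χ 1 t‖ ≤ K * (ε + B) := by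
  induction N with
  | zero =>
    refine ⟨1, one_pos, fun a ε B χ h1 h2 h3 t ht => ?_⟩
    have := h3 t ht
    have := (norm_nonneg _).trans (h2 0 (by norm_num))
    simp only [zero_add] at *
    linarith
  | succ N ih =>
    obtain ⟨K, hK, ih⟩ := ih
    refine ⟨K * (1 + 1 / ν + ν), by positivity, fun a ε B χ h1 h2 h3 t ht => ?_⟩
    have hε := (norm_nonneg _).trans (h2 0 (by norm_num))
    have hB := (norm_nonneg _).trans (h3 t ht)
    have hB' : ∀ t ∈ Set.Icc a (a + ν), ‖χ (N + 1) t‖ ≤ (ε + ν ^ 2 * B) / ν := by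
      intro t ht
      have h := cmp_mean (χ N) (χ (N + 1)) (χ (N + 2)) (h1 N) (h1 (N + 1)) a ν B hν h3 t ht
      have h' := h2 N (by omega)
      rw [le_div_iff₀ hν]
      have h4 : ‖(ν : ℂ) * χ (N + 1) t‖ ≤ ‖χ N (a + ν) - χ N a‖ +
          ‖χ N (a + ν) - χ N a - ν * χ (N + 1) t‖ := by
        have := norm_sub_le (χ N (a + ν) - χ N a) (χ N (a + ν) - χ N a - ν * χ (N + 1) t)
        rwa [sub_sub_cancel] at this
      rw [norm_mul, Complex.norm_real, Real.norm_of_nonneg hν.le] at h4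
      linarith
    refine (ih a ε _ χ h1 (fun k hk => h2 k (by omega)) hB' t ht).trans ?_
    rw [mul_assoc]
    gcongr
    have e : (ε + ν ^ 2 * B) / ν = ε / ν + ν * B := by field_simp
    rw [e]
    have : (1 + 1 / ν + ν) * (ε + B) = ε + (ε / ν + ν * B) + (B + B / ν + ν * ε) := by ring
    rw [this]
    have : 0 ≤ B + B / ν + ν * ε := by positivity
    linarith

/-- derivative tower of a complex entire function restricted to the real line -/
theorem cmp_tower (f : ℂ → ℂ) (hf : Differentiable ℂ f) (k : ℕ) (c t : ℝ) :
    HasDerivAt (fun s : ℝ => iteratedDeriv k f ((s + c : ℝ) : ℂ)) (iteratedDeriv (k + 1) f ((t + c : ℝ) : ℂ)) t := by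
  have hd : Differentiable ℂ (iteratedDeriv k f) :=
    (hf.contDiff (n := (k + 1 : ℕ))).differentiable_iteratedDeriv k (by exact_mod_cast Nat.lt_succ_self k)
  have h1 : HasDerivAt (iteratedDeriv k f) (iteratedDeriv (k + 1) f ((t + c : ℝ) : ℂ)) ((t + c : ℝ) : ℂ) := by
    rw [iteratedDeriv_succ]
    exact (hd _).hasDerivAt
  have h2 := HasDerivAt.comp_ofReal h1
  exact HasDerivAt.comp_add_const t c h2

theorem cmpH_small_y (p : ℕ) : ∃ C > 0, ∀ y : ℝ, 1 ≤ y → ∀ t, 0 < t → t ≤ 4 * y ^ 2 →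
    cmpH (y ^ 4) t ≤ C / y ^ p := by
  refine ⟨3 * (p + 5) ^ (p + 1), by positivity, fun y hy t h0 h1 => ?_⟩
  have hy0 : 0 < y := by linarith
  refine (cmpH_small p (y ^ 4) t (by positivity) h0).trans ?_
  have h2 : (t + p + 1) / y ^ 4 ≤ (p + 5) / y ^ 2 := by
    rw [div_le_div_iff₀ (by positivity) (by positivity)]
    have h3 : t + p + 1 ≤ (p + 5) * y ^ 2 := by
      have : 1 ≤ y ^ 2 := one_le_pow₀ hy
      have hp : (0 : ℝ) ≤ p := p.cast_nonneg
      nlinarith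
    calc _ ≤ (p + 5) * y ^ 2 * y ^ 2 := by gcongr
      _ = _ := by ring
  calc _ ≤ 3 * ((p + 5) / y ^ 2) ^ (p + 1) := by gcongr
    _ = 3 * (p + 5) ^ (p + 1) / y ^ (2 * (p + 1)) := by rw [div_pow, ← pow_mul]; ring
    _ ≤ _ := by
      gcongr
      omega

theorem cmpHC_deriv_bound (k : ℕ) (y t M : ℝ) (hy : 4 ≤ y) (ht : y ^ 2 ≤ t)
    (hM : ∀ τ, t - y ≤ τ → τ ≤ t + y → cmpH (y ^ 4) τ ≤ M) :
    ‖iteratedDeriv k (cmpHC (y ^ 4)) (t : ℂ)‖ ≤ k.factorial * (M * 3) / y ^ k := by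
  have hx : 0 < y ^ 4 := by positivity
  refine Complex.norm_iteratedDeriv_le_of_forall_mem_sphere_norm_le k (by linarith)
    (cmpHC_diff _ hx).diffContOnCl fun z hz => ?_
  rw [mem_sphere_iff_norm] at hz
  have h1 := Complex.abs_re_le_norm (z - t)
  have h2 := Complex.abs_im_le_norm (z - t)
  rw [hz] at h1 h2
  simp only [Complex.sub_re, Complex.ofReal_re, Complex.sub_im, Complex.ofReal_im, sub_zero] at h1 h2
  rw [abs_le] at h1
  have hre : y ^ 2 / 2 + 1 ≤ z.re := by nlinarith
  have hb := cmpHC_norm (y ^ 4) hx z (by nlinarith)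
  refine hb.trans ?_
  have hH := hM z.re (by linarith) (by linarith)
  have hpos := cmpH_pos (y ^ 4) z.re hx (by nlinarith)
  have hexp : Real.exp (z.im ^ 2 / (2 * (z.re - 1))) ≤ 3 := by
    have : z.im ^ 2 / (2 * (z.re - 1)) ≤ 1 := by
      rw [div_le_one (by nlinarith)]
      have : z.im ^ 2 ≤ y ^ 2 := sq_le_sq.mpr (h2.trans (le_abs_self y))
      linarith
    have := Real.exp_le_exp.mpr this
    linarith [Real.exp_one_lt_d9]
  gcongr
  exact hpos.le.trans hH

theorem cmpH_cont (x : ℝ) (hx : 0 < x) : Continuous (cmpH x) := by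
  have : cmpH x = fun t : ℝ => (cmpHC x t).re := by
    funext t; rw [cmpHC_ofReal x t hx, Complex.ofReal_re]
  rw [this]
  exact Complex.continuous_re.comp ((cmpHC_diff x hx).continuous.comp Complex.continuous_ofReal)

theorem cmpH_integrable (x a : ℝ) (hx : 0 < x) (ha : 1 ≤ a) :
    MeasureTheory.IntegrableOn (cmpH x) (Set.Ioi a) := by
  have h1 : MeasureTheory.IntegrableOn (fun t : ℝ => (27 + 27 * x ^ 2) * t ^ (-2 : ℝ)) (Set.Ioi a) :=
    (integrableOn_Ioi_rpow_of_lt (by norm_num) (by linarith)).const_mul _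
  refine MeasureTheory.Integrable.mono' h1 (cmpH_cont x hx).aestronglyMeasurable ?_
  refine (MeasureTheory.ae_restrict_iff' measurableSet_Ioi).mpr (Eventually.of_forall fun t ht => ?_)
  have ht1 : 1 < t := lt_of_le_of_lt ha ht
  have ht0 : 0 < t := by linarith
  have hr : t ^ (-2 : ℝ) = (t ^ 2)⁻¹ := by
    rw [Real.rpow_neg ht0.le]; norm_cast
  rw [Real.norm_of_nonneg (cmpH_pos x t hx ht0).le, hr, ← div_eq_mul_inv, le_div_iff₀ (by positivity)]
  rcases le_total t 3 with h3 | h3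
  · have := cmpH_le x t hx ht1.le
    have := cmpH_pos x t hx ht0
    have h9 : t ^ 2 ≤ 9 := by nlinarith
    calc cmpH x t * t ^ 2 ≤ 3 * 9 := by gcongr
      _ ≤ _ := by nlinarith [sq_nonneg x]
  · have h4 := cmpH_le_sq x t hx h3
    have h5 : 0 < t - 2 := by linarith
    have := cmpH_pos x t hx ht0
    rw [le_div_iff₀ (by positivity)] at h4
    have h6 : t ^ 2 ≤ 9 * (t - 2) ^ 2 := by nlinarith
    nlinarith

theorem cmpH_summable (x ν a : ℝ) (hx : 0 < x) (hν : 0 < ν) (ha : 0 < a) :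
    Summable (fun i : ℕ => cmpH x (a + ν * i)) := by
  obtain ⟨m, hm⟩ := exists_nat_gt (3 / ν)
  rw [← summable_nat_add_iff m]
  have hm' : 3 < ν * m := by rw [div_lt_iff₀ hν] at hm; linarith
  have hs : Summable (fun i : ℕ => 3 * x ^ 2 / ν ^ 2 * (1 / (i : ℝ) ^ 2)) :=
    (Real.summable_one_div_nat_pow.mpr (by norm_num)).mul_left _
  have hs' := (summable_nat_add_iff 1).mpr hs
  refine Summable.of_norm_bounded_eventually_nat (g := fun i : ℕ => 3 * x ^ 2 / ν ^ 2 * (1 / (i : ℝ) ^ 2)) hs ?_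
  filter_upwards [eventually_gt_atTop 0] with i hi
  have hi0 : (0 : ℝ) < i := by exact_mod_cast hi
  have e : a + ν * ((i + m : ℕ) : ℝ) = a + ν * m + ν * i := by push_cast; ring
  have hνi : 0 < ν * i := by positivity
  rw [e, Real.norm_of_nonneg (cmpH_pos _ _ hx (by linarith)).le]
  refine (cmpH_le_sq x _ hx (by linarith)).trans ?_
  rw [div_mul_div_comm, mul_one, ← mul_pow]
  gcongr
  linarith

open Filter Topology

theorem cmp_tele {E : Type*} [AddCommGroup E] (F : ℝ → E) (a ν : ℝ) (n : ℕ) :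
    ∑ i ∈ Finset.range n, F (a + ν + ν * i) - ∑ i ∈ Finset.range n, F (a + ν * i)
      = F (a + ν * n) - F a := by
  rw [← Finset.sum_sub_distrib]
  have := Finset.sum_range_sub (fun i : ℕ => F (a + ν * i)) n
  simp only [Nat.cast_zero, mul_zero, add_zero] at this
  rw [← this]
  refine Finset.sum_congr rfl fun i _ => ?_
  congr 2
  push_cast
  ring

theorem cmp_core (ν : ℝ) (hν : 0 < ν) : ∃ C > 0, ∀ y : ℝ, 4 ≤ y → ∀ a : ℝ, y ^ 2 ≤ a →
    a ≤ 2 * y ^ 2 →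
    |ν * ∑' i : ℕ, cmpH (y ^ 4) (a + ν * i) - ∫ s in Set.Ioi a, cmpH (y ^ 4) s| ≤ C / y ^ 40 := by
  obtain ⟨K, hK, hchain⟩ := cmp_chain ν hν 47
  obtain ⟨C0, hC0, hsmall⟩ := cmpH_small_y 40
  have hsumK : Summable (fun i : ℕ => 1 / (1 + ν * (i : ℝ)) ^ 2) := by
    have hs : Summable (fun i : ℕ => 1 / ν ^ 2 * (1 / (i : ℝ) ^ 2)) :=
      (Real.summable_one_div_nat_pow.mpr (by norm_num)).mul_left _
    refine Summable.of_norm_bounded_eventually_nat hs ?_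
    filter_upwards [eventually_gt_atTop 0] with i hi
    have hi0 : (0 : ℝ) < i := by exact_mod_cast hi
    rw [Real.norm_of_nonneg (by positivity), div_mul_div_comm, mul_one, ← mul_pow]
    gcongr
    linarith
  set T := ∑' i : ℕ, 1 / (1 + ν * (i : ℝ)) ^ 2 with hT
  have hT0 : 0 ≤ T := tsum_nonneg fun i => by positivity
  set f48 : ℝ := (Nat.factorial 48 : ℝ) with hf48
  have hf0 : 0 < f48 := by rw [hf48]; exact_mod_cast Nat.factorial_pos 48
  have hfk : ∀ k : ℕ, k < 47 + 1 → (k.factorial : ℝ) ≤ f48 := fun k hk => by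
    rw [hf48]; exact_mod_cast Nat.factorial_le (by omega)
  refine ⟨ν ^ 2 * (K * (f48 * (C0 * 3) + f48 * 9 * T)), by positivity, fun y hy a ha1 ha2 => ?_⟩
  have hy0 : 0 < y := by linarith
  have hx : 0 < y ^ 4 := by positivity
  have hyy : y + 3 ≤ y ^ 2 := by nlinarith
  -- pointwise derivative bounds
  have hD1 : ∀ (k i : ℕ) (t : ℝ), a ≤ t → ‖iteratedDeriv k (cmpHC (y ^ 4)) ((t + ν * i : ℝ) : ℂ)‖
      ≤ k.factorial * (3 * y ^ 8 / (1 + ν * i) ^ 2 * 3) / y ^ k := by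
    intro k i t ht
    have hi : 0 ≤ ν * i := by positivity
    refine cmpHC_deriv_bound k y _ _ hy (by linarith) fun τ h1 h2 => ?_
    refine (cmpH_le_sq _ τ hx (by linarith)).trans ?_
    rw [← pow_mul]
    gcongr
    linarith
  have hD2 : ∀ k : ℕ, ‖iteratedDeriv k (cmpHC (y ^ 4)) (a : ℂ)‖
      ≤ k.factorial * (C0 / y ^ 40 * 3) / y ^ k := by
    intro k
    refine cmpHC_deriv_bound k y _ _ hy (by linarith) fun τ h1 h2 => ?_
    exact hsmall y (by linarith) τ (by linarith) (by linarith)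
  have hdrop : ∀ (k : ℕ) (M : ℝ), 0 ≤ M → k < 47 + 1 → k.factorial * M / y ^ k ≤ f48 * M := by
    intro k M hM hk
    have h1 : (1 : ℝ) ≤ y ^ k := one_le_pow₀ (by linarith)
    calc k.factorial * M / y ^ k ≤ k.factorial * M := div_le_self (by positivity) h1
      _ ≤ _ := by gcongr; exact hfk k hk
  have hmain : ∀ n : ℕ, |ν * ∑ i ∈ Finset.range n, cmpH (y ^ 4) (a + ν * i) -
      ∫ s in a..(a + ν * n), cmpH (y ^ 4) s| ≤
      ν ^ 2 * (K * ((f48 * (3 * y ^ 8 / (1 + ν * n) ^ 2 * 3) + f48 * (C0 / y ^ 40 * 3))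
        + f48 * 9 * T / y ^ 40)) := by
    intro n
    let χ : ℕ → ℝ → ℂ := fun k t =>
      ∑ i ∈ Finset.range n, iteratedDeriv k (cmpHC (y ^ 4)) ((t + ν * i : ℝ) : ℂ)
    let H : ℝ → ℂ := fun t => ((∫ s in a..t, cmpH (y ^ 4) s : ℝ) : ℂ)
    let φ : ℝ → ℂ := fun t => ∑ i ∈ Finset.range n, H (t + ν * i)
    have hχ : ∀ k t, HasDerivAt (χ k) (χ (k + 1) t) t := fun k t =>
      HasDerivAt.fun_sum fun i _ => cmp_tower _ (cmpHC_diff _ hx) k (ν * i) t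
    have hHd : ∀ t : ℝ, HasDerivAt H (cmpHC (y ^ 4) t) t := by
      intro t
      rw [cmpHC_ofReal _ _ hx]
      exact (intervalIntegral.integral_hasDerivAt_right
        ((cmpH_cont _ hx).intervalIntegrable _ _)
        (cmpH_cont _ hx).aestronglyMeasurable.stronglyMeasurableAtFilter
        (cmpH_cont _ hx).continuousAt).ofReal_comp
    have hφ : ∀ t, HasDerivAt φ (χ 0 t) t := by
      intro t
      refine HasDerivAt.fun_sum fun i _ => ?_
      rw [iteratedDeriv_zero]
      exact HasDerivAt.comp_add_const t (ν * i) (hHd _)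
    have hε : ∀ k < 47 + 1, ‖χ k (a + ν) - χ k a‖ ≤
        f48 * (3 * y ^ 8 / (1 + ν * n) ^ 2 * 3) + f48 * (C0 / y ^ 40 * 3) := by
      intro k hk
      have := cmp_tele (fun t : ℝ => iteratedDeriv k (cmpHC (y ^ 4)) (t : ℂ)) a ν n
      simp only [χ]
      rw [this]
      refine (norm_sub_le _ _).trans ?_
      exact add_le_add ((hD1 k n a le_rfl).trans (hdrop k _ (by positivity) hk))
        ((hD2 k).trans (hdrop k _ (by positivity) hk))
    have hB : ∀ t ∈ Set.Icc a (a + ν), ‖χ (47 + 1) t‖ ≤ f48 * 9 * T / y ^ 40 := by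
      intro t ht
      simp only [χ]
      calc _ ≤ ∑ i ∈ Finset.range n, f48 * 9 / y ^ 40 * (1 / (1 + ν * (i : ℝ)) ^ 2) := by
            refine norm_sum_le_of_le _ fun i _ => (hD1 48 i t ht.1).trans (le_of_eq ?_)
            rw [← hf48]
            field_simp
            norm_num
        _ = f48 * 9 / y ^ 40 * ∑ i ∈ Finset.range n, (1 / (1 + ν * (i : ℝ)) ^ 2) := by
            rw [Finset.mul_sum]
        _ ≤ f48 * 9 / y ^ 40 * T := by
            gcongr
            exact hsumK.sum_le_tsum _ fun i _ => by positivity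
        _ = _ := by ring
    have h1 := hchain a _ _ χ hχ hε hB
    have h2 := cmp_mean φ (χ 0) (χ 1) hφ (hχ 0) a ν _ hν h1 a ⟨le_rfl, by linarith⟩
    refine le_trans (le_of_eq ?_) h2
    have e1 : φ (a + ν) - φ a = ((∫ s in a..(a + ν * n), cmpH (y ^ 4) s : ℝ) : ℂ) := by
      simp only [φ]
      rw [cmp_tele H a ν n]
      simp [H]
    have e2 : χ 0 a = ((∑ i ∈ Finset.range n, cmpH (y ^ 4) (a + ν * i) : ℝ) : ℂ) := by
      simp only [χ, iteratedDeriv_zero]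
      rw [Complex.ofReal_sum]
      exact Finset.sum_congr rfl fun i _ => cmpHC_ofReal _ _ hx
    rw [e1, e2, ← Complex.ofReal_mul, ← Complex.ofReal_sub, Complex.norm_real, Real.norm_eq_abs,
      abs_sub_comm]
  have ha0 : 0 < a := by nlinarith
  have hs := (cmpH_summable (y ^ 4) ν a hx hν ha0).hasSum.tendsto_sum_nat
  have hνn : Tendsto (fun n : ℕ => ν * (n : ℝ)) atTop atTop :=
    tendsto_natCast_atTop_atTop.const_mul_atTop hν
  have hI := MeasureTheory.intervalIntegral_tendsto_integral_Ioi a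
    (cmpH_integrable (y ^ 4) a hx (by nlinarith)) (tendsto_atTop_add_const_left atTop a hνn)
  have hL := ((hs.const_mul ν).sub hI).abs
  have hz : Tendsto (fun n : ℕ => 3 * y ^ 8 / (1 + ν * (n : ℝ)) ^ 2) atTop (𝓝 0) :=
    Tendsto.const_div_atTop ((tendsto_pow_atTop (by norm_num)).comp
      (tendsto_atTop_add_const_left atTop 1 hνn)) _
  have hR := (((((hz.mul_const 3).const_mul f48).add_const (f48 * (C0 / y ^ 40 * 3))).add_const
    (f48 * 9 * T / y ^ 40)).const_mul K).const_mul (ν ^ 2)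
  refine (le_of_tendsto_of_tendsto' hL hR hmain).trans (le_of_eq ?_)
  ring

open Filter Topology

theorem cmpH_poisson (x : ℝ) : ∑' i : ℕ, cmpH x (1 + 1 * (i : ℝ)) = 1 := by
  have h : ∀ i : ℕ, cmpH x (1 + 1 * (i : ℝ)) = Real.exp (-x) * (x ^ i / i.factorial) := by
    intro i
    rw [cmpH, one_mul, add_comm, Real.Gamma_nat_eq_factorial, add_sub_cancel_right,
      Real.rpow_natCast]
    ring
  simp_rw [h]
  rw [tsum_mul_left]
  have : ∑' i : ℕ, x ^ i / (i.factorial : ℝ) = Real.exp x := by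
    rw [Real.exp_eq_exp_ℝ, NormedSpace.exp_eq_tsum_div]
  rw [this, ← Real.exp_add]
  simp

theorem cmp_sum_int (ν b : ℝ) (hν : 0 < ν) (hb : 0 < b) : ∃ C > 0, ∃ Y ≥ (4 : ℝ), ∀ y : ℝ, Y ≤ y →
    |ν * ∑' i : ℕ, cmpH (y ^ 4) (b + ν * i) - ∫ s in Set.Ioi (y ^ 2), cmpH (y ^ 4) s|
      ≤ C / y ^ 40 := by
  obtain ⟨C1, hC1, hcore⟩ := cmp_core ν hν
  obtain ⟨C0, hC0, hsmall⟩ := cmpH_small_y 42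
  refine ⟨C1 + C0 + 2 * C0, by positivity, 4 + b + ν, by linarith, fun y hy => ?_⟩
  have hy4 : 4 ≤ y := by linarith
  have hy0 : 0 < y := by linarith
  have hx : 0 < y ^ 4 := by positivity
  have hyb : b + ν ≤ y ^ 2 := by nlinarith
  set n := ⌈y ^ 2 / ν⌉₊ with hn
  have hn1 : y ^ 2 ≤ ν * n := by
    have := Nat.le_ceil (y ^ 2 / ν)
    rw [div_le_iff₀ hν] at this
    linarith
  have hn2 : ν * n ≤ y ^ 2 + ν := by
    have := (Nat.ceil_lt_add_one (a := y ^ 2 / ν) (by positivity)).le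
    calc ν * n ≤ ν * (y ^ 2 / ν + 1) := by gcongr
      _ = _ := by field_simp
  have hc := hcore y hy4 (b + ν * n) (by linarith) (by linarith)
  have hsum := (cmpH_summable (y ^ 4) ν b hx hν hb).sum_add_tsum_nat_add n
  have e : ∀ i : ℕ, cmpH (y ^ 4) (b + ν * ((i + n : ℕ) : ℝ)) =
      cmpH (y ^ 4) (b + ν * n + ν * i) := fun i => by congr 1; push_cast; ring
  simp_rw [e] at hsum
  have hhead0 : 0 ≤ ∑ i ∈ Finset.range n, cmpH (y ^ 4) (b + ν * i) :=
    Finset.sum_nonneg fun i _ => (cmpH_pos _ _ hx (by positivity)).le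
  have hhead : ∑ i ∈ Finset.range n, cmpH (y ^ 4) (b + ν * i) ≤ n * (C0 / y ^ 42) := by
    calc _ ≤ ∑ i ∈ Finset.range n, C0 / y ^ 42 := by
          refine Finset.sum_le_sum fun i hi => ?_
          have hi' : (i : ℝ) ≤ n := by exact_mod_cast (Finset.mem_range.mp hi).le
          refine hsmall y (by linarith) _ (by positivity) ?_
          have : ν * i ≤ ν * n := by gcongr
          nlinarith
      _ = _ := by simp
  have hhead2 : ν * ∑ i ∈ Finset.range n, cmpH (y ^ 4) (b + ν * i) ≤ 2 * C0 / y ^ 40 := by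
    calc _ ≤ ν * (n * (C0 / y ^ 42)) := by gcongr
      _ = (ν * n) * (C0 / y ^ 42) := by ring
      _ ≤ (2 * y ^ 2) * (C0 / y ^ 42) := mul_le_mul_of_nonneg_right (by linarith) (by positivity)
      _ = _ := by field_simp
  have hint : |(∫ s in Set.Ioi (y ^ 2), cmpH (y ^ 4) s) - ∫ s in Set.Ioi (b + ν * n), cmpH (y ^ 4) s|
      ≤ C0 / y ^ 40 := by
    rw [← intervalIntegral.integral_interval_add_Ioi
      (cmpH_integrable (y ^ 4) (y ^ 2) hx (by nlinarith))
      (cmpH_integrable (y ^ 4) (b + ν * n) hx (by nlinarith)), add_sub_cancel_right]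
    have hle : y ^ 2 ≤ b + ν * n := by linarith
    have := intervalIntegral.norm_integral_le_of_norm_le_const (a := y ^ 2) (b := b + ν * n)
      (f := cmpH (y ^ 4)) (C := C0 / y ^ 42) (fun s hs => by
        rw [Set.uIoc_of_le hle] at hs
        have hs0 : 0 < s := lt_trans (by positivity) hs.1
        rw [Real.norm_of_nonneg (cmpH_pos _ _ hx hs0).le]
        exact hsmall y (by linarith) s hs0 (by linarith [hs.2]))
    rw [Real.norm_eq_abs] at this
    refine this.trans ?_
    calc _ ≤ C0 / y ^ 42 * y ^ 2 := by
          gcongr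
          rw [abs_le]; constructor <;> linarith
      _ = _ := by field_simp
  have e2 : ν * ∑' i : ℕ, cmpH (y ^ 4) (b + ν * i) - ∫ s in Set.Ioi (y ^ 2), cmpH (y ^ 4) s =
      (ν * ∑' i : ℕ, cmpH (y ^ 4) (b + ν * n + ν * i) - ∫ s in Set.Ioi (b + ν * n), cmpH (y ^ 4) s)
      - ((∫ s in Set.Ioi (y ^ 2), cmpH (y ^ 4) s) - ∫ s in Set.Ioi (b + ν * n), cmpH (y ^ 4) s)
      + ν * ∑ i ∈ Finset.range n, cmpH (y ^ 4) (b + ν * i) := by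
    rw [← hsum]; ring
  rw [e2, add_div, add_div]
  refine (abs_add_le _ _).trans (add_le_add ((abs_sub _ _).trans (add_le_add hc hint)) ?_)
  rw [abs_of_nonneg (by positivity)]
  exact hhead2

theorem cmp_ML (ν b : ℝ) (hν : 0 < ν) (hb : 0 < b) : ∃ C > 0, ∃ X ≥ (1 : ℝ), ∀ x : ℝ, X ≤ x →
    |ν * ∑' i : ℕ, cmpH x (b + ν * i) - 1| ≤ C * (x ^ 8)⁻¹ := by
  obtain ⟨C1, hC1, Y1, hY1, h1⟩ := cmp_sum_int ν b hν hb
  obtain ⟨C2, hC2, Y2, hY2, h2⟩ := cmp_sum_int 1 1 one_pos one_pos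
  refine ⟨C1 + C2, by positivity, (Y1 + Y2) ^ 4, one_le_pow₀ (by linarith), fun x hx => ?_⟩
  have hx0 : 0 < x := lt_of_lt_of_le (by positivity) hx
  set y := x ^ ((1 : ℝ) / 4) with hy
  have hyx : y ^ 4 = x := by
    rw [hy, ← Real.rpow_natCast, ← Real.rpow_mul hx0.le]; norm_num
  have hY : Y1 + Y2 ≤ y := by
    have hy0 : 0 ≤ y := by positivity
    exact le_of_pow_le_pow_left₀ (n := 4) (by norm_num) hy0 (by rw [hyx]; exact hx)
  have hy1 : 1 ≤ y := by linarith
  have a1 := h1 y (by linarith)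
  have a2 := h2 y (by linarith)
  rw [hyx, cmpH_poisson x] at a2
  rw [hyx] at a1
  rw [abs_sub_comm] at a2
  have e : ν * ∑' i : ℕ, cmpH x (b + ν * i) - 1 =
    (ν * ∑' i : ℕ, cmpH x (b + ν * i) - ∫ s in Set.Ioi (y ^ 2), cmpH x s) +
    ((∫ s in Set.Ioi (y ^ 2), cmpH x s) - 1 * 1) := by ring
  rw [e]
  refine (abs_add_le _ _).trans ((add_le_add a1 a2).trans ?_)
  rw [← add_div, div_eq_mul_inv, ← hyx, ← pow_mul]
  gcongr
  norm_num

open Filter Topology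

theorem cmp_alg1 (a1 a2 a3 a4 a5 a6 a7 b bb c d : ℝ) : ∃ R : ℝ → ℝ, Continuous R ∧ ∀ ε : ℝ,
    (1 + a1 * ε + a2 * ε ^ 2 + a3 * ε ^ 3 + a4 * ε ^ 4 + a5 * ε ^ 5 + a6 * ε ^ 6 + a7 * ε ^ 7) *
      (1 + b * ε ^ 3 + bb * ε ^ 6) * (1 + c * ε ^ 5) * (1 + d * ε ^ 7) =
    ((1) * ε ^ 0 + (a1) * ε ^ 1 + (a2) * ε ^ 2 + (b + a3) * ε ^ 3 + (a1 * b + a4) * ε ^ 4 + (c + a2 * b + a5) * ε ^ 5 + (bb + a1 * c + a3 * b + a6) * ε ^ 6 + (d + a1 * bb + a2 * c + a4 * b + a7) * ε ^ 7) +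
    ε ^ 8 * R ε :=
  ⟨fun ε => (b * c + a1 * d + a2 * bb + a3 * c + a5 * b) * ε ^ 0 + (a1 * b * c + a2 * d + a3 * bb + a4 * c + a6 * b) * ε ^ 1 + (b * d + a2 * b * c + a3 * d + a4 * bb + a5 * c + a7 * b) * ε ^ 2 + (bb * c + a1 * b * d + a3 * b * c + a4 * d + a5 * bb + a6 * c) * ε ^ 3 + (c * d + a1 * bb * c + a2 * b * d + a4 * b * c + a5 * d + a6 * bb + a7 * c) * ε ^ 4 + (bb * d + a1 * c * d + a2 * bb * c + a3 * b * d + a5 * b * c + a6 * d + a7 * bb) * ε ^ 5 + (a1 * bb * d + a2 * c * d + a3 * bb * c + a4 * b * d + a6 * b * c + a7 * d) * ε ^ 6 + (b * c * d + a2 * bb * d + a3 * c * d + a4 * bb * c + a5 * b * d + a7 * b * c) * ε ^ 7 + (a1 * b * c * d + a3 * bb * d + a4 * c * d + a5 * bb * c + a6 * b * d) * ε ^ 8 + (a2 * b * c * d + a4 * bb * d + a5 * c * d + a6 * bb * c + a7 * b * d) * ε ^ 9 + (bb * c * d + a3 * b * c * d + a5 * bb * d + a6 * c * d + a7 * bb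 * c) * ε ^ 10 + (a1 * bb * c * d + a4 * b * c * d + a6 * bb * d + a7 * c * d) * ε ^ 11 + (a2 * bb * c * d + a5 * b * c * d + a7 * bb * d) * ε ^ 12 + (a3 * bb * c * d + a6 * b * c * d) * ε ^ 13 + (a4 * bb * c * d + a7 * b * c * d) * ε ^ 14 + (a5 * bb * c * d) * ε ^ 15 + (a6 * bb * c * d) * ε ^ 16 + (a7 * bb * c * d) * ε ^ 17, by fun_prop, fun ε => by ring⟩

theorem cmp_alg2 (t0 t1 t2 t3 t4 t5 t6 t7 c0 c1 c2 c3 c4 c5 c6 c7 : ℝ)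
    (h0 : t0 * (1) = c0 * (1))
    (h1 : t0 * (49/2) + t1 * (1) = c0 * (49/2) + c1 * (1))
    (h2 : t0 * (973/4) + t1 * (49/2) + t2 * (1) = c0 * (973/4) + c1 * (24) + c2 * (1))
    (h3 : t0 * (10045/8) + t1 * (973/4) + t2 * (49/2) + t3 * (1) = c0 * (10045/8) + c1 * (925/4) + c2 * (45/2) + c3 * (1))
    (h4 : t0 * (57379/16) + t1 * (10045/8) + t2 * (973/4) + t3 * (49/2) + t4 * (1) = c0 * (57379/16) + c1 * (1140) + c2 * (395/2) + c3 * (20) + c4 * (1))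
    (h5 : t0 * (177331/32) + t1 * (57379/16) + t2 * (10045/8) + t3 * (973/4) + t4 * (49/2) + t5 * (1) = c0 * (177331/32) + c1 * (48259/16) + c2 * (3375/4) + c3 * (295/2) + c4 * (33/2) + c5 * (1))
    (h6 : t0 * (264207/64) + t1 * (177331/32) + t2 * (57379/16) + t3 * (10045/8) + t4 * (973/4) + t5 * (49/2) + t6 * (1) = c0 * (264207/64) + c1 * (8067/2) + c2 * (28009/16) + c3 * (475) + c4 * (359/4) + c5 * (12) + c6 * (1))
    (h7 : t0 * (135135/128) + t1 * (264207/64) + t2 * (177331/32) + t3 * (57379/16) + t4 * (10045/8) + t5 * (973/4) + t6 * (49/2) + t7 * (1) = c0 * (135135/128) + c1 * (135135/64) + c2 * (45045/32) + c3 * (9009/16) + c4 * (1287/8) + c5 * (143/4) + c6 * (13/2) + c7 * (1)) :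
    ∃ R : ℝ → ℝ, Continuous R ∧ ∀ ε : ℝ,
    (t0 * ε ^ 0 + t1 * ε ^ 1 + t2 * ε ^ 2 + t3 * ε ^ 3 + t4 * ε ^ 4 + t5 * ε ^ 5 + t6 * ε ^ 6 + t7 * ε ^ 7) *
      ((1 + 1 / 2 * ε) * (1 + 3 / 2 * ε) * (1 + 5 / 2 * ε) * (1 + 7 / 2 * ε) * (1 + 9 / 2 * ε) * (1 + 11 / 2 * ε) * (1 + 13 / 2 * ε)) -
    (c0 * ε ^ 0 * (1 + 1 / 2 * ε) * (1 + 3 / 2 * ε) * (1 + 5 / 2 * ε) * (1 + 7 / 2 * ε) * (1 + 9 / 2 * ε) * (1 + 11 / 2 * ε) * (1 + 13 / 2 * ε) + c1 * ε ^ 1 * (1 + 3 / 2 * ε) * (1 + 5 / 2 * ε) * (1 + 7 / 2 * ε) * (1 + 9 / 2 * ε) * (1 + 11 / 2 * ε) * (1 + 13 / 2 * ε) + c2 * ε ^ 2 * (1 + 5 / 2 * ε) * (1 + 7 / 2 * ε) * (1 + 9 / 2 * ε) * (1 + 11 / 2 * ε) * (1 + 13 / 2 * ε) + c3 * ε ^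 3 * (1 + 7 / 2 * ε) * (1 + 9 / 2 * ε) * (1 + 11 / 2 * ε) * (1 + 13 / 2 * ε) + c4 * ε ^ 4 * (1 + 9 / 2 * ε) * (1 + 11 / 2 * ε) * (1 + 13 / 2 * ε) + c5 * ε ^ 5 * (1 + 11 / 2 * ε) * (1 + 13 / 2 * ε) + c6 * ε ^ 6 * (1 + 13 / 2 * ε) + c7 * ε ^ 7) =
    ε ^ 8 * R ε := by
  refine ⟨fun ε => (t1 * (135135/128) + t2 * (264207/64) + t3 * (177331/32) + t4 * (57379/16) + t5 * (10045/8) + t6 * (973/4) + t7 * (49/2)) * ε ^ 0 + (t2 * (135135/128) + t3 * (264207/64) + t4 * (177331/32) + t5 * (57379/16) + t6 * (10045/8) + t7 * (973/4)) * ε ^ 1 + (t3 * (135135/128) + t4 * (264207/64) + t5 * (177331/32) + t6 * (57379/16) + t7 * (10045/8)) * ε ^ 2 + (t4 * (135135/128) + t5 * (264207/64) + t6 * (177331/32) + t7 * (57379/16)) * ε ^ 3 + (t5 * (135135/128) + t6 * (264207/64) + t7 * (177331/32)) * ε ^ 4 + (t6 * (135135/128) + t7 * (264207/64)) * ε ^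 5 + (t7 * (135135/128)) * ε ^ 6, by fun_prop, fun ε => ?_⟩
  linear_combination ε ^ 0 * h0 + ε ^ 1 * h1 + ε ^ 2 * h2 + ε ^ 3 * h3 + ε ^ 4 * h4 + ε ^ 5 * h5 + ε ^ 6 * h6 + ε ^ 7 * h7

theorem cmp_coef0 (ν : ℝ) :
    (1) * (1) =
    cmpCoeff ν 0 * (1) := by
  simp only [cmpCoeff]

theorem cmp_coef1 (ν : ℝ) :
    (1) * (49/2) + (((-1 / 24) * (1 - ν ^ 2))) * (1) =
    cmpCoeff ν 0 * (49/2) + cmpCoeff ν 1 * (1) := by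
  simp only [cmpCoeff]
  ring

theorem cmp_coef2 (ν : ℝ) :
    (1) * (973/4) + (((-1 / 24) * (1 - ν ^ 2))) * (49/2) + ((((-1 / 24) * (1 - ν ^ 2)) ^ 2 / 2)) * (1) =
    cmpCoeff ν 0 * (973/4) + cmpCoeff ν 1 * (24) + cmpCoeff ν 2 * (1) := by
  simp only [cmpCoeff]
  ring

theorem cmp_coef3 (ν : ℝ) :
    (1) * (10045/8) + (((-1 / 24) * (1 - ν ^ 2))) * (973/4) + ((((-1 / 24) * (1 - ν ^ 2)) ^ 2 / 2)) * (49/2) + (((7 / 2880) * (1 - ν ^ 4)) + (((-1 / 24) * (1 - ν ^ 2)) ^ 3 / 6)) * (1) =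
    cmpCoeff ν 0 * (10045/8) + cmpCoeff ν 1 * (925/4) + cmpCoeff ν 2 * (45/2) + cmpCoeff ν 3 * (1) := by
  simp only [cmpCoeff]
  ring

theorem cmp_coef4 (ν : ℝ) :
    (1) * (57379/16) + (((-1 / 24) * (1 - ν ^ 2))) * (10045/8) + ((((-1 / 24) * (1 - ν ^ 2)) ^ 2 / 2)) * (973/4) + (((7 / 2880) * (1 - ν ^ 4)) + (((-1 / 24) * (1 - ν ^ 2)) ^ 3 / 6)) * (49/2) + (((-1 / 24) * (1 - ν ^ 2)) * ((7 / 2880) * (1 - ν ^ 4)) + (((-1 / 24) * (1 - ν ^ 2)) ^ 4 / 24)) * (1) =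
    cmpCoeff ν 0 * (57379/16) + cmpCoeff ν 1 * (1140) + cmpCoeff ν 2 * (395/2) + cmpCoeff ν 3 * (20) + cmpCoeff ν 4 * (1) := by
  simp only [cmpCoeff]
  ring

theorem cmp_coef5 (ν : ℝ) :
    (1) * (177331/32) + (((-1 / 24) * (1 - ν ^ 2))) * (57379/16) + ((((-1 / 24) * (1 - ν ^ 2)) ^ 2 / 2)) * (10045/8) + (((7 / 2880) * (1 - ν ^ 4)) + (((-1 / 24) * (1 - ν ^ 2)) ^ 3 / 6)) * (973/4) + (((-1 / 24) * (1 - ν ^ 2)) * ((7 / 2880) * (1 - ν ^ 4)) + (((-1 / 24) * (1 - ν ^ 2)) ^ 4 / 24)) * (49/2) + (((-31 / 40320) * (1 - ν ^ 6)) + (((-1 / 24) * (1 - ν ^ 2)) ^ 2 / 2) * ((7 / 2880) * (1 - ν ^ 4)) + (((-1 / 24) * (1 - ν ^ 2)) ^ 5 / 120)) * (1) =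
    cmpCoeff ν 0 * (177331/32) + cmpCoeff ν 1 * (48259/16) + cmpCoeff ν 2 * (3375/4) + cmpCoeff ν 3 * (295/2) + cmpCoeff ν 4 * (33/2) + cmpCoeff ν 5 * (1) := by
  simp only [cmpCoeff]
  ring

theorem cmp_coef6 (ν : ℝ) :
    (1) * (264207/64) + (((-1 / 24) * (1 - ν ^ 2))) * (177331/32) + ((((-1 / 24) * (1 - ν ^ 2)) ^ 2 / 2)) * (57379/16) + (((7 / 2880) * (1 - ν ^ 4)) + (((-1 / 24) * (1 - ν ^ 2)) ^ 3 / 6)) * (10045/8) + (((-1 / 24) * (1 - ν ^ 2)) * ((7 / 2880) * (1 - ν ^ 4)) + (((-1 / 24) * (1 - ν ^ 2)) ^ 4 / 24)) * (973/4) + (((-31 / 40320) * (1 - ν ^ 6)) + (((-1 / 24) * (1 - ν ^ 2)) ^ 2 / 2) * ((7 / 2880) * (1 - ν ^ 4)) + (((-1 / 24) * (1 - ν ^ 2)) ^ 5 / 120)) * (49/2) + ((((7 / 2880) * (1 - ν ^ 4)) ^ 2 / 2) + ((-1 / 24) * (1 - ν ^ 2)) * ((-31 / 40320) * (1 - ν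 ^ 6)) + (((-1 / 24) * (1 - ν ^ 2)) ^ 3 / 6) * ((7 / 2880) * (1 - ν ^ 4)) + (((-1 / 24) * (1 - ν ^ 2)) ^ 6 / 720)) * (1) =
    cmpCoeff ν 0 * (264207/64) + cmpCoeff ν 1 * (8067/2) + cmpCoeff ν 2 * (28009/16) + cmpCoeff ν 3 * (475) + cmpCoeff ν 4 * (359/4) + cmpCoeff ν 5 * (12) + cmpCoeff ν 6 * (1) := by
  simp only [cmpCoeff]
  ring

theorem cmp_coef7 (ν : ℝ) :
    (1) * (135135/128) + (((-1 / 24) * (1 - ν ^ 2))) * (264207/64) + ((((-1 / 24) * (1 - ν ^ 2)) ^ 2 / 2)) * (177331/32) + (((7 / 2880) * (1 - ν ^ 4)) + (((-1 / 24) * (1 - ν ^ 2)) ^ 3 / 6)) * (57379/16) + (((-1 / 24) * (1 - ν ^ 2)) * ((7 / 2880) * (1 - ν ^ 4)) + (((-1 / 24) * (1 - ν ^ 2)) ^ 4 / 24)) * (10045/8) + (((-31 / 40320) * (1 - ν ^ 6)) + (((-1 / 24) * (1 - ν ^ 2)) ^ 2 / 2) * ((7 / 2880) * (1 - ν ^ 4))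 + (((-1 / 24) * (1 - ν ^ 2)) ^ 5 / 120)) * (973/4) + ((((7 / 2880) * (1 - ν ^ 4)) ^ 2 / 2) + ((-1 / 24) * (1 - ν ^ 2)) * ((-31 / 40320) * (1 - ν ^ 6)) + (((-1 / 24) * (1 - ν ^ 2)) ^ 3 / 6) * ((7 / 2880) * (1 - ν ^ 4)) + (((-1 / 24) * (1 - ν ^ 2)) ^ 6 / 720)) * (49/2) + (((127 / 215040) * (1 - ν ^ 8)) + ((-1 / 24) * (1 - ν ^ 2)) * (((7 / 2880) * (1 - ν ^ 4)) ^ 2 / 2) + (((-1 / 24) * (1 - ν ^ 2)) ^ 2 / 2) * ((-31 / 40320) * (1 - ν ^ 6)) + (((-1 / 24) * (1 - ν ^ 2)) ^ 4 / 24) * ((7 / 2880) * (1 - ν ^ 4)) + (((-1 / 24) * (1 - ν ^ 2)) ^ 7 / 5040)) * (1) =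
    cmpCoeff ν 0 * (135135/128) + cmpCoeff ν 1 * (135135/64) + cmpCoeff ν 2 * (45045/32) + cmpCoeff ν 3 * (9009/16) + cmpCoeff ν 4 * (1287/8) + cmpCoeff ν 5 * (143/4) + cmpCoeff ν 6 * (13/2) + cmpCoeff ν 7 * (1) := by
  simp only [cmpCoeff]
  ring

open Filter Topology

theorem cmp_exp_O (b : ℝ) (k n : ℕ) (h : 8 ≤ k * n) :
    (fun ε : ℝ => Real.exp (b * ε ^ k) - ∑ m ∈ Finset.range n, (b * ε ^ k) ^ m / m.factorial)
      =O[𝓝 0] (fun ε : ℝ => ε ^ 8) := by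
  refine Asymptotics.IsBigO.of_bound (|b| ^ n * Real.exp |b|) ?_
  have : ∀ᶠ ε : ℝ in 𝓝 0, |ε| < 1 := by
    have := (continuous_abs (G := ℝ)).tendsto 0
    rw [abs_zero] at this
    exact this.eventually_lt_const one_pos
  filter_upwards [this] with ε hε
  have h1 := Complex.norm_exp_sub_sum_le_norm_mul_exp ((b * ε ^ k : ℝ) : ℂ) n
  have e : Complex.exp ((b * ε ^ k : ℝ) : ℂ) - ∑ m ∈ Finset.range n, ((b * ε ^ k : ℝ) : ℂ) ^ m / m.factorial
      = ((Real.exp (b * ε ^ k) - ∑ m ∈ Finset.range n, (b * ε ^ k) ^ m / m.factorial : ℝ) : ℂ) := by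
    push_cast
    rfl
  rw [e, Complex.norm_real, Complex.norm_real] at h1
  refine h1.trans ?_
  have h2 : ‖b * ε ^ k‖ = |b| * |ε| ^ k := by rw [norm_mul, norm_pow]; rfl
  have h3 : |ε| ^ k ≤ 1 := pow_le_one₀ (abs_nonneg _) hε.le
  have h4 : |b| * |ε| ^ k ≤ |b| := mul_le_of_le_one_right (abs_nonneg _) h3
  rw [h2, norm_pow, Real.norm_eq_abs, mul_pow, ← pow_mul]
  have h5 : |ε| ^ (k * n) ≤ |ε| ^ 8 := pow_le_pow_of_le_one (abs_nonneg _) hε.le h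
  calc |b| ^ n * |ε| ^ (k * n) * Real.exp (|b| * |ε| ^ k)
      ≤ |b| ^ n * |ε| ^ 8 * Real.exp |b| := by gcongr
    _ = _ := by ring

theorem cmp_O_mul (f p g q : ℝ → ℝ) (hf : (fun ε => f ε - p ε) =O[𝓝 0] (fun ε : ℝ => ε ^ 8))
    (hg : (fun ε => g ε - q ε) =O[𝓝 0] (fun ε : ℝ => ε ^ 8)) (cp : Continuous p)
    (cg : Continuous g) :
    (fun ε => f ε * g ε - p ε * q ε) =O[𝓝 0] (fun ε : ℝ => ε ^ 8) := by
  have h1 := hf.mul ((cg.continuousAt (x := (0 : ℝ))).tendsto.isBigO_one ℝ)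
  have h2 := ((cp.continuousAt (x := (0 : ℝ))).tendsto.isBigO_one ℝ).mul hg
  simp only [mul_one, one_mul] at h1 h2
  refine (h1.add h2).congr_left fun ε => ?_
  ring

noncomputable def cmpP (ν ε : ℝ) : ℝ :=
  ((-1 / 24) * (1 - ν ^ 2)) * ε ^ 1 + ((7 / 2880) * (1 - ν ^ 4)) * ε ^ 3 +
    ((-31 / 40320) * (1 - ν ^ 6)) * ε ^ 5 + ((127 / 215040) * (1 - ν ^ 8)) * ε ^ 7

noncomputable def cmpD (ε : ℝ) : ℝ :=
  (1 + 1 / 2 * ε) * (1 + 3 / 2 * ε) * (1 + 5 / 2 * ε) * (1 + 7 / 2 * ε) * (1 + 9 / 2 * ε) *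
    (1 + 11 / 2 * ε) * (1 + 13 / 2 * ε)

noncomputable def cmpS (ν ε : ℝ) : ℝ :=
  cmpCoeff ν 0 * ε ^ 0 * (1 + 1 / 2 * ε) * (1 + 3 / 2 * ε) * (1 + 5 / 2 * ε) * (1 + 7 / 2 * ε) * (1 + 9 / 2 * ε) * (1 + 11 / 2 * ε) * (1 + 13 / 2 * ε) +
    cmpCoeff ν 1 * ε ^ 1 * (1 + 3 / 2 * ε) * (1 + 5 / 2 * ε) * (1 + 7 / 2 * ε) * (1 + 9 / 2 * ε) * (1 + 11 / 2 * ε) * (1 + 13 / 2 * ε) +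
    cmpCoeff ν 2 * ε ^ 2 * (1 + 5 / 2 * ε) * (1 + 7 / 2 * ε) * (1 + 9 / 2 * ε) * (1 + 11 / 2 * ε) * (1 + 13 / 2 * ε) +
    cmpCoeff ν 3 * ε ^ 3 * (1 + 7 / 2 * ε) * (1 + 9 / 2 * ε) * (1 + 11 / 2 * ε) * (1 + 13 / 2 * ε) +
    cmpCoeff ν 4 * ε ^ 4 * (1 + 9 / 2 * ε) * (1 + 11 / 2 * ε) * (1 + 13 / 2 * ε) +
    cmpCoeff ν 5 * ε ^ 5 * (1 + 11 / 2 * ε) * (1 + 13 / 2 * ε) +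
    cmpCoeff ν 6 * ε ^ 6 * (1 + 13 / 2 * ε) +
    cmpCoeff ν 7 * ε ^ 7

theorem cmp_main_O (ν : ℝ) : (fun ε : ℝ => Real.exp (cmpP ν ε) * cmpD ε - cmpS ν ε)
    =O[𝓝 0] (fun ε : ℝ => ε ^ 8) := by
  have e1 := cmp_exp_O ((-1 / 24) * (1 - ν ^ 2)) 1 8 (by norm_num)
  have e2 := cmp_exp_O ((7 / 2880) * (1 - ν ^ 4)) 3 3 (by norm_num)
  have e3 := cmp_exp_O ((-31 / 40320) * (1 - ν ^ 6)) 5 2 (by norm_num)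
  have e4 := cmp_exp_O ((127 / 215040) * (1 - ν ^ 8)) 7 2 (by norm_num)
  have m12 := cmp_O_mul _ _ _ _ e1 e2 (by fun_prop) (by fun_prop)
  have m123 := cmp_O_mul _ _ _ _ m12 e3 (by fun_prop) (by fun_prop)
  have m1234 := cmp_O_mul _ _ _ _ m123 e4 (by fun_prop) (by fun_prop)
  have cD : Continuous cmpD := by unfold cmpD; fun_prop
  have hD : (fun ε => cmpD ε - cmpD ε) =O[𝓝 0] (fun ε : ℝ => ε ^ 8) := by
    simp only [sub_self]; exact Asymptotics.isBigO_zero _ _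
  have mD := cmp_O_mul _ _ _ _ m1234 hD (by fun_prop) cD
  have hR : ∀ R : ℝ → ℝ, Continuous R → (fun ε => ε ^ 8 * R ε) =O[𝓝 0] (fun ε : ℝ => ε ^ 8) := by
    intro R hR
    have := (Asymptotics.isBigO_refl (fun ε : ℝ => ε ^ 8) (𝓝 0)).mul
      ((hR.continuousAt (x := (0 : ℝ))).tendsto.isBigO_one ℝ)
    simpa only [mul_one] using this
  obtain ⟨R1, cR1, hR1⟩ := cmp_alg1 ((-1 / 24) * (1 - ν ^ 2)) (((-1 / 24) * (1 - ν ^ 2)) ^ 2 / 2) (((-1 / 24) * (1 - ν ^ 2)) ^ 3 / 6) (((-1 / 24) * (1 - ν ^ 2)) ^ 4 / 24) (((-1 / 24) * (1 - ν ^ 2)) ^ 5 / 120) (((-1 / 24) * (1 - ν ^ 2)) ^ 6 / 720) (((-1 / 24) * (1 - ν ^ 2)) ^ 7 / 5040) ((7 / 2880) * (1 - ν ^ 4)) (((7 / 2880) * (1 - ν ^ 4)) ^ 2 / 2) ((-31 / 40320) * (1 - ν ^ 6)) ((127 / 215040) * (1 - ν ^ 8))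
  obtain ⟨R2, cR2, hR2⟩ := cmp_alg2 _ _ _ _ _ _ _ _ _ _ _ _ _ _ _ _ (cmp_coef0 ν) (cmp_coef1 ν)
      (cmp_coef2 ν) (cmp_coef3 ν) (cmp_coef4 ν) (cmp_coef5 ν) (cmp_coef6 ν) (cmp_coef7 ν)
  refine ((mD.add (hR _ (cR1.mul cD))).add (hR R2 cR2)).congr_left fun ε => ?_
  have h2 := hR2 ε
  change _ * cmpD ε - cmpS ν ε = _ at h2
  have h1 := hR1 ε
  have s : ∀ b c d e : ℝ, (∑ m ∈ Finset.range 8, (b * ε ^ 1) ^ m / (m.factorial : ℝ)) *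
      (∑ m ∈ Finset.range 3, (c * ε ^ 3) ^ m / (m.factorial : ℝ)) *
      (∑ m ∈ Finset.range 2, (d * ε ^ 5) ^ m / (m.factorial : ℝ)) *
      (∑ m ∈ Finset.range 2, (e * ε ^ 7) ^ m / (m.factorial : ℝ)) =
      (1 + b * ε + b ^ 2 / 2 * ε ^ 2 + b ^ 3 / 6 * ε ^ 3 + b ^ 4 / 24 * ε ^ 4 +
        b ^ 5 / 120 * ε ^ 5 + b ^ 6 / 720 * ε ^ 6 + b ^ 7 / 5040 * ε ^ 7) *
      (1 + c * ε ^ 3 + c ^ 2 / 2 * ε ^ 6) * (1 + d * ε ^ 5) * (1 + e * ε ^ 7) := by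
    intro b c d e
    simp only [Finset.sum_range_succ, Finset.sum_range_zero, Nat.factorial]
    push_cast
    congr 1
    · congr 1
      · congr 1
        · ring
        · ring
      · ring
    · ring
  rw [← s] at h1
  rw [cmpP, Real.exp_add, Real.exp_add, Real.exp_add]
  have e5 : (R1 * cmpD) ε = R1 ε * cmpD ε := rfl
  rw [e5]
  clear s e5 mD m1234 m123 m12 e1 e2 e3 e4 hR1 hR2
  rw [h1]
  linear_combination (-1) * h2

open Filter Topology

noncomputable def cmpW (ν : ℝ) (i : ℕ) : ℝ :=
  ν ^ (-(ν * ((i : ℝ) + 1 / 2))) * (2 * Real.pi) ^ ((ν - 1) / 2) / (i.factorial : ℝ) ^ ν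

theorem cmpW_exp (ν : ℝ) (hν : 0 < ν) (i : ℕ) :
    cmpW ν i * Real.Gamma (ν * ((i : ℝ) + 1 / 2) + 1 / 2) =
      Real.exp (cmpP ν (ν * ((i : ℝ) + 1 / 2))⁻¹ +
        (cmpG (ν * ((i : ℝ) + 1 / 2)) - ν * cmpG ((i : ℝ) + 1 / 2))) := by
  set u : ℝ := (i : ℝ) + 1 / 2 with hu
  have hu0 : 0 < u := by positivity
  have hs0 : 0 < ν * u := by positivity
  have hG : 0 < Real.Gamma (ν * u + 1 / 2) := Real.Gamma_pos_of_pos (by positivity)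
  have hf : (i.factorial : ℝ) = Real.Gamma (u + 1 / 2) := by
    rw [hu, add_assoc, add_halves, Real.Gamma_nat_eq_factorial]
  have hf0 : 0 < Real.Gamma (u + 1 / 2) := Real.Gamma_pos_of_pos (by positivity)
  have hpi : 0 < 2 * Real.pi := by positivity
  rw [cmpW, ← hu, hf]
  rw [← Real.exp_log (x := _ * Real.Gamma (ν * u + 1 / 2)) (by positivity)]
  congr 1
  rw [Real.log_mul (by positivity) hG.ne', Real.log_div (by positivity) (by positivity),
    Real.log_mul (by positivity) (by positivity), Real.log_rpow hν, Real.log_rpow hpi,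
    Real.log_rpow hf0]
  have e1 : Real.log (Real.Gamma (u + 1 / 2)) = cmpG u + cmpStir u := by rw [cmpG]; ring
  have e2 : Real.log (Real.Gamma (ν * u + 1 / 2)) = cmpG (ν * u) + cmpStir (ν * u) := by
    rw [cmpG]; ring
  rw [e1, e2, cmpStir, cmpStir, cmpP, Real.log_mul hν.ne' hu0.ne']
  field_simp
  ring

theorem cmpS_alg (ν ε : ℝ) (g : ℕ → ℝ)
    (h : ∀ m : ℕ, g (m + 1) * (1 + (m + 1 / 2) * ε) = ε * g m) :
    (∑ j ∈ Finset.range 8, cmpCoeff ν j * g j) * cmpD ε = cmpS ν ε * g 0 ∧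
    g 8 * (cmpD ε * (1 + 15 / 2 * ε)) = ε ^ 8 * g 0 := by
  have h1 := h 0
  norm_num only at h1
  have p1 : g 1 * ((1 + 1 / 2 * ε)) = ε ^ 1 * g 0 := by
    linear_combination h1
  have h2 := h 1
  norm_num only at h2
  have p2 : g 2 * ((1 + 1 / 2 * ε) * (1 + 3 / 2 * ε)) = ε ^ 2 * g 0 := by
    linear_combination ((1 + 1 / 2 * ε)) * h2 + ε * p1
  have h3 := h 2
  norm_num only at h3
  have p3 : g 3 * ((1 + 1 / 2 * ε) * (1 + 3 / 2 * ε) * (1 + 5 / 2 * ε)) = ε ^ 3 * g 0 := by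
    linear_combination ((1 + 1 / 2 * ε) * (1 + 3 / 2 * ε)) * h3 + ε * p2
  have h4 := h 3
  norm_num only at h4
  have p4 : g 4 * ((1 + 1 / 2 * ε) * (1 + 3 / 2 * ε) * (1 + 5 / 2 * ε) * (1 + 7 / 2 * ε)) = ε ^ 4 * g 0 := by
    linear_combination ((1 + 1 / 2 * ε) * (1 + 3 / 2 * ε) * (1 + 5 / 2 * ε)) * h4 + ε * p3
  have h5 := h 4
  norm_num only at h5
  have p5 : g 5 * ((1 + 1 / 2 * ε) * (1 + 3 / 2 * ε) * (1 + 5 / 2 * ε) * (1 + 7 / 2 * ε) * (1 + 9 / 2 * ε)) = ε ^ 5 * g 0 := by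
    linear_combination ((1 + 1 / 2 * ε) * (1 + 3 / 2 * ε) * (1 + 5 / 2 * ε) * (1 + 7 / 2 * ε)) * h5 + ε * p4
  have h6 := h 5
  norm_num only at h6
  have p6 : g 6 * ((1 + 1 / 2 * ε) * (1 + 3 / 2 * ε) * (1 + 5 / 2 * ε) * (1 + 7 / 2 * ε) * (1 + 9 / 2 * ε) * (1 + 11 / 2 * ε)) = ε ^ 6 * g 0 := by
    linear_combination ((1 + 1 / 2 * ε) * (1 + 3 / 2 * ε) * (1 + 5 / 2 * ε) * (1 + 7 / 2 * ε) * (1 + 9 / 2 * ε)) * h6 + ε * p5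
  have h7 := h 6
  norm_num only at h7
  have p7 : g 7 * ((1 + 1 / 2 * ε) * (1 + 3 / 2 * ε) * (1 + 5 / 2 * ε) * (1 + 7 / 2 * ε) * (1 + 9 / 2 * ε) * (1 + 11 / 2 * ε) * (1 + 13 / 2 * ε)) = ε ^ 7 * g 0 := by
    linear_combination ((1 + 1 / 2 * ε) * (1 + 3 / 2 * ε) * (1 + 5 / 2 * ε) * (1 + 7 / 2 * ε) * (1 + 9 / 2 * ε) * (1 + 11 / 2 * ε)) * h7 + ε * p6
  have h8 := h 7
  norm_num only at h8
  have p8 : g 8 * ((1 + 1 / 2 * ε) * (1 + 3 / 2 * ε) * (1 + 5 / 2 * ε) * (1 + 7 / 2 * ε) * (1 + 9 / 2 * ε) * (1 + 11 / 2 * ε) * (1 + 13 / 2 * ε) * (1 + 15 / 2 * ε)) = ε ^ 8 * g 0 := by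
    linear_combination ((1 + 1 / 2 * ε) * (1 + 3 / 2 * ε) * (1 + 5 / 2 * ε) * (1 + 7 / 2 * ε) * (1 + 9 / 2 * ε) * (1 + 11 / 2 * ε) * (1 + 13 / 2 * ε)) * h8 + ε * p7
  constructor
  · simp only [Finset.sum_range_succ, Finset.sum_range_zero, cmpD, cmpS]
    linear_combination cmpCoeff ν 1 * (1 + 3 / 2 * ε) * (1 + 5 / 2 * ε) * (1 + 7 / 2 * ε) * (1 + 9 / 2 * ε) * (1 + 11 / 2 * ε) * (1 + 13 / 2 * ε) * p1 + cmpCoeff ν 2 * (1 + 5 / 2 * ε) * (1 + 7 / 2 * ε) * (1 + 9 / 2 * ε) * (1 + 11 / 2 * ε) * (1 + 13 / 2 * ε) * p2 + cmpCoeff ν 3 * (1 + 7 / 2 * ε) * (1 + 9 / 2 * ε) * (1 + 11 / 2 * ε) * (1 + 13 / 2 * ε) * p3 + cmpCoeff ν 4 * (1 + 9 / 2 * ε) * (1 + 11 / 2 * ε) * (1 + 13 / 2 * ε) * p4 + cmpCoeff ν 5 * (1 + 11 / 2 * ε) * (1 + 13 / 2 * ε) * p5 + cmpCoeff ν 6 *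 (1 + 13 / 2 * ε) * p6 + cmpCoeff ν 7 * p7
  · rw [cmpD]
    linear_combination p8

theorem cmpS_gamma (ν t ε : ℝ) (ht : 0 < t) (hte : t * ε = 1 + 1 / 2 * ε) :
    (∑ j ∈ Finset.range 8, cmpCoeff ν j * (Real.Gamma (t + j))⁻¹) * cmpD ε =
      cmpS ν ε * (Real.Gamma t)⁻¹ ∧
    (Real.Gamma (t + 8))⁻¹ * (cmpD ε * (1 + 15 / 2 * ε)) = ε ^ 8 * (Real.Gamma t)⁻¹ := by
  have h : ∀ m : ℕ, (Real.Gamma (t + ((m + 1 : ℕ) : ℝ)))⁻¹ * (1 + (m + 1 / 2) * ε) =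
      ε * (Real.Gamma (t + m))⁻¹ := by
    intro m
    have hp : 0 < t + m := by positivity
    have hG := (Real.Gamma_pos_of_pos hp).ne'
    have e : t + ((m + 1 : ℕ) : ℝ) = (t + m) + 1 := by push_cast; ring
    have e2 : 1 + (m + 1 / 2) * ε = (t + m) * ε := by linear_combination -hte
    rw [e, e2, Real.Gamma_add_one hp.ne']
    field_simp
  have := cmpS_alg ν ε (fun m => (Real.Gamma (t + m))⁻¹) h
  simpa only [Nat.cast_zero, add_zero, Nat.cast_ofNat] using this

theorem cmpW_bound (ν : ℝ) (hν : 0 < ν) : ∃ C > 0, ∀ i : ℕ,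
    |cmpW ν i - ∑ j ∈ Finset.range 8, cmpCoeff ν j * (Real.Gamma ((1 + ν) / 2 + j + ν * i))⁻¹| ≤
      C * (Real.Gamma ((1 + ν) / 2 + 8 + ν * i))⁻¹ := by
  obtain ⟨K, hK, hG⟩ := cmpG_bound
  let s : ℕ → ℝ := fun i => ν * ((i : ℝ) + 1 / 2)
  let ε : ℕ → ℝ := fun i => (s i)⁻¹
  let η : ℕ → ℝ := fun i => cmpG (s i) - ν * cmpG ((i : ℝ) + 1 / 2)
  have hs0 : ∀ i, 0 < s i := fun i => by simp only [s]; positivity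
  have hst : Tendsto s atTop atTop :=
    (tendsto_atTop_add_const_right atTop _ tendsto_natCast_atTop_atTop).const_mul_atTop hν
  have hεt : Tendsto ε atTop (𝓝 0) := tendsto_inv_atTop_zero.comp hst
  have hA : (fun i => Real.exp (cmpP ν (ε i)) * cmpD (ε i) - cmpS ν (ε i))
      =O[atTop] (fun i => ε i ^ 8) := (cmp_main_O ν).comp_tendsto hεt
  have hη : η =O[atTop] (fun i => ε i ^ 8) := by
    refine Asymptotics.IsBigO.of_bound (K + ν * K * ν ^ 8) ?_
    filter_upwards [hst.eventually_ge_atTop 1, eventually_ge_atTop 1] with i h1 h2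
    have h3 : (1 : ℝ) ≤ i := by exact_mod_cast h2
    have b1 := hG (s i) h1
    have b2 := hG ((i : ℝ) + 1 / 2) (by linarith)
    rw [Real.norm_eq_abs, Real.norm_of_nonneg (by have := hs0 i; positivity)]
    calc |η i| ≤ |cmpG (s i)| + |ν * cmpG ((i : ℝ) + 1 / 2)| := abs_sub _ _
      _ ≤ K * (s i ^ 8)⁻¹ + ν * (K * (((i : ℝ) + 1 / 2) ^ 8)⁻¹) := by
          rw [abs_mul, abs_of_pos hν]; gcongr
      _ = _ := by
          simp only [ε, s]
          field_simp
  have hηt : Tendsto η atTop (𝓝 0) := by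
    refine hη.trans_tendsto ?_
    simpa using hεt.pow 8
  have hexp : (fun i => Real.exp (η i) - 1) =O[atTop] (fun i => ε i ^ 8) := by
    refine Asymptotics.IsBigO.trans (Asymptotics.IsBigO.of_bound 2 ?_) hη
    have : ∀ᶠ i in atTop, |η i| < 1 := by
      have := hηt.abs
      rw [abs_zero] at this
      exact this.eventually_lt_const one_pos
    filter_upwards [this] with i hi
    exact Real.abs_exp_sub_one_le hi.le
  have hb : (fun i => Real.exp (cmpP ν (ε i)) * cmpD (ε i)) =O[atTop] (fun _ => (1 : ℝ)) := by
    have c : Continuous fun e => Real.exp (cmpP ν e) * cmpD e := by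
      unfold cmpP cmpD; fun_prop
    exact ((c.tendsto 0).comp hεt).isBigO_one ℝ
  have hF : (fun i => Real.exp (cmpP ν (ε i) + η i) * cmpD (ε i) - cmpS ν (ε i))
      =O[atTop] (fun i => ε i ^ 8) := by
    have := hb.mul hexp
    simp only [one_mul] at this
    refine (hA.add this).congr_left fun i => ?_
    rw [Real.exp_add]; ring
  obtain ⟨c, hc0, hc⟩ := hF.exists_pos
  have key : (fun i : ℕ => cmpW ν i -
      ∑ j ∈ Finset.range 8, cmpCoeff ν j * (Real.Gamma ((1 + ν) / 2 + j + ν * i))⁻¹) =O[atTop]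
      (fun i : ℕ => (Real.Gamma ((1 + ν) / 2 + 8 + ν * i))⁻¹) := by
    refine Asymptotics.IsBigO.of_bound (c * (17 / 2)) ?_
    filter_upwards [hc.bound, hst.eventually_ge_atTop 1] with i h1 h2
    have hsi := hs0 i
    have hε0 : 0 < ε i := inv_pos.mpr hsi
    have hε1 : ε i ≤ 1 := inv_le_one_of_one_le₀ h2
    have hss : s i * ε i = 1 := mul_inv_cancel₀ hsi.ne'
    have ht : 0 < s i + 1 / 2 := by positivity
    obtain ⟨g1, g2⟩ := cmpS_gamma ν (s i + 1 / 2) (ε i) ht (by linear_combination hss)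
    have hW := cmpW_exp ν hν i
    change cmpW ν i * Real.Gamma (s i + 1 / 2) = Real.exp (cmpP ν (ε i) + η i) at hW
    have ea : ∀ j : ℝ, (1 + ν) / 2 + j + ν * i = s i + 1 / 2 + j := fun j => by
      simp only [s]; ring
    simp_rw [ea]
    have hG0 := Real.Gamma_pos_of_pos ht
    have hG8 : 0 < Real.Gamma (s i + 1 / 2 + 8) := Real.Gamma_pos_of_pos (by positivity)
    have hD : 0 < cmpD (ε i) := by unfold cmpD; positivity
    rw [Real.norm_eq_abs, Real.norm_of_nonneg (by positivity)] at h1 ⊢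
    rw [← mul_le_mul_iff_of_pos_right hD]
    rw [← abs_of_pos hD, ← abs_mul, abs_of_pos hD, sub_mul, g1]
    have e3 : cmpW ν i * cmpD (ε i) - cmpS ν (ε i) * (Real.Gamma (s i + 1 / 2))⁻¹ =
        (Real.exp (cmpP ν (ε i) + η i) * cmpD (ε i) - cmpS ν (ε i)) *
          (Real.Gamma (s i + 1 / 2))⁻¹ := by
      rw [← hW]; field_simp
    rw [e3, abs_mul, abs_of_pos (inv_pos.mpr hG0)]
    calc _ ≤ c * ε i ^ 8 * (Real.Gamma (s i + 1 / 2))⁻¹ := by gcongr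
      _ = c * ((Real.Gamma (s i + 1 / 2 + 8))⁻¹ * (cmpD (ε i) * (1 + 15 / 2 * ε i))) := by
          rw [g2]; ring
      _ ≤ c * ((Real.Gamma (s i + 1 / 2 + 8))⁻¹ * (cmpD (ε i) * (1 + 15 / 2 * 1))) := by gcongr
      _ = _ := by ring
  obtain ⟨C, hC, h⟩ := Asymptotics.bound_of_isBigO_nat_atTop key
  refine ⟨C, hC, fun i => ?_⟩
  have hp : 0 < (Real.Gamma ((1 + ν) / 2 + 8 + ν * i))⁻¹ :=
    inv_pos.mpr (Real.Gamma_pos_of_pos (by positivity))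
  have := h hp.ne'
  rwa [Real.norm_eq_abs, Real.norm_of_nonneg hp.le] at this

open Filter Topology

theorem cmp_weighted (ν : ℝ) (hν : 0 < ν) : ∃ C > 0, ∃ X ≥ (1 : ℝ), ∀ x : ℝ, X ≤ x →
    |ν * ∑' i : ℕ, cmpW ν i * (Real.exp (-x) * x ^ (ν * i + (ν - 1) / 2)) -
      ∑ k ∈ Finset.range 8, cmpCoeff ν k * (x ^ k)⁻¹| ≤ C * (x ^ 8)⁻¹ := by
  obtain ⟨C, hC, hW⟩ := cmpW_bound ν hν
  have hβ : ∀ j : ℕ, 0 < (1 + ν) / 2 + (j : ℝ) := fun j => by positivity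
  choose K hK X hX hML using fun j : ℕ => cmp_ML ν ((1 + ν) / 2 + (j : ℝ)) hν (hβ j)
  have hXs : ∀ j ∈ Finset.range 9, X j ≤ ∑ j ∈ Finset.range 9, X j := fun j hj =>
    Finset.single_le_sum (f := X) (fun i _ => by linarith [hX i]) hj
  refine ⟨∑ j ∈ Finset.range 8, |cmpCoeff ν j| * K j + C * (1 + K 8), ?_,
    ∑ j ∈ Finset.range 9, X j, (hX 0).le.trans (hXs 0 (by simp)), fun x hx => ?_⟩
  · have : 0 ≤ ∑ j ∈ Finset.range 8, |cmpCoeff ν j| * K j :=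
      Finset.sum_nonneg fun j _ => mul_nonneg (abs_nonneg _) (hK j).le
    have := hK 8
    positivity
  have hx1 : 1 ≤ x := ((hX 0).le.trans (hXs 0 (by simp))).trans hx
  have hx0 : 0 < x := by linarith
  have hML' : ∀ j ∈ Finset.range 9,
      |ν * ∑' i : ℕ, cmpH x ((1 + ν) / 2 + (j : ℝ) + ν * i) - 1| ≤ K j * (x ^ 8)⁻¹ :=
    fun j hj => hML j x ((hXs j hj).trans hx)
  have hsum : ∀ j : ℕ, Summable fun i : ℕ => cmpH x ((1 + ν) / 2 + (j : ℝ) + ν * i) :=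
    fun j => cmpH_summable x ν _ hx0 hν (hβ j)
  set M : ℕ → ℝ := fun j => ∑' i : ℕ, cmpH x ((1 + ν) / 2 + (j : ℝ) + ν * i) with hM
  let e : ℕ → ℝ := fun i => Real.exp (-x) * x ^ (ν * i + (ν - 1) / 2)
  have he0 : ∀ i, 0 < e i := fun i => by simp only [e]; positivity
  have he : ∀ i j : ℕ, e i * (Real.Gamma ((1 + ν) / 2 + j + ν * i))⁻¹ =
      (x ^ j)⁻¹ * cmpH x ((1 + ν) / 2 + (j : ℝ) + ν * i) := by
    intro i j
    have : x ^ ((1 + ν) / 2 + (j : ℝ) + ν * i - 1) = x ^ (ν * i + (ν - 1) / 2) * x ^ j := by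
      rw [← Real.rpow_natCast, ← Real.rpow_add hx0]
      congr 1; ring
    rw [cmpH, this]
    simp only [e]
    field_simp
  let r : ℕ → ℝ := fun i => cmpW ν i * e i -
    ∑ j ∈ Finset.range 8, cmpCoeff ν j * (x ^ j)⁻¹ * cmpH x ((1 + ν) / 2 + (j : ℝ) + ν * i)
  have hr : ∀ i, |r i| ≤ C * (x ^ 8)⁻¹ * cmpH x ((1 + ν) / 2 + ((8 : ℕ) : ℝ) + ν * i) := by
    intro i
    have e1 : r i = (cmpW ν i -
        ∑ j ∈ Finset.range 8, cmpCoeff ν j * (Real.Gamma ((1 + ν) / 2 + j + ν * i))⁻¹) * e i := by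
      simp only [r]
      rw [sub_mul, Finset.sum_mul]
      congr 1
      refine Finset.sum_congr rfl fun j _ => ?_
      rw [mul_assoc, ← he]; ring
    rw [e1, abs_mul, abs_of_pos (he0 i), mul_assoc, ← he]
    calc _ ≤ C * (Real.Gamma ((1 + ν) / 2 + 8 + ν * i))⁻¹ * e i :=
          mul_le_mul_of_nonneg_right (hW i) (he0 i).le
      _ = _ := by push_cast; ring
  have hs8 := (hsum 8).mul_left (C * (x ^ 8)⁻¹)
  have hrs : Summable r := Summable.of_norm_bounded hs8 hr
  have hrb : |∑' i, r i| ≤ C * (x ^ 8)⁻¹ * M 8 := by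
    have := tsum_of_norm_bounded (f := r) hs8.hasSum hr
    rwa [tsum_mul_left, Real.norm_eq_abs] at this
  have hss : Summable fun i : ℕ => ∑ j ∈ Finset.range 8, cmpCoeff ν j * (x ^ j)⁻¹ *
      cmpH x ((1 + ν) / 2 + (j : ℝ) + ν * i) :=
    summable_sum fun j _ => (hsum j).mul_left _
  have htot : ∑' i : ℕ, cmpW ν i * e i =
      ∑' i, r i + ∑ j ∈ Finset.range 8, cmpCoeff ν j * (x ^ j)⁻¹ * M j := by
    have h1 : ∑ j ∈ Finset.range 8, cmpCoeff ν j * (x ^ j)⁻¹ * M j =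
        ∑' i : ℕ, ∑ j ∈ Finset.range 8, cmpCoeff ν j * (x ^ j)⁻¹ *
          cmpH x ((1 + ν) / 2 + (j : ℝ) + ν * i) := by
      rw [Summable.tsum_finsetSum fun j _ => (hsum j).mul_left _]
      refine Finset.sum_congr rfl fun j _ => ?_
      rw [tsum_mul_left]
    rw [h1, ← hrs.tsum_add hss]
    refine tsum_congr fun i => ?_
    simp only [r]; ring
  have hx8 : (x ^ 8)⁻¹ ≤ 1 := inv_le_one_of_one_le₀ (one_le_pow₀ hx1)
  change |ν * ∑' i : ℕ, cmpW ν i * e i - _| ≤ _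
  have e2 : ν * ∑' i : ℕ, cmpW ν i * e i - ∑ k ∈ Finset.range 8, cmpCoeff ν k * (x ^ k)⁻¹ =
      ∑ j ∈ Finset.range 8, cmpCoeff ν j * (x ^ j)⁻¹ * (ν * M j - 1) + ν * ∑' i, r i := by
    rw [htot, mul_add, Finset.mul_sum, add_sub_assoc, ← Finset.sum_sub_distrib, add_comm]
    congr 1
    refine Finset.sum_congr rfl fun j _ => ?_
    ring
  rw [e2, add_mul, Finset.sum_mul]
  refine (abs_add_le _ _).trans (add_le_add ((Finset.abs_sum_le_sum_abs _ _).trans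
    (Finset.sum_le_sum fun j hj => ?_)) ?_)
  · have hj' : j ∈ Finset.range 9 := Finset.mem_range.mpr (by have := Finset.mem_range.mp hj; omega)
    have h1 : |(x ^ j)⁻¹| ≤ 1 := by
      rw [abs_of_pos (by positivity)]
      exact inv_le_one_of_one_le₀ (one_le_pow₀ hx1)
    rw [abs_mul, abs_mul]
    calc _ ≤ |cmpCoeff ν j| * 1 * (K j * (x ^ 8)⁻¹) := by
          gcongr
          exact hML' j hj'
      _ = _ := by ring
  · rw [abs_mul, abs_of_pos hν]
    have h8 : |ν * M 8 - 1| ≤ K 8 * (x ^ 8)⁻¹ := hML' 8 (by simp)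
    have h8' : ν * M 8 ≤ 1 + K 8 := by
      have := (abs_le.mp h8).2
      have h9 : K 8 * (x ^ 8)⁻¹ ≤ K 8 := mul_le_of_le_one_right (hK 8).le hx8
      linarith
    calc ν * |∑' i, r i| ≤ ν * (C * (x ^ 8)⁻¹ * M 8) := by gcongr
      _ = C * (x ^ 8)⁻¹ * (ν * M 8) := by ring
      _ ≤ C * (x ^ 8)⁻¹ * (1 + K 8) := by gcongr
      _ = _ := by ring

theorem cmpZ_eight_term_asymptotic (ν : ℝ) (hν : 0 < ν) :
    ∃ C > (0 : ℝ), ∃ Λ > (0 : ℝ), ∀ lam : ℝ, lam ≥ Λ →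
      |cmpZ lam ν * lam ^ ((ν - 1) / (2 * ν)) * (2 * Real.pi) ^ ((ν - 1) / 2) *
          Real.sqrt ν * Real.exp (-(ν * lam ^ (1 / ν))) -
        ∑ k ∈ Finset.range 8, cmpCoeff ν k * ((ν * lam ^ (1 / ν)) ^ k)⁻¹|
        ≤ C * lam ^ (-(8 / ν)) := by
  obtain ⟨C, hC, X, hX, h⟩ := cmp_weighted ν hν
  have hX0 : 0 < X := by linarith
  refine ⟨C * (ν ^ 8)⁻¹, by positivity, (X / ν) ^ ν, by positivity, fun lam hlam => ?_⟩
  have hl0 : 0 < lam := lt_of_lt_of_le (by positivity) hlam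
  have hl1 : 0 < lam ^ (1 / ν) := by positivity
  have hx : X ≤ ν * lam ^ (1 / ν) := by
    have : ((X / ν) ^ ν) ^ (1 / ν) ≤ lam ^ (1 / ν) :=
      Real.rpow_le_rpow (by positivity) hlam (by positivity)
    rw [← Real.rpow_mul (by positivity), mul_one_div_cancel hν.ne', Real.rpow_one,
      div_le_iff₀ hν] at this
    linarith
  have hm := h _ hx
  have e1 : C * ((ν * lam ^ (1 / ν)) ^ 8)⁻¹ = C * (ν ^ 8)⁻¹ * lam ^ (-(8 / ν)) := by
    rw [mul_pow, ← Real.rpow_natCast (lam ^ (1 / ν)), ← Real.rpow_mul hl0.le, mul_inv,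
      ← Real.rpow_neg hl0.le, mul_assoc]
    congr 3
    push_cast; ring
  rw [e1] at hm
  convert hm using 3
  rw [cmpZ, ← tsum_mul_right, ← tsum_mul_right, ← tsum_mul_right, ← tsum_mul_right,
    ← tsum_mul_left]
  refine tsum_congr fun i => ?_
  have e2 : (ν * lam ^ (1 / ν)) ^ (ν * i + (ν - 1) / 2) =
      ν ^ (ν * i + (ν - 1) / 2) * (lam ^ i * lam ^ ((ν - 1) / (2 * ν))) := by
    rw [Real.mul_rpow hν.le hl1.le, ← Real.rpow_mul hl0.le, ← Real.rpow_natCast lam i,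
      ← Real.rpow_add hl0]
    congr 2
    field_simp
  have e3 : Real.sqrt ν = ν * (ν ^ (-(ν * ((i : ℝ) + 1 / 2))) * ν ^ (ν * i + (ν - 1) / 2)) := by
    rw [Real.sqrt_eq_rpow, ← Real.rpow_add hν]
    nth_rewrite 2 [← Real.rpow_one ν]
    rw [← Real.rpow_add hν]
    congr 1; ring
  rw [e2, e3, cmpW]
  ring
end

section
/- Let h : ℝ → ℝ be an even function (h(x) = h(−x) for all x ∈ ℝ) that is twice differentiable with first and second derivatives bounded on ℝ. Then as α → ∞, E[h((X_α − α)/√α)] = E[h(Z)] + O(α^(−1)), where X_α has the Poisson distribution with mean α and Z is standard normal. Precisely: there exist constants C > 0 and A > 0 (depending only on h) such that for all α ≥ A, |Σ_{n=0}^∞ e^(−α)·α^n/n! · h((n−α)/√α) − ∫_ℝ h(z) dγ(z)| ≤ C·α^(−1), where γ is the standard Gaussian measure N(0,1) on ℝ. -/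
open scoped BigOperators
open Filter Topology MeasureTheory

lemma gauss_deriv (x : ℝ) : HasDerivAt (fun x : ℝ => Real.exp (-x ^ 2 / 2))
    (-x * Real.exp (-x ^ 2 / 2)) x := by
  have h1 : HasDerivAt (fun x : ℝ => -x ^ 2 / 2) (-x) x := by
    have := ((hasDerivAt_pow 2 x).neg.div_const 2)
    refine this.congr_deriv ?_
    simp; ring
  refine h1.exp.congr_deriv ?_
  ring

lemma barrier_one (g u : ℝ → ℝ) (hg : ∀ x, HasDerivAt g (x * g x + u x) x)
    (hlim : Tendsto (fun x => g x * Real.exp (-x ^ 2 / 2)) atTop (𝓝 0))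
    (x0 c : ℝ) (hu : ∀ x, x0 ≤ x → -(c * x) ≤ u x) : g x0 ≤ c := by
  have hE : Tendsto (fun x : ℝ => Real.exp (-x ^ 2 / 2)) atTop (𝓝 0) := by
    apply Real.tendsto_exp_atBot.comp
    have : Tendsto (fun x : ℝ => x ^ 2 / 2) atTop atTop :=
      (tendsto_pow_atTop two_ne_zero).atTop_div_const (by norm_num)
    refine (tendsto_neg_atTop_atBot.comp this).congr fun x => ?_
    simp [neg_div]
  have hd : ∀ x, HasDerivAt (fun x => (g x - c) * Real.exp (-x ^ 2 / 2))
      ((u x + c * x) * Real.exp (-x ^ 2 / 2)) x := fun x => by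
    refine (((hg x).sub_const c).mul (gauss_deriv x)).congr_deriv ?_
    ring
  have hm : MonotoneOn (fun x => (g x - c) * Real.exp (-x ^ 2 / 2)) (Set.Ici x0) := by
    apply monotoneOn_of_deriv_nonneg (convex_Ici x0)
    · exact fun x _ => (hd x).continuousAt.continuousWithinAt
    · exact fun x _ => (hd x).differentiableAt.differentiableWithinAt
    · intro x hx
      rw [(hd x).deriv]
      rw [interior_Ici] at hx
      have := hu x (le_of_lt hx)
      exact mul_nonneg (by linarith) (Real.exp_pos _).le
  have hl : Tendsto (fun x => (g x - c) * Real.exp (-x ^ 2 / 2)) atTop (𝓝 0) := by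
    have := hlim.sub (hE.const_mul c)
    simp only [mul_zero, sub_zero] at this
    refine this.congr fun x => by ring
  have h0 : (g x0 - c) * Real.exp (-x0 ^ 2 / 2) ≤ 0 := by
    refine ge_of_tendsto hl ?_
    filter_upwards [eventually_ge_atTop x0] with x hx
    exact hm (Set.self_mem_Ici) hx hx
  have := nonpos_of_mul_nonpos_left h0 (Real.exp_pos _)
  linarith

lemma barrier (g u : ℝ → ℝ) (hg : ∀ x, HasDerivAt g (x * g x + u x) x)
    (hlim : Tendsto (fun x => g x * Real.exp (-x ^ 2 / 2)) atTop (𝓝 0))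
    (x0 c : ℝ) (hu : ∀ x, x0 ≤ x → |u x| ≤ c * x) : |g x0| ≤ c := by
  rw [abs_le]
  constructor
  · have := barrier_one (fun x => - g x) (fun x => - u x) (fun x => by
      refine (hg x).neg.congr_deriv ?_; ring) (by
      have := hlim.neg
      simp only [neg_zero] at this
      exact this.congr fun x => by ring) x0 c (fun x hx => by
        have := (abs_le.1 (hu x hx)).2
        linarith)
    linarith
  · exact barrier_one g u hg hlim x0 c fun x hx => (abs_le.1 (hu x hx)).1

lemma refl_ode (g u : ℝ → ℝ) (hg : ∀ x, HasDerivAt g (x * g x + u x) x) (x : ℝ) :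
    HasDerivAt (fun x => g (-x)) (x * g (-x) + -u (-x)) x := by
  have := (hg (-x)).comp x (hasDerivAt_neg x)
  refine this.congr_deriv ?_; ring

lemma refl_lim (g : ℝ → ℝ)
    (hlim : Tendsto (fun x => g x * Real.exp (-x ^ 2 / 2)) atBot (𝓝 0)) :
    Tendsto (fun x => g (-x) * Real.exp (-x ^ 2 / 2)) atTop (𝓝 0) := by
  refine (hlim.comp tendsto_neg_atTop_atBot).congr fun x => by simp

lemma barrier' (g u : ℝ → ℝ) (hg : ∀ x, HasDerivAt g (x * g x + u x) x)
    (hlim : Tendsto (fun x => g x * Real.exp (-x ^ 2 / 2)) atTop (𝓝 0))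
    (hlim' : Tendsto (fun x => g x * Real.exp (-x ^ 2 / 2)) atBot (𝓝 0))
    (x0 c : ℝ) (hu : ∀ x, |x0| ≤ |x| → |u x| ≤ c * |x|) : |g x0| ≤ c := by
  rcases le_total 0 x0 with h0 | h0
  · refine barrier g u hg hlim x0 c fun x hx => ?_
    have := hu x (by rw [abs_of_nonneg h0, abs_of_nonneg (h0.trans hx)]; exact hx)
    rwa [abs_of_nonneg (h0.trans hx)] at this
  · have := barrier _ _ (refl_ode g u hg) (refl_lim g hlim') (-x0) c fun x hx => ?_
    · simpa using this
    have hx0 : 0 ≤ x := by linarith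
    have := hu (-x) (by rw [abs_of_nonpos h0, abs_neg, abs_of_nonneg hx0]; exact hx)
    rwa [abs_neg x, abs_of_nonneg hx0, ← abs_neg (u (-x))] at this

lemma bdd_of_cont (g : ℝ → ℝ) (hg : Continuous g) (c : ℝ) (hc : ∀ x, 1 ≤ |x| → |g x| ≤ c) :
    ∃ B, ∀ x, |g x| ≤ B := by
  obtain ⟨C, hC⟩ := (isCompact_Icc (a := (-1:ℝ)) (b := 1)).exists_bound_of_continuousOn
    hg.continuousOn
  refine ⟨max C c, fun x => ?_⟩
  rcases le_total 1 |x| with h | h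
  · exact (hc x h).trans (le_max_right _ _)
  · exact (hC x (abs_le.1 h)).trans (le_max_left _ _)

lemma lin_growth (v v' : ℝ → ℝ) (hv : ∀ x, HasDerivAt v (v' x) x) (K : ℝ)
    (hK : ∀ x, |v' x| ≤ K) (x : ℝ) : |v x| ≤ |v 0| + K * |x| := by
  have := convex_univ.norm_image_sub_le_of_norm_hasDerivWithin_le
    (fun x _ => (hv x).hasDerivWithinAt) (fun x _ => hK x) (Set.mem_univ (0:ℝ)) (Set.mem_univ x)
  simp only [Real.norm_eq_abs, sub_zero] at this
  have h2 := abs_add_le (v x - v 0) (v 0)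
  simp only [sub_add_cancel] at h2
  linarith

lemma lin_gauss_int (a b : ℝ) : Integrable (fun x : ℝ => (a + b * |x|) * Real.exp (-x ^ 2 / 2)) := by
  have h1 : Integrable (fun x : ℝ => Real.exp (-(1/2) * x ^ 2)) :=
    integrable_exp_neg_mul_sq (by norm_num)
  have h2 : Integrable (fun x : ℝ => x * Real.exp (-(1/2) * x ^ 2)) :=
    integrable_mul_exp_neg_mul_sq (by norm_num)
  refine ((h1.const_mul a).add (h2.abs.const_mul b)).congr (ae_of_all _ fun x => ?_)
  simp only [Pi.add_apply, abs_mul, Real.abs_exp]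
  rw [show -(1/2) * x^2 = -x^2/2 by ring]; ring

lemma lin_gauss_lim (a b : ℝ) (l : Filter ℝ) (hl : Tendsto (fun x : ℝ => |x|) l atTop) :
    Tendsto (fun x : ℝ => (a + b * |x|) * Real.exp (-x ^ 2 / 2)) l (𝓝 0) := by
  have key : Tendsto (fun y : ℝ => (a + b * y) * Real.exp (-y ^ 2 / 2)) atTop (𝓝 0) := by
    have h1 := (Real.tendsto_pow_mul_exp_neg_atTop_nhds_zero 0).const_mul (|a| * Real.exp 1)
    have h2 := (Real.tendsto_pow_mul_exp_neg_atTop_nhds_zero 1).const_mul (|b| * Real.exp 1)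
    have h3 := h1.add h2
    simp only [mul_zero, add_zero, pow_zero, pow_one, one_mul] at h3
    refine squeeze_zero_norm' ?_ h3
    filter_upwards [eventually_ge_atTop 0] with y hy
    rw [norm_mul, Real.norm_eq_abs, Real.norm_eq_abs, Real.abs_exp]
    have e1 : Real.exp (-y ^ 2 / 2) ≤ Real.exp 1 * Real.exp (-y) := by
      rw [← Real.exp_add]
      apply Real.exp_le_exp.2
      nlinarith [sq_nonneg (y - 1)]
    have e2 : |a + b * y| ≤ |a| + |b| * y := by
      refine (abs_add_le _ _).trans ?_
      rw [abs_mul, abs_of_nonneg hy]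
    calc _ ≤ (|a| + |b| * y) * (Real.exp 1 * Real.exp (-y)) :=
          mul_le_mul e2 e1 (Real.exp_pos _).le (by positivity)
      _ = _ := by ring
  refine (key.comp hl).congr fun x => by simp

lemma bdd_gauss_lim (g : ℝ → ℝ) (a b : ℝ) (hg : ∀ x, |g x| ≤ a + b * |x|)
    (l : Filter ℝ) (hl : Tendsto (fun x : ℝ => |x|) l atTop) :
    Tendsto (fun x : ℝ => g x * Real.exp (-x ^ 2 / 2)) l (𝓝 0) := by
  refine squeeze_zero_norm (fun x => ?_) (lin_gauss_lim a b l hl)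
  rw [norm_mul, Real.norm_eq_abs, Real.norm_eq_abs, Real.abs_exp]
  exact mul_le_mul_of_nonneg_right (hg x) (Real.exp_pos _).le

lemma reg (f v v' : ℝ → ℝ) (hf : ∀ x, HasDerivAt f (x * f x + v x) x)
    (hv : ∀ x, HasDerivAt v (v' x) x) (K : ℝ) (hK : ∀ x, |v' x| ≤ K)
    (hlim : Tendsto (fun x => f x * Real.exp (-x ^ 2 / 2)) atTop (𝓝 0))
    (hlim' : Tendsto (fun x => f x * Real.exp (-x ^ 2 / 2)) atBot (𝓝 0)) :
    (∀ x, HasDerivAt (fun x => x * f x + v x) (x * (x * f x + v x) + (f x + v' x)) x) ∧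
    (∃ B, ∀ x, |f x| ≤ B) ∧ (∃ B, ∀ x, |x * f x + v x| ≤ B) ∧
    ∃ B, ∀ x, |x * (x * f x + v x) + (f x + v' x)| ≤ B := by
  have hd : ∀ x, HasDerivAt (fun x => x * f x + v x) (x * (x * f x + v x) + (f x + v' x)) x := by
    intro x
    refine (((hasDerivAt_id x).mul (hf x)).add (hv x)).congr_deriv ?_
    simp; ring
  have hvl := lin_growth v v' hv K hK
  have hK0 : 0 ≤ K := (abs_nonneg _).trans (hK 0)
  obtain ⟨B, hB⟩ : ∃ B, ∀ x, |f x| ≤ B := by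
    refine bdd_of_cont f (continuous_iff_continuousAt.2 fun x => (hf x).continuousAt)
      (|v 0| + K) fun x hx => ?_
    refine barrier' f v hf hlim hlim' x _ fun y hy => ?_
    have := hvl y
    have h1 : 1 ≤ |y| := hx.trans hy
    nlinarith [abs_nonneg (v 0)]
  have hB0 : 0 ≤ B := (abs_nonneg _).trans (hB 0)
  have hlin : ∀ x, |x * f x + v x| ≤ |v 0| + (B + K) * |x| := fun x => by
    refine (abs_add_le _ _).trans ?_
    rw [abs_mul]
    nlinarith [hB x, hvl x, abs_nonneg x]
  have L1 := bdd_gauss_lim _ _ _ hlin atTop tendsto_abs_atTop_atTop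
  have L2 := bdd_gauss_lim _ _ _ hlin atBot tendsto_abs_atBot_atTop
  have hu : ∀ x, |f x + v' x| ≤ B + K := fun x =>
    (abs_add_le _ _).trans (add_le_add (hB x) (hK x))
  have hx : ∀ x, |x| * |x * f x + v x| ≤ B + K := by
    intro x
    rcases eq_or_ne x 0 with rfl | h0
    · simp; positivity
    have hp := abs_pos.2 h0
    have := barrier' (fun x => x * f x + v x) (fun x => f x + v' x) hd L1 L2 x ((B + K) / |x|)
      fun y hy => ?_
    · rw [le_div_iff₀ hp] at this
      linarith
    · refine (hu y).trans ?_
      rw [div_mul_eq_mul_div, le_div_iff₀ hp]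
      exact mul_le_mul_of_nonneg_left hy (by positivity)
  refine ⟨hd, ⟨B, hB⟩, ?_, 2 * (B + K), fun x => ?_⟩
  · refine bdd_of_cont _ (continuous_iff_continuousAt.2 fun x => (hd x).continuousAt)
      (B + K) fun x h1 => ?_
    have := hx x
    nlinarith [abs_nonneg (x * f x + v x)]
  · refine (abs_add_le _ _).trans ?_
    rw [abs_mul]
    linarith [hx x, hu x]

lemma gauss_integrable (v v' : ℝ → ℝ) (hv : ∀ x, HasDerivAt v (v' x) x) (K : ℝ)
    (hK : ∀ x, |v' x| ≤ K) : Integrable (fun x => v x * Real.exp (-x ^ 2 / 2)) := by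
  have hc : Continuous v := continuous_iff_continuousAt.2 fun x => (hv x).continuousAt
  refine (lin_gauss_int (|v 0|) K).mono' (by fun_prop) (ae_of_all _ fun x => ?_)
  rw [norm_mul, Real.norm_eq_abs, Real.norm_eq_abs, Real.abs_exp]
  exact mul_le_mul_of_nonneg_right (lin_growth v v' hv K hK x) (Real.exp_pos _).le

lemma stein_exists (v v' : ℝ → ℝ) (hv : ∀ x, HasDerivAt v (v' x) x) (K : ℝ)
    (hK : ∀ x, |v' x| ≤ K) (h0 : ∫ x, v x * Real.exp (-x ^ 2 / 2) = 0) :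
    ∃ f : ℝ → ℝ, (∀ x, HasDerivAt f (x * f x + v x) x) ∧
    Tendsto (fun x => f x * Real.exp (-x ^ 2 / 2)) atTop (𝓝 0) ∧
    Tendsto (fun x => f x * Real.exp (-x ^ 2 / 2)) atBot (𝓝 0) := by
  have hc : Continuous v := continuous_iff_continuousAt.2 fun x => (hv x).continuousAt
  set w : ℝ → ℝ := fun x => v x * Real.exp (-x ^ 2 / 2) with hw
  have hwc : Continuous w := by fun_prop
  have hwi : Integrable w := gauss_integrable v v' hv K hK
  have hF : ∀ x, HasDerivAt (fun x => (∫ t in Set.Iic (0:ℝ), w t) + ∫ t in (0:ℝ)..x, w t) (w x) x :=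
    fun x => (hwc.integral_hasStrictDerivAt 0 x).hasDerivAt.const_add _
  have hcancel : ∀ x : ℝ, Real.exp (x ^ 2 / 2) * Real.exp (-x ^ 2 / 2) = 1 := fun x => by
    rw [← Real.exp_add, ← Real.exp_zero]; congr 1; ring
  have hex : ∀ x : ℝ, HasDerivAt (fun x : ℝ => Real.exp (x ^ 2 / 2)) (x * Real.exp (x ^ 2 / 2)) x := by
    intro x
    have h1 : HasDerivAt (fun x : ℝ => x ^ 2 / 2) x x := by
      refine ((hasDerivAt_pow 2 x).div_const 2).congr_deriv ?_
      simp
    refine h1.exp.congr_deriv ?_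
    ring
  have hred : ∀ x, Real.exp (x ^ 2 / 2) * ((∫ t in Set.Iic (0:ℝ), w t) + ∫ t in (0:ℝ)..x, w t)
      * Real.exp (-x ^ 2 / 2) = (∫ t in Set.Iic (0:ℝ), w t) + ∫ t in (0:ℝ)..x, w t := fun x => by
    rw [mul_right_comm, hcancel, one_mul]
  refine ⟨fun x => Real.exp (x ^ 2 / 2) *
    ((∫ t in Set.Iic (0:ℝ), w t) + ∫ t in (0:ℝ)..x, w t), fun x => ?_, ?_, ?_⟩
  · refine ((hex x).mul (hF x)).congr_deriv ?_
    have := hcancel x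
    have e : w x = v x * Real.exp (-x ^ 2 / 2) := rfl
    rw [e]
    linear_combination (v x) * this
  · simp only [hred]
    have h1 := intervalIntegral_tendsto_integral_Ioi 0 hwi.integrableOn (tendsto_id (α := ℝ) (x := atTop))
    have h2 := intervalIntegral.integral_Iic_add_Ioi (b := (0:ℝ)) hwi.integrableOn hwi.integrableOn
    rw [h0] at h2
    have h3 := h1.const_add (∫ t in Set.Iic (0:ℝ), w t)
    rw [h2] at h3
    exact h3
  · simp only [hred]
    have h1 := intervalIntegral_tendsto_integral_Iic 0 hwi.integrableOn (tendsto_id (α := ℝ) (x := atBot))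
    have h2 := (h1.neg).const_add (∫ t in Set.Iic (0:ℝ), w t)
    rw [add_neg_cancel] at h2
    refine h2.congr fun x => ?_
    rw [intervalIntegral.integral_symm x 0]; simp

lemma pois_hasSum (α : ℝ) :
    HasSum (fun n : ℕ => Real.exp (-α) * α ^ n / (n.factorial : ℝ)) 1 := by
  have h := (NormedSpace.expSeries_div_hasSum_exp (𝔸 := ℝ) α).mul_left (Real.exp (-α))
  rw [← Real.exp_eq_exp_ℝ, ← Real.exp_add, neg_add_cancel, Real.exp_zero] at h
  exact h.congr_fun (fun n => by ring) 

lemma pois_nonneg (α : ℝ) (hα : 0 < α) (n : ℕ) :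
    0 ≤ Real.exp (-α) * α ^ n / (n.factorial : ℝ) := by positivity

lemma pois_succ (α : ℝ) (n : ℕ) :
    Real.exp (-α) * α ^ (n + 1) / ((n + 1).factorial : ℝ) * ((n + 1 : ℕ) : ℝ) =
      α * (Real.exp (-α) * α ^ n / (n.factorial : ℝ)) := by
  rw [Nat.factorial_succ]
  have : (n.factorial : ℝ) ≠ 0 := by positivity
  have : ((n + 1 : ℕ) : ℝ) ≠ 0 := by positivity
  push_cast at *
  field_simp
  ring

lemma pois_summable (α : ℝ) (hα : 0 < α) (F : ℕ → ℝ) (B : ℝ) (hF : ∀ n, |F n| ≤ B) :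
    Summable (fun n : ℕ => Real.exp (-α) * α ^ n / (n.factorial : ℝ) * F n) := by
  refine Summable.of_norm_bounded (((pois_hasSum α).summable).mul_right B) fun n => ?_
  rw [norm_mul, Real.norm_eq_abs, Real.norm_eq_abs, abs_of_nonneg (pois_nonneg α hα n)]
  exact mul_le_mul_of_nonneg_left (hF n) (pois_nonneg α hα n)

lemma pois_bound (α : ℝ) (hα : 0 < α) (F : ℕ → ℝ) (B : ℝ) (hF : ∀ n, |F n| ≤ B) :
    |∑' n : ℕ, Real.exp (-α) * α ^ n / (n.factorial : ℝ) * F n| ≤ B := by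
  have := (pois_hasSum α).mul_right B
  rw [one_mul] at this
  rw [← Real.norm_eq_abs]
  refine tsum_of_norm_bounded this fun n => ?_
  rw [norm_mul, Real.norm_eq_abs, Real.norm_eq_abs, abs_of_nonneg (pois_nonneg α hα n)]
  exact mul_le_mul_of_nonneg_left (hF n) (pois_nonneg α hα n)

lemma pois_stein (α : ℝ) (hα : 0 < α) (F : ℕ → ℝ) (B : ℝ) (hF : ∀ n, |F n| ≤ B) :
    HasSum (fun n : ℕ => Real.exp (-α) * α ^ n / (n.factorial : ℝ) * (n * F n))
      (α * ∑' n : ℕ, Real.exp (-α) * α ^ n / (n.factorial : ℝ) * F (n + 1)) := by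
  have h := (pois_summable α hα (fun n => F (n + 1)) B fun n => hF (n + 1)).hasSum.mul_left α
  have h2 : HasSum (fun n : ℕ => Real.exp (-α) * α ^ (n + 1) / ((n + 1).factorial : ℝ) *
      (((n + 1 : ℕ) : ℝ) * F (n + 1)))
      (α * ∑' n : ℕ, Real.exp (-α) * α ^ n / (n.factorial : ℝ) * F (n + 1)) := by
    refine h.congr_fun fun n => ?_
    rw [← mul_assoc, ← mul_assoc, pois_succ]
  have h3 := (hasSum_nat_add_iff (f := fun n : ℕ => Real.exp (-α) * α ^ n / (n.factorial : ℝ) *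
    (n * F n)) 1).1 h2
  simpa using h3

lemma stein_pois (α : ℝ) (hα : 0 < α) (f v : ℝ → ℝ) (B B1 : ℝ) (hB : ∀ x, |f x| ≤ B)
    (hB1 : ∀ x, |x * f x + v x| ≤ B1) :
    HasSum (fun n : ℕ => Real.exp (-α) * α ^ n / (n.factorial : ℝ) * v ((n - α) / Real.sqrt α))
    (∑' n : ℕ, Real.exp (-α) * α ^ n / (n.factorial : ℝ) *
      (((n - α) / Real.sqrt α) * f ((n - α) / Real.sqrt α) + v ((n - α) / Real.sqrt α) -
        Real.sqrt α * (f ((n - α) / Real.sqrt α + 1 / Real.sqrt α) - f ((n - α) / Real.sqrt α)))) := by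
  set r := Real.sqrt α with hr
  have hr0 : 0 < r := Real.sqrt_pos.2 hα
  have hr2 : r * r = α := Real.mul_self_sqrt hα.le
  have H1 := (pois_summable α hα (fun n => ((n - α) / r) * f ((n - α) / r) + v ((n - α) / r)) B1
    fun n => hB1 _).hasSum
  have H2 := pois_stein α hα (fun n => f ((n - α) / r)) B fun n => hB _
  have H3 := (pois_summable α hα (fun n => f ((n - α) / r + 1 / r)) B fun n => hB _).hasSum
  have H4 := (pois_summable α hα (fun n => f ((n - α) / r)) B fun n => hB _).hasSum
  have e : ∀ n : ℕ, (((n + 1 : ℕ) : ℝ) - α) / r = (n - α) / r + 1 / r := fun n => by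
    push_cast; ring
  simp only [e] at H2
  have R := H1.sub ((H3.sub H4).mul_left r)
  have L := (H1.sub (H2.mul_left (1 / r))).add (H4.mul_left r)
  have R' := R.congr_fun (g := fun n : ℕ => Real.exp (-α) * α ^ n / (n.factorial : ℝ) *
      (((n - α) / r) * f ((n - α) / r) + v ((n - α) / r) -
        r * (f ((n - α) / r + 1 / r) - f ((n - α) / r)))) (fun n => by ring)
  rw [R'.tsum_eq]
  have L' := L.congr_fun (g := fun n : ℕ => Real.exp (-α) * α ^ n / (n.factorial : ℝ) *
      v ((n - α) / r)) (fun n => by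
    have : (n - α) / r = n * (1 / r) - r := by
      rw [← hr2]; field_simp
    generalize f ((n - α) / r) = y
    generalize v ((n - α) / r) = z
    rw [this]
    ring)
  rw [← mul_assoc (1 / r) α, show 1 / r * α = r by rw [← hr2]; field_simp] at L'
  rw [mul_sub, ← sub_add]
  exact L'

lemma mvt_bound (k k' : ℝ → ℝ) (hk : ∀ t, HasDerivAt k (k' t) t) (d C : ℝ)
    (hC : ∀ t, 0 ≤ t → t ≤ d → |k' t| ≤ C) (t : ℝ) (h0 : 0 ≤ t) (hd : t ≤ d) :
    |k t - k 0| ≤ C * t := by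
  have := (convex_Icc 0 d).norm_image_sub_le_of_norm_hasDerivWithin_le
    (fun x _ => (hk x).hasDerivWithinAt) (fun x hx => hC x hx.1 hx.2)
    (Set.left_mem_Icc.2 (h0.trans hd)) (Set.mem_Icc.2 ⟨h0, hd⟩)
  simpa [abs_of_nonneg h0] using this

lemma taylor_one (f f1 f2 : ℝ → ℝ) (h1 : ∀ x, HasDerivAt f (f1 x) x)
    (h2 : ∀ x, HasDerivAt f1 (f2 x) x) (D : ℝ) (hD : ∀ x, |f2 x| ≤ D) (w d : ℝ) (hd : 0 ≤ d) :
    |f (w + d) - f w - d * f1 w| ≤ D * d * d := by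
  have k1 : ∀ t, HasDerivAt (fun t => f (w + t) - t * f1 w) (f1 (w + t) - f1 w) t := fun t => by
    refine (((h1 (w + t)).comp_const_add w t).sub ((hasDerivAt_id t).mul_const (f1 w))).congr_deriv ?_
    simp
  have k2 : ∀ t, HasDerivAt (fun t => f1 (w + t)) (f2 (w + t)) t := fun t =>
    (h2 (w + t)).comp_const_add w t
  have hD0 : 0 ≤ D := (abs_nonneg _).trans (hD 0)
  have b1 : ∀ t, 0 ≤ t → t ≤ d → |f1 (w + t) - f1 w| ≤ D * d := fun t h0 ht => by
    have := mvt_bound _ _ k2 d D (fun t _ _ => hD _) t h0 ht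
    simp only [add_zero] at this
    exact this.trans (mul_le_mul_of_nonneg_left ht hD0)
  have := mvt_bound _ _ k1 d _ b1 d hd le_rfl
  simp only [add_zero, zero_mul, sub_zero] at this
  rwa [sub_right_comm] at this

lemma taylor_two (f f1 f2 f3 : ℝ → ℝ) (h1 : ∀ x, HasDerivAt f (f1 x) x)
    (h2 : ∀ x, HasDerivAt f1 (f2 x) x) (h3 : ∀ x, HasDerivAt f2 (f3 x) x)
    (D : ℝ) (hD : ∀ x, |f3 x| ≤ D) (w d : ℝ) (hd : 0 ≤ d) :
    |f (w + d) - f w - d * f1 w - d ^ 2 / 2 * f2 w| ≤ D * d * d * d := by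
  have k1 : ∀ t, HasDerivAt (fun t => f (w + t) - t * f1 w - t ^ 2 / 2 * f2 w)
      (f1 (w + t) - f1 w - t * f2 w) t := fun t => by
    refine ((((h1 (w + t)).comp_const_add w t).sub ((hasDerivAt_id t).mul_const (f1 w))).sub
      (((hasDerivAt_pow 2 t).div_const 2).mul_const (f2 w))).congr_deriv ?_
    simp
  have hD0 : 0 ≤ D := (abs_nonneg _).trans (hD 0)
  have b1 : ∀ t, 0 ≤ t → t ≤ d → |f1 (w + t) - f1 w - t * f2 w| ≤ D * d * d := fun t h0 ht => by
    refine (taylor_one f1 f2 f3 h2 h3 D hD w t h0).trans ?_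
    gcongr
  have := mvt_bound _ _ k1 d _ b1 d hd le_rfl
  simp only [add_zero, zero_mul, sub_zero] at this
  convert this using 2
  ring

lemma gauss_total : ∫ z : ℝ, Real.exp (-z ^ 2 / 2) = Real.sqrt (2 * Real.pi) := by
  have := integral_gaussian (1 / 2)
  rw [show Real.pi / (1 / 2) = 2 * Real.pi by ring] at this
  rw [← this]
  congr 1; ext z; congr 1; ring

lemma gauss_const : (2 * Real.pi) ^ (-(1 : ℝ) / 2) * Real.sqrt (2 * Real.pi) = 1 := by
  have hp : 0 < 2 * Real.pi := by positivity
  rw [Real.sqrt_eq_rpow, ← Real.rpow_add hp]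
  norm_num

theorem poisson_normal_approx_order_one (h : ℝ → ℝ)
    (heven : ∀ x : ℝ, h x = h (-x))
    (hdiff : Differentiable ℝ h) (hdiff2 : Differentiable ℝ (deriv h))
    (hbdd1 : ∃ M : ℝ, ∀ x : ℝ, |deriv h x| ≤ M)
    (hbdd2 : ∃ M : ℝ, ∀ x : ℝ, |deriv (deriv h) x| ≤ M) :
    ∃ C > (0 : ℝ), ∃ A > (0 : ℝ), ∀ α : ℝ, α ≥ A →
      |(∑' n : ℕ, Real.exp (-α) * α ^ n / (n.factorial : ℝ) *
          h (((n : ℝ) - α) / Real.sqrt α)) -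
        ∫ z : ℝ, h z * ((2 * Real.pi) ^ (-(1 : ℝ) / 2) * Real.exp (-z ^ 2 / 2))|
        ≤ C * α⁻¹ := by
  obtain ⟨M1, hM1⟩ := hbdd1
  obtain ⟨M2, hM2⟩ := hbdd2
  set m := ∫ z : ℝ, h z * ((2 * Real.pi) ^ (-(1 : ℝ) / 2) * Real.exp (-z ^ 2 / 2)) with hm
  have hh : ∀ x, HasDerivAt h (deriv h x) x := fun x => (hdiff x).hasDerivAt
  have hh2 : ∀ x, HasDerivAt (deriv h) (deriv (deriv h) x) x := fun x => (hdiff2 x).hasDerivAt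
  have hv : ∀ x, HasDerivAt (fun x => h x - m) (deriv h x) x := fun x => (hh x).sub_const m
  have hInteg := gauss_integrable h _ hh M1 hM1
  have hm' : m = (2 * Real.pi) ^ (-(1 : ℝ) / 2) * ∫ z : ℝ, h z * Real.exp (-z ^ 2 / 2) := by
    rw [hm, ← integral_const_mul]
    congr 1; ext z; ring
  have hone : Integrable (fun x : ℝ => Real.exp (-x ^ 2 / 2)) := by
    simpa using lin_gauss_int 1 0
  have h0 : ∫ x, (h x - m) * Real.exp (-x ^ 2 / 2) = 0 := by
    simp only [sub_mul]
    rw [integral_sub hInteg (hone.const_mul m), integral_const_mul, gauss_total, hm']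
    linear_combination (-∫ z : ℝ, h z * Real.exp (-z ^ 2 / 2)) * gauss_const
  obtain ⟨f, hf, ft, fb⟩ := stein_exists _ _ hv M1 hM1 h0
  obtain ⟨hf1, ⟨B0, hB0⟩, ⟨B1, hB1⟩, ⟨B2, hB2⟩⟩ := reg f _ _ hf hv M1 hM1 ft fb
  set f1 : ℝ → ℝ := fun x => x * f x + (h x - m) with hf1def
  have hu : ∀ x, HasDerivAt (fun x => f x + deriv h x) (f1 x + deriv (deriv h) x) x :=
    fun x => (hf x).add (hh2 x)
  have hlin : ∀ x, |f1 x| ≤ B1 + 0 * |x| := fun x => by simpa using hB1 x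
  obtain ⟨hf2, -, -, ⟨B3, hB3⟩⟩ := reg f1 _ _ hf1 hu (B1 + M2)
    (fun x => (abs_add_le _ _).trans (add_le_add (hB1 x) (hM2 x)))
    (bdd_gauss_lim _ _ _ hlin atTop tendsto_abs_atTop_atTop)
    (bdd_gauss_lim _ _ _ hlin atBot tendsto_abs_atBot_atTop)
  set f2 : ℝ → ℝ := fun x => x * f1 x + (f x + deriv h x) with hf2def
  set f3 : ℝ → ℝ := fun x => x * f2 x + (f1 x + (f1 x + deriv (deriv h) x)) with hf3def
  -- oddness
  have hodd : ∀ x, f (-x) = - f x := by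
    intro x
    have hs : ∀ x, HasDerivAt (fun x => f x + f (-x)) (x * (f x + f (-x)) + 0) x := fun x => by
      refine ((hf x).add (refl_ode f _ hf x)).congr_deriv ?_
      rw [← heven x]; ring
    have lt : Tendsto (fun x => (f x + f (-x)) * Real.exp (-x ^ 2 / 2)) atTop (𝓝 0) := by
      have := ft.add (refl_lim f fb)
      rw [add_zero] at this
      exact this.congr fun x => by ring
    have key : ∀ x, |f x + f (-x)| ≤ 0 := fun x =>
      barrier (fun x => f x + f (-x)) (fun _ => 0) hs lt x 0 (fun y _ => by simp)
    have := abs_nonpos_iff.1 (key x)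
    linarith
  have hdodd : ∀ x, deriv h (-x) = - deriv h x := by
    intro x
    have e : (fun x => h (-x)) = h := funext fun x => (heven x).symm
    have := deriv_comp_neg h x
    rw [e] at this
    linarith
  have hf2odd : ∀ x, f2 (-x) = - f2 x := by
    intro x
    simp only [hf2def, hf1def, hodd, hdodd, ← heven x]
    ring
  have hz : ∫ x, f2 x * Real.exp (-x ^ 2 / 2) = 0 := by
    have := integral_neg_eq_self (fun x => f2 x * Real.exp (-x ^ 2 / 2)) volume
    simp only [hf2odd, neg_sq, neg_mul, integral_neg] at this
    linarith
  obtain ⟨g, hg, gt, gb⟩ := stein_exists _ _ hf2 B3 hB3 hz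
  obtain ⟨hg1, ⟨G0, hG0⟩, ⟨G1, hG1⟩, ⟨G2, hG2⟩⟩ := reg g _ _ hg hf2 B3 hB3 gt gb
  have hG2n : 0 ≤ G2 := (abs_nonneg _).trans (hG2 0)
  have hB3n : 0 ≤ B3 := (abs_nonneg _).trans (hB3 0)
  refine ⟨B3 + G2 + 1, by positivity, 1, one_pos, fun α hα => ?_⟩
  have hα0 : 0 < α := lt_of_lt_of_le one_pos hα
  have S1 := stein_pois α hα0 f _ B0 B1 hB0 hB1
  have S2 := stein_pois α hα0 g _ G0 G1 hG0 hG1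
  set r := Real.sqrt α with hr
  have hr0 : 0 < r := Real.sqrt_pos.2 hα0
  have hr2 : r * r = α := Real.mul_self_sqrt hα0.le
  have T2 : |∑' n : ℕ, Real.exp (-α) * α ^ n / (n.factorial : ℝ) * f2 ((n - α) / r)| ≤ G2 * (1 / r) := by
    rw [S2.tsum_eq]
    refine pois_bound α hα0 _ _ fun n => ?_
    have := taylor_one g _ _ hg hg1 G2 hG2 ((n - α) / r) (1 / r) (by positivity)
    generalize g ((n - α) / r + 1 / r) = a at *
    generalize (n - α) / r * g ((n - α) / r) + f2 ((n - α) / r) = b at *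
    generalize g ((n - α) / r) = c at *
    rw [show b - r * (a - c) = -(r * (a - c - 1 / r * b)) by field_simp; ring, abs_neg, abs_mul,
      abs_of_pos hr0]
    calc _ ≤ r * (G2 * (1 / r) * (1 / r)) := mul_le_mul_of_nonneg_left this hr0.le
      _ = _ := by field_simp
  have T1 : |∑' n : ℕ, Real.exp (-α) * α ^ n / (n.factorial : ℝ) *
      (f1 ((n - α) / r) - r * (f ((n - α) / r + 1 / r) - f ((n - α) / r))
        + 1 / r / 2 * f2 ((n - α) / r))| ≤ B3 * (1 / r) * (1 / r) := by
    refine pois_bound α hα0 _ _ fun n => ?_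
    have := taylor_two f f1 f2 f3 hf hf1 hf2 B3 hB3 ((n - α) / r) (1 / r) (by positivity)
    generalize f ((n - α) / r + 1 / r) = a at *
    generalize f1 ((n - α) / r) = b at *
    generalize f ((n - α) / r) = c at *
    generalize f2 ((n - α) / r) = d at *
    rw [show b - r * (a - c) + 1 / r / 2 * d =
      -(r * (a - c - 1 / r * b - (1 / r) ^ 2 / 2 * d)) by field_simp; ring, abs_neg, abs_mul,
      abs_of_pos hr0]
    calc _ ≤ r * (B3 * (1 / r) * (1 / r) * (1 / r)) := mul_le_mul_of_nonneg_left this hr0.le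
      _ = _ := by field_simp
  have S3 := (pois_summable α hα0 (fun n => f1 ((n - α) / r)
    - r * (f ((n - α) / r + 1 / r) - f ((n - α) / r))) (B1 + r * (B0 + B0)) fun n => by
      refine (abs_sub _ _).trans (add_le_add (hB1 _) ?_)
      rw [abs_mul, abs_of_pos hr0]
      refine mul_le_mul_of_nonneg_left ((abs_sub _ _).trans (add_le_add (hB0 _) (hB0 _))) hr0.le).hasSum
  have S4 := (S3.add (S2.summable.hasSum.mul_left (1 / r / 2))).congr_fun
    (g := fun n : ℕ => Real.exp (-α) * α ^ n / (n.factorial : ℝ) *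
      (f1 ((n - α) / r) - r * (f ((n - α) / r + 1 / r) - f ((n - α) / r))
        + 1 / r / 2 * f2 ((n - α) / r))) (fun n => by ring)
  have S5 := (S1.add ((pois_hasSum α).mul_right m)).congr_fun
    (g := fun n : ℕ => Real.exp (-α) * α ^ n / (n.factorial : ℝ) * h ((n - α) / r))
      (fun n => by ring)
  rw [S4.tsum_eq] at T1
  rw [S5.tsum_eq, one_mul, add_sub_cancel_right]
  have hrr : α⁻¹ = 1 / r * (1 / r) := by rw [← hr2]; field_simp
  rw [hrr]
  have hq : 0 < 1 / r := by positivity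
  generalize 1 / r = q at *
  rw [abs_le] at T1 T2 ⊢
  have hG : 0 ≤ G2 * (q * q) := by positivity
  constructor
  · nlinarith [mul_le_mul_of_nonneg_left T2.2 hq.le]
  · nlinarith [mul_le_mul_of_nonneg_left T2.1 hq.le]
end

section
/- Fix ν > 0. Then as α → ∞, the Poisson expectation E[f_α(X_α)] = Σ_{n=0}^∞ e^(−α)·(α^n/n!) · (α^n · e^(−α) · √(2πα) / n!)^(ν−1) satisfies E[f_α(X_α)] = ν^(−1/2) + O(α^(−1)). Precisely: there exist constants C > 0 and A > 0 (depending only on ν) such that for all α ≥ A, |Σ_{n=0}^∞ e^(−α)·(α^n/n!)·(α^n·e^(−α)·√(2πα)/n!)^(ν−1) − 1/√ν| ≤ C·α^(−1). -/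
open scoped BigOperators

namespace PSE
open Filter Topology Asymptotics

lemma lower_aux (ν : ℝ) (hν : 0 < ν) (y : ℝ) (hy : -1 ≤ y) :
    min ν 1 * y ^ 2 ≤ ((1 + y) ^ ν - 1) * (y * (y + 2)) := by
  set c := min ν 1 with hc
  have hc0 : 0 < c := lt_min hν one_pos
  have hc1 : c ≤ 1 := min_le_right _ _
  have hcν : c ≤ ν := min_le_left _ _
  rcases le_total 0 y with h | h
  · have h1 : (1 + y) ^ c ≤ (1 + y) ^ ν := Real.rpow_le_rpow_of_exponent_le (by linarith) hcν
    have hu : 0 < 1 + y := by linarith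
    have h2 : (1 + -(y / (1 + y))) ^ c ≤ 1 + c * (-(y / (1 + y))) := by
      apply rpow_one_add_le_one_add_mul_self _ hc0.le hc1
      have : y / (1 + y) ≤ 1 := by rw [div_le_one hu]; linarith
      linarith
    have h3 : 1 + -(y / (1 + y)) = (1 + y)⁻¹ := by field_simp; ring
    rw [h3, Real.inv_rpow hu.le] at h2
    have hp : 0 < (1 + y) ^ c := Real.rpow_pos_of_pos hu c
    set X := (1 + y) ^ c
    set q := y / (1 + y) with hq
    have hq0 : 0 ≤ q := by positivity
    have hqy : q * (1 + y) = y := by rw [hq]; field_simp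
    have h4 : 1 ≤ X * (1 - c * q) := by
      have := mul_le_mul_of_nonneg_left h2 hp.le
      rw [mul_inv_cancel₀ hp.ne'] at this
      linarith
    have hX1 : 1 ≤ X := by
      apply Real.one_le_rpow (by linarith) hc0.le
    have h5 : 1 + c * q ≤ X := by nlinarith [mul_nonneg (mul_nonneg hc0.le hq0) (sub_nonneg.2 hX1)]
    have h6 : c * q ≤ (1 + y) ^ ν - 1 := by linarith
    calc c * y ^ 2 = c * q * (y * (y + 1)) := by
            rw [show y ^ 2 = q * (1 + y) * y by rw [hqy]; ring]; ring
      _ ≤ c * q * (y * (y + 2)) := by gcongr; linarith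
      _ ≤ _ := by gcongr
  · have h1 : (1 + y) ^ ν ≤ (1 + y) ^ c := by
      rcases eq_or_lt_of_le hy with h' | h'
      · rw [← h']; simp [Real.zero_rpow hν.ne', Real.zero_rpow hc0.ne']
      · exact Real.rpow_le_rpow_of_exponent_ge (by linarith) (by linarith) hcν
    have h2 := rpow_one_add_le_one_add_mul_self hy hc0.le hc1
    have h3 : (1 + y) ^ ν - 1 ≤ c * y := by linarith
    have h4 : c * y * y ≤ ((1 + y) ^ ν - 1) * y := mul_le_mul_of_nonpos_right h3 h
    have h5 : 0 ≤ c * y * y := by rw [mul_assoc]; exact mul_nonneg hc0.le (mul_self_nonneg y)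
    nlinarith

lemma taylor_aux (ν : ℝ) : ∃ d : ℝ,
    (fun y : ℝ => (1 + y) ^ ν - (1 + ν * y + ν * (ν - 1) / 2 * y ^ 2 + d * y ^ 3))
      =O[𝓝 0] fun y => y ^ 4 := by
  have h := (Real.one_add_rpow_hasFPowerSeriesAt_zero (a := ν)).isBigO_sub_partialSum_pow 4
  refine ⟨Ring.choose ν 3, ?_⟩
  have h2 : Ring.choose ν 2 = ν * (ν - 1) / 2 := by
    rw [Ring.choose_eq_smul]
    simp [descPochhammer_succ_right, Polynomial.smeval_mul, Polynomial.smeval_sub, Polynomial.smeval_X, Polynomial.smeval_one]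
    ring
  have h3 : (fun y : ℝ => ‖y‖ ^ 4) = fun y : ℝ => y ^ 4 := by
    funext y; rw [Real.norm_eq_abs]; exact Even.pow_abs (by decide) y
  rw [h3] at h
  refine h.congr_left fun y => ?_
  simp only [zero_add, FormalMultilinearSeries.partialSum, Finset.sum_range_succ, binomialSeries,
    FormalMultilinearSeries.ofScalars_apply_eq, Finset.sum_range_zero, Ring.choose_zero_right,
    Ring.choose_one_right, h2, smul_eq_mul, pow_zero, pow_one, mul_one]

lemma key_aux (ν : ℝ) (hν : 0 < ν) : ∃ b K : ℝ, 0 < K ∧ ∀ y : ℝ, -1 ≤ y →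
    |((1 + y) ^ ν - 1) * (1 + (-(ν - 1) / 2) * y + b * y ^ 2) - ν * y|
      ≤ K * (y ^ 4 * (1 + (1 + y) ^ ν)) := by
  obtain ⟨d, hd⟩ := taylor_aux ν
  set a := -(ν - 1) / 2 with ha
  set e := ν * (ν - 1) / 2 with he
  -- ν b + e a + d = 0
  obtain ⟨b, hb⟩ : ∃ b : ℝ, ν * b + e * a + d = 0 := ⟨-(e * a + d) / ν, by field_simp; ring⟩
  have hea : ν * a + e = 0 := by rw [ha, he]; ring
  obtain ⟨C, hC0, hC⟩ := hd.exists_pos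
  rw [IsBigOWith] at hC
  obtain ⟨ε, hε, hball⟩ := Metric.eventually_nhds_iff.1 hC
  set ε' := min ε 1
  have hε' : 0 < ε' := lt_min hε one_pos
  set K1 := C * (1 + |a| + |b|) + |e * b + d * a| + |d * b| with hK1
  set K2 := (1 + |a| + |b|) * (ε'⁻¹ ^ 4) + ν * ε'⁻¹ ^ 4 with hK2
  have hK10 : 0 ≤ K1 := by positivity
  have hK20 : 0 < K2 := by positivity
  refine ⟨b, K1 + K2, by positivity, fun y hy => ?_⟩
  have hv : 0 ≤ (1 + y) ^ ν := Real.rpow_nonneg (by linarith) _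
  rcases lt_or_ge |y| ε' with h | h
  · have hy1 : |y| ≤ 1 := h.le.trans (min_le_right _ _)
    have := hball (y := y) (by rw [Real.dist_eq, sub_zero]; exact h.trans_le (min_le_left _ _))
    rw [Real.norm_eq_abs, Real.norm_eq_abs, abs_of_nonneg (by positivity : 0 ≤ y ^ 4)] at this
    set R := (1 + y) ^ ν - (1 + ν * y + e * y ^ 2 + d * y ^ 3) with hR
    have hvR : (1 + y) ^ ν - 1 = ν * y + e * y ^ 2 + d * y ^ 3 + R := by rw [hR]; ring
    have h1 : ((1 + y) ^ ν - 1) * (1 + a * y + b * y ^ 2) - ν * y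
        = R * (1 + a * y + b * y ^ 2) + (e * b + d * a) * y ^ 4 + (d * b * y) * y ^ 4 := by
      rw [hvR]
      linear_combination y ^ 2 * hea + y ^ 3 * hb
    have hy2 : y ^ 2 ≤ 1 := by rw [← sq_abs]; exact pow_le_one₀ (abs_nonneg _) hy1
    have h2 : |1 + a * y + b * y ^ 2| ≤ 1 + |a| + |b| := by
      refine (abs_add_three _ _ _).trans ?_
      rw [abs_one, abs_mul, abs_mul, abs_of_nonneg (sq_nonneg y)]
      gcongr
      · exact mul_le_of_le_one_right (abs_nonneg _) hy1
      · exact mul_le_of_le_one_right (abs_nonneg _) hy2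
    have h3 : |d * b * y| ≤ |d * b| := by
      rw [abs_mul]; exact mul_le_of_le_one_right (abs_nonneg _) hy1
    have hy4 : 0 ≤ y ^ 4 := by positivity
    rw [h1]
    calc _ ≤ |R| * |1 + a * y + b * y ^ 2| + |e * b + d * a| * y ^ 4 + |d * b * y| * y ^ 4 := by
            refine (abs_add_three _ _ _).trans ?_
            rw [abs_mul, abs_mul, abs_mul _ (y ^ 4), abs_of_nonneg hy4]
      _ ≤ (C * y ^ 4) * (1 + |a| + |b|) + |e * b + d * a| * y ^ 4 + |d * b| * y ^ 4 := by
            gcongr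
      _ = K1 * (y ^ 4 * 1) := by rw [hK1]; ring
      _ ≤ _ := by
        gcongr
        · linarith
        · linarith
  · have hs : 1 ≤ ε'⁻¹ * |y| := by
      rw [inv_mul_eq_div, one_le_div hε']; exact h
    have hε1 : 1 ≤ ε'⁻¹ := (one_le_inv₀ hε').2 (min_le_right _ _)
    have hpow : ∀ k ≤ 4, |y| ^ k ≤ ε'⁻¹ ^ 4 * y ^ 4 := by
      intro k hk
      calc |y| ^ k ≤ (ε'⁻¹ * |y|) ^ k := by
              gcongr; exact le_mul_of_one_le_left (abs_nonneg _) hε1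
        _ ≤ (ε'⁻¹ * |y|) ^ 4 := pow_le_pow_right₀ hs hk
        _ = _ := by rw [mul_pow, Even.pow_abs (by decide) y]
    have p0 := hpow 0 (by norm_num)
    have p1 := hpow 1 (by norm_num)
    have p2 := hpow 2 (by norm_num)
    rw [pow_zero] at p0
    rw [pow_one] at p1
    rw [sq_abs] at p2
    set Y := ε'⁻¹ ^ 4 * y ^ 4 with hY
    have hY0 : 0 ≤ Y := by positivity
    have h2 : |1 + a * y + b * y ^ 2| ≤ (1 + |a| + |b|) * Y := by
      refine (abs_add_three _ _ _).trans ?_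
      rw [abs_one, abs_mul, abs_mul, abs_of_nonneg (sq_nonneg y)]
      have := mul_le_mul_of_nonneg_left p1 (abs_nonneg a)
      have := mul_le_mul_of_nonneg_left p2 (abs_nonneg b)
      linarith
    have h3 : |(1 + y) ^ ν - 1| ≤ 1 + (1 + y) ^ ν := by
      rw [abs_le]; constructor <;> linarith
    calc _ ≤ |(1 + y) ^ ν - 1| * |1 + a * y + b * y ^ 2| + ν * |y| := by
            refine (abs_sub _ _).trans ?_
            rw [abs_mul, abs_mul ν, abs_of_pos hν]
      _ ≤ (1 + (1 + y) ^ ν) * ((1 + |a| + |b|) * Y) + (1 + (1 + y) ^ ν) * (ν * Y) := by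
            have h4 : ν * |y| ≤ ν * Y := by gcongr
            have h5 : ν * Y ≤ (1 + (1 + y) ^ ν) * (ν * Y) :=
              le_mul_of_one_le_left (by positivity) (by linarith)
            have h6 := mul_le_mul h3 h2 (abs_nonneg _) (by positivity)
            linarith
      _ = K2 * (y ^ 4 * (1 + (1 + y) ^ ν)) := by rw [hK2, hY]; ring
      _ ≤ _ := by gcongr; linarith

noncomputable def cf (ν : ℝ) (n : ℕ) : ℝ := ((n.factorial : ℝ) ^ ν)⁻¹

noncomputable def W (ν α : ℝ) (n : ℕ) : ℝ := cf ν n * (α ^ ν) ^ n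

lemma cf_pos (ν : ℝ) (n : ℕ) : 0 < cf ν n := by
  unfold cf
  have : (0 : ℝ) < n.factorial := by positivity
  positivity

lemma cf_bound (ν : ℝ) (hν : 0 < ν) (ρ : ℝ) (hρ : 0 < ρ) :
    ∃ B : ℝ, 0 < B ∧ ∀ n, cf ν n * ρ ^ n ≤ B := by
  have h := FloorSemiring.tendsto_pow_div_factorial_atTop (ρ ^ (1 / ν))
  obtain ⟨B, hB⟩ := h.bddAbove_range
  refine ⟨(max B 1) ^ ν, by positivity, fun n => ?_⟩
  have h1 : (ρ ^ (1 / ν)) ^ n / (n.factorial : ℝ) ≤ max B 1 :=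
    (hB ⟨n, rfl⟩).trans (le_max_left _ _)
  have h2 : cf ν n * ρ ^ n = ((ρ ^ (1 / ν)) ^ n / (n.factorial : ℝ)) ^ ν := by
    rw [Real.div_rpow (by positivity) (by positivity), ← Real.rpow_natCast (ρ ^ (1 / ν)),
      ← Real.rpow_mul hρ.le, ← Real.rpow_mul hρ.le, cf]
    rw [show 1 / ν * n * ν = n by field_simp, Real.rpow_natCast]
    field_simp
  rw [h2]
  exact Real.rpow_le_rpow (by positivity) h1 hν.le

lemma cf_summable (ν : ℝ) (hν : 0 < ν) (k : ℕ) (z : ℝ) (hz : 0 < z) :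
    Summable fun n : ℕ => cf ν n * z ^ n * (n : ℝ) ^ k := by
  obtain ⟨B, hB0, hB⟩ := cf_bound ν hν (2 * z) (by positivity)
  have hs := (summable_pow_mul_geometric_of_norm_lt_one (R := ℝ) k (r := 1 / 2)
    (by norm_num [abs_of_pos])).mul_left B
  refine Summable.of_nonneg_of_le (fun n => ?_) (fun n => ?_) hs
  · have := cf_pos ν n; positivity
  · have h1 := hB n
    calc cf ν n * z ^ n * (n : ℝ) ^ k = (cf ν n * (2 * z) ^ n) * ((n : ℝ) ^ k * (1 / 2) ^ n) := by
          rw [mul_pow, div_pow, one_pow]; field_simp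
      _ ≤ _ := by gcongr

lemma W_pos (ν α : ℝ) (hα : 0 < α) (n : ℕ) : 0 < W ν α n := by
  have := cf_pos ν n
  unfold W; positivity

lemma W_poly (ν α : ℝ) (hν : 0 < ν) (hα : 0 < α) (p : Polynomial ℝ) :
    Summable fun n : ℕ => W ν α n * p.eval (n : ℝ) := by
  induction p using Polynomial.induction_on' with
  | add p q hp hq => simpa [mul_add] using hp.add hq
  | monomial k c =>
    have := (cf_summable ν hν k (α ^ ν) (by positivity)).mul_left c
    refine this.congr fun n => ?_
    simp [W]; ring

noncomputable def M (ν α : ℝ) (k : ℕ) : ℝ := ∑' n : ℕ, W ν α n * ((n : ℝ) / α - 1) ^ k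

lemma hasSum_M (ν α : ℝ) (hν : 0 < ν) (hα : 0 < α) (k : ℕ) :
    HasSum (fun n : ℕ => W ν α n * ((n : ℝ) / α - 1) ^ k) (M ν α k) := by
  apply Summable.hasSum
  refine (W_poly ν α hν hα ((Polynomial.C α⁻¹ * Polynomial.X - 1) ^ k)).congr fun n => ?_
  simp [div_eq_inv_mul]

lemma stein (ν α : ℝ) (hν : 0 < ν) (hα : 0 < α) (g : ℕ → ℝ) (s : ℝ)
    (h : HasSum (fun n => W ν α n * g (n + 1)) s) :
    HasSum (fun n : ℕ => W ν α n * ((n : ℝ) / α) ^ ν * g n) s := by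
  rw [← hasSum_nat_add_iff' 1]
  simp only [Finset.range_one, Finset.sum_singleton, Nat.cast_zero, zero_div,
    Real.zero_rpow hν.ne', mul_zero, zero_mul, sub_zero]
  convert h using 2 with n
  congr 1
  have h0 : (0 : ℝ) < n.factorial := by positivity
  have h1 : (0 : ℝ) < (n : ℝ) + 1 := by positivity
  have hαν : 0 < α ^ ν := by positivity
  have h2 : (0 : ℝ) < ((n : ℝ) + 1) ^ ν := by positivity
  have h3 : (0 : ℝ) < (n.factorial : ℝ) ^ ν := by positivity
  unfold W cf
  rw [Nat.factorial_succ]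
  push_cast
  rw [Real.mul_rpow h1.le h0.le, Real.div_rpow h1.le hα.le, pow_succ]
  field_simp

lemma _root_.HasSum.congr_fun' {f g : ℕ → ℝ} {s : ℝ} (h : HasSum f s) (hfg : ∀ n, g n = f n) :
    HasSum g s := by
  rwa [show g = f from funext hfg]

lemma stein_pow (ν α : ℝ) (hν : 0 < ν) (hα : 0 < α) (k : ℕ) (s : ℝ)
    (h : HasSum (fun n : ℕ => W ν α n * (((n : ℝ) / α - 1) + α⁻¹) ^ k) s) :
    HasSum (fun n : ℕ => W ν α n * (1 + ((n : ℝ) / α - 1)) ^ ν * ((n : ℝ) / α - 1) ^ k) s := by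
  have := stein ν α hν hα (fun n => ((n : ℝ) / α - 1) ^ k) s (by
    convert h using 5 with n
    push_cast; field_simp; ring)
  convert this using 5 with n
  ring

set_option maxHeartbeats 1000000 in
lemma arith_aux (ν c a b K : ℝ) (hν : 0 < ν) (hc : 0 < c) (hK : 0 < K) :
    ∃ C > (0 : ℝ), ∃ δ0 > (0 : ℝ), ∀ δ M0 M1 M2 M3 M4 : ℝ, 0 < δ → δ ≤ δ0 → 0 < M0 → 0 ≤ M2 →
      0 ≤ M4 → 2 * |M1| ≤ M0 + M2 → 2 * |M3| ≤ M2 + M4 →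
      c * M2 ≤ 2 * δ * M1 + δ ^ 2 * M0 + 2 * δ * M0 →
      c * M4 ≤ 4 * δ * M3 + 6 * δ ^ 2 * M2 + 4 * δ ^ 3 * M1 + δ ^ 4 * M0 + 6 * δ * M2
        + 6 * δ ^ 2 * M1 + 2 * δ ^ 3 * M0 →
      |a * (δ * M0) + b * (2 * δ * M1 + δ ^ 2 * M0) - ν * M1| ≤
        K * (2 * M4 + 4 * δ * M3 + 6 * δ ^ 2 * M2 + 4 * δ ^ 3 * M1 + δ ^ 4 * M0) →
      |ν * M1 - a * δ * M0| ≤ C * δ ^ 2 * M0 := by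
  set D2 := 8 / c with hD2
  have hD2c : c * D2 = 8 := by rw [hD2]; field_simp
  have hD20 : 0 < D2 := by positivity
  set D4 := (2 / c) * (20 * D2 + 20) with hD4
  have hD4c : c * D4 = 2 * (20 * D2 + 20) := by rw [hD4]; field_simp
  have hD40 : 0 < D4 := by positivity
  set Z := K * (4 * D4 + 20 * D2 + 20) with hZ
  set D1 := 2 * (|a| + |b| + Z) / ν with hD1
  have hZ0 : 0 < Z := by positivity
  have hD10 : 0 ≤ D1 := by positivity
  refine ⟨|b| * (2 * D1 + 1) + Z, by positivity, min 1 (min (c / 4) (ν / (4 * |b| + 1))),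
    by positivity, ?_⟩
  intro δ M0 M1 M2 M3 M4 hδ hδ0 hM0 hM2 hM4 h1 h3 i2 i4 i1
  have hδ1 : δ ≤ 1 := hδ0.trans (min_le_left _ _)
  have hδc : 4 * δ ≤ c := by
    have := (hδ0.trans (min_le_right _ _)).trans (min_le_left _ _); linarith
  have hδb : δ * (4 * |b| + 1) ≤ ν := by
    have := (hδ0.trans (min_le_right _ _)).trans (min_le_right _ _)
    rwa [le_div_iff₀ (by positivity)] at this
  have a1 : M1 ≤ |M1| := le_abs_self _
  have a3 : M3 ≤ |M3| := le_abs_self _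
  have hsq : δ ^ 2 ≤ δ := by nlinarith
  have hcu : δ ^ 3 ≤ δ ^ 2 := by nlinarith [sq_nonneg δ]
  have hqu : δ ^ 4 ≤ δ ^ 2 := by nlinarith [sq_nonneg δ, sq_nonneg (δ^2)]
  -- M2 bound
  have e2 : M2 ≤ D2 * δ * M0 := by
    have t1 : 2 * δ * M1 ≤ δ * (M0 + M2) := by
      have := mul_le_mul_of_nonneg_left h1 hδ.le
      have := mul_le_mul_of_nonneg_left a1 hδ.le
      linarith
    have t2 : δ ^ 2 * M0 ≤ δ * M0 := by gcongr
    have t3 : c * M2 ≤ δ * M2 + 4 * (δ * M0) := by linarith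
    have t4 : 4 * δ * M2 ≤ c * M2 := by gcongr
    have t5 : c * M2 ≤ c * (D2 * δ * M0) := by
      rw [show c * (D2 * δ * M0) = c * D2 * (δ * M0) by ring, hD2c]
      have : 0 ≤ δ * M2 := by positivity
      linarith
    exact le_of_mul_le_mul_left t5 hc
  have e2' : δ * M2 ≤ D2 * (δ ^ 2 * M0) := by
    have := mul_le_mul_of_nonneg_left e2 hδ.le
    linarith
  have f1 : δ ^ 2 * M2 ≤ δ * M2 := by gcongr
  have f2 : δ ^ 3 * |M1| ≤ δ ^ 2 * |M1| := by gcongr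
  have f3 : δ ^ 2 * (2 * |M1|) ≤ δ ^ 2 * (M0 + M2) := by gcongr
  have f4 : δ ^ 4 * M0 ≤ δ ^ 2 * M0 := by gcongr
  have f5 : δ ^ 3 * M0 ≤ δ ^ 2 * M0 := by gcongr
  have f6 : δ * (2 * |M3|) ≤ δ * (M2 + M4) := by gcongr
  have f7 : δ ^ 3 * M1 ≤ δ ^ 3 * |M1| := by gcongr
  have f8 : δ ^ 2 * M1 ≤ δ ^ 2 * |M1| := by gcongr
  have f9 : δ * M3 ≤ δ * |M3| := by gcongr
  have g0 : 0 ≤ δ ^ 2 * M0 := by positivity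
  have g2 : 0 ≤ δ * M2 := by positivity
  have e4 : M4 ≤ D4 * δ ^ 2 * M0 := by
    have t1 : c * M4 ≤ 2 * (δ * M4) + 20 * (δ * M2) + 20 * (δ ^ 2 * M0) := by linarith
    have t4 : 4 * δ * M4 ≤ c * M4 := by gcongr
    have t5 : c * M4 ≤ c * (D4 * δ ^ 2 * M0) := by
      rw [show c * (D4 * δ ^ 2 * M0) = c * D4 * (δ ^ 2 * M0) by ring, hD4c]
      linarith
    exact le_of_mul_le_mul_left t5 hc
  have f10 : δ * M4 ≤ M4 := mul_le_of_le_one_left hM4 hδ1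
  have i1' : |a * (δ * M0) + b * (2 * δ * M1 + δ ^ 2 * M0) - ν * M1| ≤ Z * (δ ^ 2 * M0) := by
    refine i1.trans ?_
    rw [hZ, mul_assoc K (4 * D4 + 20 * D2 + 20)]
    refine mul_le_mul_of_nonneg_left ?_ hK.le
    have f11 : 0 ≤ D2 * (δ ^ 2 * M0) := by positivity
    linarith
  have bb : ∀ x, |b * x| = |b| * |x| := fun x => abs_mul b x
  -- crude M1
  have e1 : |M1| ≤ D1 * (δ * M0) := by
    have t0 : ν * M1 = a * (δ * M0) + b * (2 * δ * M1 + δ ^ 2 * M0)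
        - (a * (δ * M0) + b * (2 * δ * M1 + δ ^ 2 * M0) - ν * M1) := by ring
    have t1 : ν * |M1| ≤ |a| * (δ * M0) + |b| * (2 * δ * |M1| + δ ^ 2 * M0) + Z * (δ ^ 2 * M0) := by
      calc ν * |M1| = |ν * M1| := by rw [abs_mul, abs_of_pos hν]
        _ ≤ |a * (δ * M0)| + |b * (2 * δ * M1 + δ ^ 2 * M0)| + Z * (δ ^ 2 * M0) := by
          rw [t0]
          refine (abs_sub _ _).trans ?_
          exact add_le_add (abs_add_le _ _) i1'
        _ ≤ _ := by
          rw [abs_mul a, abs_mul b, abs_of_pos (by positivity : 0 < δ * M0)]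
          gcongr
          refine (abs_add_le _ _).trans ?_
          rw [abs_of_nonneg g0, abs_mul, abs_of_pos (by positivity : 0 < 2 * δ)]
    have t2 : δ ^ 2 * M0 ≤ δ * M0 := by gcongr
    have t3 : δ * (4 * |b| + 1) * |M1| ≤ ν * |M1| := by gcongr
    have t4 : |b| * (δ ^ 2 * M0) ≤ |b| * (δ * M0) := by gcongr
    have t5 : Z * (δ ^ 2 * M0) ≤ Z * (δ * M0) := by gcongr
    have t6 : 0 ≤ δ * |M1| := by positivity
    have hD1c : ν * D1 = 2 * (|a| + |b| + Z) := by rw [hD1]; field_simp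
    have t7 : ν * |M1| ≤ ν * (D1 * (δ * M0)) := by
      rw [← mul_assoc, hD1c]
      have t8 : 0 ≤ |b| * (δ * |M1|) := by positivity
      linarith
    exact le_of_mul_le_mul_left t7 hν
  have t0 : ν * M1 - a * δ * M0 = b * (2 * δ * M1 + δ ^ 2 * M0)
        - (a * (δ * M0) + b * (2 * δ * M1 + δ ^ 2 * M0) - ν * M1) := by ring
  have t2 : |2 * δ * M1 + δ ^ 2 * M0| ≤ (2 * D1 + 1) * (δ ^ 2 * M0) := by
    refine (abs_add_le _ _).trans ?_
    rw [abs_of_nonneg g0, abs_mul, abs_of_pos (by positivity : 0 < 2 * δ)]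
    have := mul_le_mul_of_nonneg_left e1 hδ.le
    linarith
  rw [t0]
  calc _ ≤ |b| * |2 * δ * M1 + δ ^ 2 * M0| + Z * (δ ^ 2 * M0) := by
        refine (abs_sub _ _).trans ?_
        rw [abs_mul b]
        exact add_le_add le_rfl i1'
    _ ≤ |b| * ((2 * D1 + 1) * (δ ^ 2 * M0)) + Z * (δ ^ 2 * M0) := by gcongr
    _ = _ := by ring

theorem moment (ν : ℝ) (hν : 0 < ν) : ∃ C > (0 : ℝ), ∃ A > (0 : ℝ), ∀ α ≥ A,
    |ν * M ν α 1 - (-(ν - 1) / 2) * α⁻¹ * M ν α 0| ≤ C * α⁻¹ ^ 2 * M ν α 0 := by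
  obtain ⟨b, K, hK, hkey⟩ := key_aux ν hν
  have hc : 0 < min ν 1 := lt_min hν one_pos
  obtain ⟨C, hC, δ0, hδ0, hmain⟩ := arith_aux ν (min ν 1) (-(ν - 1) / 2) b K hν hc hK
  refine ⟨C, hC, δ0⁻¹, by positivity, fun α hα => ?_⟩
  have hα0 : 0 < α := lt_of_lt_of_le (by positivity) hα
  have hδ : 0 < α⁻¹ := by positivity
  have hM := hasSum_M ν α hν hα0
  have hW := W_pos ν α hα0
  have hy : ∀ n : ℕ, -1 ≤ (n : ℝ) / α - 1 := fun n => by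
    have : 0 ≤ (n : ℝ) / α := by positivity
    linarith
  set δ := α⁻¹ with hδdef
  set y : ℕ → ℝ := fun n => (n : ℝ) / α - 1 with hydef
  have hM' : ∀ k, HasSum (fun n => W ν α n * y n ^ k) (M ν α k) := hM
  have hy' : ∀ n, -1 ≤ y n := hy
  have hst : ∀ k s, HasSum (fun n : ℕ => W ν α n * (y n + δ) ^ k) s →
    HasSum (fun n : ℕ => W ν α n * (1 + y n) ^ ν * y n ^ k) s :=
    fun k s h => stein_pow ν α hν hα0 k s h
  clear_value y
  set M0 := M ν α 0
  set M1 := M ν α 1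
  set M2 := M ν α 2
  set M3 := M ν α 3
  set M4 := M ν α 4
  have m0 := hM' 0
  have m1 := hM' 1
  have m2 := hM' 2
  have m3 := hM' 3
  have m4 := hM' 4
  have n0 := hst 0 M0 (m0.congr_fun' fun n => by ring)
  have n1 := hst 1 (M1 + δ * M0) ((m1.add (m0.mul_left δ)).congr_fun' fun n => by ring)
  have n2 := hst 2 (M2 + 2 * δ * M1 + δ ^ 2 * M0)
    (((m2.add (m1.mul_left (2 * δ))).add (m0.mul_left (δ ^ 2))).congr_fun' fun n => by ring)
  have n3 := hst 3 (M3 + 3 * δ * M2 + 3 * δ ^ 2 * M1 + δ ^ 3 * M0)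
    ((((m3.add (m2.mul_left (3 * δ))).add (m1.mul_left (3 * δ ^ 2))).add
      (m0.mul_left (δ ^ 3))).congr_fun' fun n => by ring)
  have n4 := hst 4 (M4 + 4 * δ * M3 + 6 * δ ^ 2 * M2 + 4 * δ ^ 3 * M1 + δ ^ 4 * M0)
    (((((m4.add (m3.mul_left (4 * δ))).add (m2.mul_left (6 * δ ^ 2))).add
      (m1.mul_left (4 * δ ^ 3))).add (m0.mul_left (δ ^ 4))).congr_fun' fun n => by ring)
  have hM0 : 0 < M0 := by
    have : W ν α 0 * y 0 ^ 0 ≤ M0 := le_hasSum m0 0 fun n _ => by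
      have := hW n; positivity
    have := hW 0
    simp at *; linarith
  have le_of : ∀ (F G : ℕ → ℝ) (s t : ℝ), (∀ n, F n ≤ G n) → HasSum (fun n => W ν α n * F n) s →
      HasSum (fun n => W ν α n * G n) t → s ≤ t := fun F G s t hFG hs ht =>
    hasSum_le (fun n => mul_le_mul_of_nonneg_left (hFG n) (hW n).le) hs ht
  refine hmain δ M0 M1 M2 M3 M4 hδ ?_ hM0 ?_ ?_ ?_ ?_ ?_ ?_ ?_
  · rw [hδdef]; exact inv_le_of_inv_le₀ hδ0 hα
  · exact m2.nonneg fun n => by have := hW n; positivity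
  · exact m4.nonneg fun n => by have := hW n; positivity
  · have u1 : 2 * M1 ≤ M0 + M2 := le_of (fun n => 2 * y n) (fun n => 1 + y n ^ 2) _ _
      (fun n => by nlinarith [sq_nonneg (y n - 1)])
      ((m1.mul_left 2).congr_fun' fun n => by ring) ((m0.add m2).congr_fun' fun n => by ring)
    have u2 : -2 * M1 ≤ M0 + M2 := le_of (fun n => -2 * y n) (fun n => 1 + y n ^ 2) _ _
      (fun n => by nlinarith [sq_nonneg (y n + 1)])
      ((m1.mul_left (-2)).congr_fun' fun n => by ring) ((m0.add m2).congr_fun' fun n => by ring)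
    rcases abs_cases M1 with h | h <;> linarith
  · have u1 : 2 * M3 ≤ M2 + M4 := le_of (fun n => 2 * y n ^ 3) (fun n => y n ^ 2 + y n ^ 4) _ _
      (fun n => by nlinarith [sq_nonneg (y n * (y n - 1))])
      ((m3.mul_left 2).congr_fun' fun n => by ring) ((m2.add m4).congr_fun' fun n => by ring)
    have u2 : -2 * M3 ≤ M2 + M4 := le_of (fun n => -2 * y n ^ 3) (fun n => y n ^ 2 + y n ^ 4) _ _
      (fun n => by nlinarith [sq_nonneg (y n * (y n + 1))])
      ((m3.mul_left (-2)).congr_fun' fun n => by ring) ((m2.add m4).congr_fun' fun n => by ring)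
    rcases abs_cases M3 with h | h <;> linarith
  · have := le_of (fun n => min ν 1 * y n ^ 2) (fun n => ((1 + y n) ^ ν - 1) * (y n * (y n + 2))) _ _
      (fun n => lower_aux ν hν (y n) (hy' n))
      ((m2.mul_left (min ν 1)).congr_fun' fun n => by ring)
      (((n2.add (n1.mul_left 2)).sub (m2.add (m1.mul_left 2))).congr_fun' fun n => by ring)
    linarith
  · have := le_of (fun n => min ν 1 * y n ^ 2 * y n ^ 2)
      (fun n => ((1 + y n) ^ ν - 1) * (y n * (y n + 2)) * y n ^ 2) _ _
      (fun n => mul_le_mul_of_nonneg_right (lower_aux ν hν (y n) (hy' n)) (sq_nonneg _))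
      ((m4.mul_left (min ν 1)).congr_fun' fun n => by ring)
      (((n4.add (n3.mul_left 2)).sub (m4.add (m3.mul_left 2))).congr_fun' fun n => by ring)
    linarith
  · have hQ : HasSum (fun n => W ν α n * (((1 + y n) ^ ν - 1) * (1 + (-(ν - 1) / 2) * y n
        + b * y n ^ 2) - ν * y n)) (M0 + (-(ν - 1) / 2) * (M1 + δ * M0)
          + b * (M2 + 2 * δ * M1 + δ ^ 2 * M0) - (M0 + (-(ν - 1) / 2) * M1 + b * M2) - ν * M1) :=
      (((((n0.add (n1.mul_left (-(ν - 1) / 2))).add (n2.mul_left b)).sub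
        ((m0.add (m1.mul_left (-(ν - 1) / 2))).add (m2.mul_left b))).sub
          (m1.mul_left ν)).congr_fun' fun n => by ring)
    have hR : HasSum (fun n => W ν α n * (K * (y n ^ 4 * (1 + (1 + y n) ^ ν))))
        (K * (M4 + (M4 + 4 * δ * M3 + 6 * δ ^ 2 * M2 + 4 * δ ^ 3 * M1 + δ ^ 4 * M0))) :=
      ((m4.add n4).mul_left K).congr_fun' fun n => by ring
    have v1 := le_of _ _ _ _ (fun n => (abs_le.1 (hkey (y n) (hy' n))).2) hQ hR
    have v2 := le_of _ _ _ _ (fun n => (abs_le.1 (hkey (y n) (hy' n))).1)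
      (hR.neg.congr_fun' fun n => by ring) hQ
    rw [abs_le]
    constructor <;> linarith

lemma M0_pos (ν α : ℝ) (hν : 0 < ν) (hα : 0 < α) : 0 < M ν α 0 := by
  have m0 := hasSum_M ν α hν hα 0
  have h1 := le_hasSum m0 0 fun n _ => by
      have := W_pos ν α hα n; positivity
  have := W_pos ν α hα 0
  rw [pow_zero, mul_one] at h1
  linarith

noncomputable def G (ν z : ℝ) : ℝ := ∑' n : ℕ, cf ν n * z ^ n

lemma hasDerivAt_G (ν z : ℝ) (hν : 0 < ν) (hz : 0 < z) :
    HasDerivAt (G ν) (∑' n : ℕ, cf ν n * (n * z ^ (n - 1))) z := by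
  have hR : 0 < 2 * z := by positivity
  have hu : Summable fun n : ℕ => (2 * z)⁻¹ * (cf ν n * (2 * z) ^ n * (n : ℝ) ^ 1) :=
    (cf_summable ν hν 1 (2 * z) hR).mul_left _
  refine hasDerivAt_tsum_of_isPreconnected (t := Set.Ioo 0 (2 * z)) (y₀ := z) hu isOpen_Ioo
    isPreconnected_Ioo (fun n x _ => (hasDerivAt_pow n x).const_mul _) ?_ ⟨hz, by linarith⟩ ?_
    ⟨hz, by linarith⟩
  · rintro n x ⟨hx0, hx⟩
    have hc := cf_pos ν n
    rw [Real.norm_of_nonneg (by positivity)]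
    rcases n with _ | n
    · simp
    · have : x ^ n ≤ (2 * z) ^ n := pow_le_pow_left₀ hx0.le hx.le n
      calc cf ν (n + 1) * (((n + 1 : ℕ) : ℝ) * x ^ (n + 1 - 1))
          ≤ cf ν (n + 1) * (((n + 1 : ℕ) : ℝ) * (2 * z) ^ n) := by
            rw [Nat.add_sub_cancel]; gcongr
        _ = _ := by rw [pow_succ, pow_one]; field_simp
  · simpa using cf_summable ν hν 0 z hz

lemma hasDerivAt_M0 (ν α : ℝ) (hν : 0 < ν) (hα : 0 < α) :
    HasDerivAt (fun x => M ν x 0) (ν * (M ν α 1 + M ν α 0)) α := by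
  have h0 : (fun x => M ν x 0) = fun x => G ν (x ^ ν) := by
    funext x; simp [M, G, W]
  rw [h0]
  have h1 := (hasDerivAt_G ν (α ^ ν) hν (by positivity)).comp α
    (Real.hasDerivAt_rpow_const (Or.inl hα.ne') (p := ν))
  refine h1.congr_deriv ?_
  have h2 : HasSum (fun n : ℕ => cf ν n * (n * (α ^ ν) ^ (n - 1)))
      (α * (M ν α 1 + M ν α 0) / α ^ ν) := by
    have := (((hasSum_M ν α hν hα 1).add (hasSum_M ν α hν hα 0)).mul_left α).div_const (α ^ ν)
    refine this.congr_fun' fun n => ?_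
    have : 0 < α ^ ν := by positivity
    rcases n with _ | n
    · simp
    · rw [W, Nat.add_sub_cancel, pow_succ]
      field_simp
      ring
  rw [h2.tsum_eq, Real.rpow_sub_one hα.ne']
  have : 0 < α ^ ν := by positivity
  field_simp

noncomputable def lT (ν α : ℝ) : ℝ := -ν * α + (ν - 1) / 2 * Real.log α + Real.log (M ν α 0)

lemma hasDerivAt_lT (ν α : ℝ) (hν : 0 < ν) (hα : 0 < α) :
    HasDerivAt (lT ν) ((ν * M ν α 1 - (-(ν - 1) / 2) * α⁻¹ * M ν α 0) / M ν α 0) α := by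
  have hM := M0_pos ν α hν hα
  have h := (((hasDerivAt_id α).const_mul (-ν)).add
    ((Real.hasDerivAt_log hα.ne').const_mul ((ν - 1) / 2))).add
    ((hasDerivAt_M0 ν α hν hα).log hM.ne')
  refine h.congr_deriv ?_
  field_simp
  ring

lemma lT_bound (ν : ℝ) (hν : 0 < ν) : ∃ C > (0 : ℝ), ∃ A > (0 : ℝ), ∀ α ≥ A, ∀ β ≥ α,
    |lT ν β - lT ν α| ≤ C * α⁻¹ := by
  obtain ⟨C, hC, A, hA, hm⟩ := moment ν hν
  refine ⟨C, hC, A, hA, fun α hα β hβ => ?_⟩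
  have hder : ∀ x ≥ A, |(ν * M ν x 1 - (-(ν - 1) / 2) * x⁻¹ * M ν x 0) / M ν x 0|
      ≤ C * x⁻¹ ^ 2 := fun x hx => by
    have hM := M0_pos ν x hν (hA.trans_le hx)
    rw [abs_div, abs_of_pos hM, div_le_iff₀ hM]
    exact hm x hx
  have hinv : ∀ x ≥ A, HasDerivAt (fun x : ℝ => C * x⁻¹) (C * (-(x ^ 2)⁻¹)) x := fun x hx =>
    (hasDerivAt_inv (hA.trans_le hx).ne').const_mul C
  have d1 : ∀ x ≥ A, HasDerivAt (fun x => lT ν x + C * x⁻¹) _ x := fun x hx =>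
    (hasDerivAt_lT ν x hν (hA.trans_le hx)).add (hinv x hx)
  have d2 : ∀ x ≥ A, HasDerivAt (fun x => lT ν x - C * x⁻¹) _ x := fun x hx =>
    (hasDerivAt_lT ν x hν (hA.trans_le hx)).sub (hinv x hx)
  have t1 : AntitoneOn (fun x => lT ν x + C * x⁻¹) (Set.Ici A) := by
    refine antitoneOn_of_deriv_nonpos (convex_Ici A)
      (fun x hx => (d1 x hx).continuousAt.continuousWithinAt)
      (fun x hx => (d1 x (interior_subset hx)).differentiableAt.differentiableWithinAt) ?_
    intro x hx
    have hx' : A ≤ x := interior_subset hx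
    rw [(d1 x hx').deriv]
    have := (abs_le.1 (hder x hx')).2
    rw [inv_pow] at this
    linarith
  have t2 : MonotoneOn (fun x => lT ν x - C * x⁻¹) (Set.Ici A) := by
    refine monotoneOn_of_deriv_nonneg (convex_Ici A)
      (fun x hx => (d2 x hx).continuousAt.continuousWithinAt)
      (fun x hx => (d2 x (interior_subset hx)).differentiableAt.differentiableWithinAt) ?_
    intro x hx
    have hx' : A ≤ x := interior_subset hx
    rw [(d2 x hx').deriv]
    have := (abs_le.1 (hder x hx')).1
    rw [inv_pow] at this
    linarith
  have r1 := t1 hα (hα.trans hβ : A ≤ β) hβ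
  have r2 := t2 hα (hα.trans hβ : A ≤ β) hβ
  have hb : 0 < C * β⁻¹ := by
    have : 0 < β := hA.trans_le (hα.trans hβ)
    positivity
  simp only at r1 r2
  rw [abs_le]; constructor <;> linarith

noncomputable def TT (ν α : ℝ) : ℝ := ∑' n : ℕ, Real.exp (-α) * (α ^ n / (n.factorial : ℝ)) *
          (α ^ n * Real.exp (-α) * Real.sqrt (2 * Real.pi * α) / (n.factorial : ℝ)) ^ (ν - 1)

lemma TT_eq (ν α : ℝ) (hν : 0 < ν) (hα : 0 < α) :
    TT ν α = (2 * Real.pi) ^ ((ν - 1) / 2) * Real.exp (lT ν α) := by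
  have hM := M0_pos ν α hν hα
  have h1 : Real.exp (lT ν α) = Real.exp (-ν * α) * α ^ ((ν - 1) / 2) * M ν α 0 := by
    rw [lT, Real.exp_add, Real.exp_add, Real.exp_log hM, Real.rpow_def_of_pos hα,
      mul_comm (Real.log α)]
  have h2 := (hasSum_M ν α hν hα 0).mul_left
    ((2 * Real.pi) ^ ((ν - 1) / 2) * (Real.exp (-ν * α) * α ^ ((ν - 1) / 2)))
  rw [h1, ← mul_assoc, ← h2.tsum_eq, TT]
  refine tsum_congr fun n => ?_
  have hπ := Real.pi_pos
  set p := Real.exp (-α) * (α ^ n / (n.factorial : ℝ)) with hp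
  have hp0 : 0 < p := by positivity
  have e1 : α ^ n * Real.exp (-α) * Real.sqrt (2 * Real.pi * α) / (n.factorial : ℝ)
      = p * Real.sqrt (2 * Real.pi * α) := by rw [hp]; ring
  rw [e1, Real.mul_rpow hp0.le (Real.sqrt_nonneg _), ← mul_assoc,
    ← Real.rpow_one_add' hp0.le (by simpa using hν.ne'), add_sub_cancel, Real.sqrt_eq_rpow,
    ← Real.rpow_mul (by positivity), Real.mul_rpow (by positivity) hα.le,
    show 1 / 2 * (ν - 1) = (ν - 1) / 2 by ring, hp, Real.mul_rpow (by positivity) (by positivity),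
    ← Real.exp_mul, Real.div_rpow (by positivity) (by positivity), W, cf,
    ← Real.rpow_natCast, ← Real.rpow_natCast, ← Real.rpow_mul hα.le, ← Real.rpow_mul hα.le,
    mul_comm (n : ℝ) ν, show -α * ν = -ν * α by ring]
  simp
  ring

lemma TT_pos (ν α : ℝ) (hν : 0 < ν) (hα : 0 < α) : 0 < TT ν α := by
  rw [TT_eq ν α hν hα]; have := Real.pi_pos; positivity

lemma final_aux (ν : ℝ) (hν : 0 < ν)
    (hlim : Tendsto (fun m : ℕ => TT ν m) atTop (𝓝 (1 / Real.sqrt ν))) :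
    ∃ C > (0 : ℝ), ∃ A > (0 : ℝ), ∀ α : ℝ, α ≥ A → |TT ν α - 1 / Real.sqrt ν| ≤ C * α⁻¹ := by
  obtain ⟨C, hC, A, hA, hb⟩ := lT_bound ν hν
  have hπ := Real.pi_pos
  set κ := (2 * Real.pi) ^ ((ν - 1) / 2) with hκ
  have hκ0 : 0 < κ := by positivity
  set L := 1 / Real.sqrt ν with hL
  have hL0 : 0 < L := by positivity
  have hl : Tendsto (fun m : ℕ => lT ν m) atTop (𝓝 (Real.log (L / κ))) := by
    have := (hlim.div_const κ).log (by positivity)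
    refine this.congr' ?_
    filter_upwards [eventually_gt_atTop 0] with m hm
    rw [TT_eq ν m hν (by exact_mod_cast hm), mul_div_cancel_left₀ _ hκ0.ne', Real.log_exp]
  set ℓ := Real.log (L / κ) with hℓ
  refine ⟨2 * L * C, by positivity, max A C, by positivity, fun α hα => ?_⟩
  have hαA : A ≤ α := (le_max_left _ _).trans hα
  have hα0 : 0 < α := hA.trans_le hαA
  have h1 : |ℓ - lT ν α| ≤ C * α⁻¹ := by
    refine le_of_tendsto ((hl.sub_const (lT ν α)).abs) ?_
    have : ∀ᶠ m : ℕ in atTop, α ≤ (m : ℝ) := tendsto_natCast_atTop_atTop.eventually_ge_atTop α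
    filter_upwards [this] with m hm
    exact hb α hαA m hm
  have h2 : C * α⁻¹ ≤ 1 := by
    rw [← div_eq_mul_inv, div_le_one hα0]; exact (le_max_right _ _).trans hα
  have h3 : κ * Real.exp ℓ = L := by
    rw [hℓ, Real.exp_log (by positivity)]; field_simp
  have h4 : TT ν α - L = L * (Real.exp (lT ν α - ℓ) - 1) := by
    rw [TT_eq ν α hν hα0, mul_sub, mul_one]
    nth_rw 2 [← h3]
    rw [mul_assoc, ← Real.exp_add, add_sub_cancel]
  rw [abs_sub_comm] at h1
  have h5 := Real.abs_exp_sub_one_le (h1.trans h2)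
  rw [h4, abs_mul, abs_of_pos hL0]
  calc _ ≤ L * (2 * (C * α⁻¹)) := by gcongr; linarith
    _ = _ := by ring

/-- scaled Poisson weights -/
noncomputable def r (m n : ℕ) : ℝ :=
  Real.sqrt (2 * Real.pi * m) * Real.exp (-(m : ℝ)) * (m : ℝ) ^ n / (n.factorial : ℝ)

lemma r_nonneg (m n : ℕ) : 0 ≤ r m n := by unfold r; positivity

lemma r_self_le (m : ℕ) : r m m ≤ 1 := by
  unfold r
  rw [div_le_one (by positivity)]
  refine le_trans (le_of_eq ?_) (Stirling.le_factorial_stirling m)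
  rw [div_pow, ← Real.exp_nat_mul, mul_one, Real.exp_neg]
  field_simp

lemma r_succ (m n : ℕ) : r m (n + 1) * ((n : ℝ) + 1) = r m n * m := by
  unfold r
  rw [Nat.factorial_succ, pow_succ]
  push_cast
  field_simp

lemma r_up (m J : ℕ) (hm : 0 < m) (j : ℕ) (hj : j ≤ J) :
    r m (m + j) ≤ Real.exp (-((j : ℝ) ^ 2 / (2 * (m + J)))) := by
  have hm' : (0 : ℝ) < m := by exact_mod_cast hm
  induction j with
  | zero => simpa using r_self_le m
  | succ j ih =>
    have ih := ih (by omega)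
    have h := r_succ m (m + j)
    have hjJ : (j : ℝ) + 1 ≤ J := by exact_mod_cast hj
    have hp : (0 : ℝ) < ((m + j : ℕ) : ℝ) + 1 := by positivity
    have h1 : r m (m + (j + 1)) = r m (m + j) * (m / (((m + j : ℕ) : ℝ) + 1)) := by
      rw [← mul_div_assoc, ← h, mul_div_cancel_right₀ _ hp.ne']; rfl
    have h2 : (m : ℝ) / (((m + j : ℕ) : ℝ) + 1) ≤ Real.exp (-((2 * j + 1) / (2 * (m + J)))) := by
      have e1 := Real.add_one_le_exp (-(((j : ℝ) + 1) / (m + j + 1)))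
      have e2 : (m : ℝ) / (((m + j : ℕ) : ℝ) + 1) = -(((j : ℝ) + 1) / (m + j + 1)) + 1 := by
        push_cast; field_simp; ring
      rw [e2]
      refine e1.trans (Real.exp_le_exp.2 (neg_le_neg ?_))
      rw [div_le_div_iff₀ (by positivity) (by positivity)]
      nlinarith
    rw [h1]
    calc _ ≤ Real.exp (-((j : ℝ) ^ 2 / (2 * (m + J)))) *
          Real.exp (-((2 * j + 1) / (2 * (m + J)))) :=
          mul_le_mul ih h2 (by positivity) (by positivity)
      _ = _ := by
        rw [← Real.exp_add]; congr 1; push_cast; field_simp; ring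

lemma r_down (m : ℕ) (hm : 0 < m) (j : ℕ) (hj : j ≤ m) :
    r m (m - j) ≤ Real.exp (-((j : ℝ) * (j - 1) / (2 * m))) := by
  have hm' : (0 : ℝ) < m := by exact_mod_cast hm
  induction j with
  | zero => simpa using r_self_le m
  | succ j ih =>
    have ih := ih (by omega)
    have h := r_succ m (m - (j + 1))
    have hs : m - (j + 1) + 1 = m - j := by omega
    have hc : ((m - (j + 1) : ℕ) : ℝ) + 1 = m - j := by
      rw [Nat.cast_sub hj]; push_cast; ring
    rw [hs, hc] at h
    have hjm : (j : ℝ) + 1 ≤ m := by exact_mod_cast hj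
    have h1 : r m (m - (j + 1)) = r m (m - j) * ((m - j) / m) := by
      rw [← mul_div_assoc, h, mul_div_cancel_right₀ _ hm'.ne']
    have h2 : ((m : ℝ) - j) / m ≤ Real.exp (-(j / m)) := by
      have e1 := Real.add_one_le_exp (-((j : ℝ) / m))
      have e2 : ((m : ℝ) - j) / m = -((j : ℝ) / m) + 1 := by field_simp; ring
      rwa [e2]
    rw [h1]
    calc _ ≤ Real.exp (-((j : ℝ) * (j - 1) / (2 * m))) * Real.exp (-(j / m)) :=
          mul_le_mul ih h2 (div_nonneg (by linarith) hm'.le) (by positivity)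
      _ = _ := by
        rw [← Real.exp_add]; congr 1; push_cast; field_simp; ring

lemma r_floor_le (m : ℕ) (hm : 0 < m) (t : ℝ) (ht : 0 ≤ t * Real.sqrt m + m) :
    r m ⌊t * Real.sqrt m + m⌋₊ ≤ Real.exp (-((|t| - 2) / 2)) := by
  have hm' : (1 : ℝ) ≤ m := by exact_mod_cast hm
  set q := Real.sqrt m with hq
  have hq1 : 1 ≤ q := by rw [hq]; exact Real.one_le_sqrt.2 hm'
  have hq0 : 0 < q := by linarith
  have hqq : (m : ℝ) = q ^ 2 := by rw [hq, Real.sq_sqrt (by linarith)]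
  have f1 := Nat.floor_le ht
  have f2 := Nat.lt_floor_add_one (t * q + m)
  set n := ⌊t * q + m⌋₊
  rcases le_or_gt m n with h | h
  · obtain ⟨j, hj⟩ := Nat.exists_eq_add_of_le h
    have hb := r_up m j hm j le_rfl
    rw [← hj] at hb
    refine hb.trans (Real.exp_le_exp.2 (neg_le_neg ?_))
    have hn : (n : ℝ) = m + j := by exact_mod_cast hj
    rw [hn] at f1 f2
    set x := (j : ℝ) / q with hx
    have hjx : (j : ℝ) = x * q := by rw [hx]; field_simp
    have hx0 : 0 ≤ x := by positivity
    have ht0 : 0 ≤ t := by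
      by_contra hneg
      have : t * q < 0 := mul_neg_of_neg_of_pos (by linarith) hq0
      have : (0 : ℝ) ≤ j := by positivity
      linarith
    rw [abs_of_nonneg ht0]
    have htx : t - 1 ≤ x := by
      have : t * q < (x + 1) * q := by rw [add_mul, ← hjx]; linarith
      have := lt_of_mul_lt_mul_right this hq0.le
      linarith
    have h1 : (x - 1) / 2 ≤ (j : ℝ) ^ 2 / (2 * (m + j)) := by
      rw [hjx, hqq, div_le_div_iff₀ (by positivity) (by positivity)]
      have e1 : (x - 1) * (q ^ 2 + x * q) ≤ x ^ 2 * q ^ 2 := by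
        have : 0 ≤ q * (q - 1) * (x - 1/2) ^ 2 := by
          have : 0 ≤ q - 1 := by linarith
          positivity
        nlinarith
      nlinarith
    linarith
  · obtain ⟨j, hj⟩ := Nat.exists_eq_add_of_lt h
    have hjm : j + 1 ≤ m := by omega
    have hb := r_down m hm (j + 1) hjm
    rw [show m - (j + 1) = n by omega] at hb
    refine hb.trans (Real.exp_le_exp.2 (neg_le_neg ?_))
    have hn : (n : ℝ) = m - ((j + 1 : ℕ) : ℝ) := by
      have : (m : ℝ) = n + j + 1 := by exact_mod_cast hj
      push_cast; linarith
    rw [hn] at f1 f2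
    have hJ1 : (1 : ℝ) ≤ ((j + 1 : ℕ) : ℝ) := by exact_mod_cast Nat.succ_pos j
    set J : ℝ := ((j + 1 : ℕ) : ℝ)
    set x := J / q with hx
    have hjx : J = x * q := by rw [hx]; field_simp
    have hx0 : 0 ≤ x := by positivity
    have ht0 : t ≤ 0 := by
      by_contra hneg
      have : 0 < t * q := mul_pos (by linarith) hq0
      linarith
    rw [abs_of_nonpos ht0]
    have htx : -t ≤ x := by
      have : (-t) * q ≤ x * q := by rw [← hjx]; linarith
      exact le_of_mul_le_mul_right this hq0
    have h1 : (x - 1) / 2 ≤ J * (J - 1) / (2 * m) := by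
      rw [hjx, hqq, div_le_div_iff₀ (by positivity) (by positivity)]
      have : 0 ≤ (x - 1) ^ 2 * q ^ 2 := by positivity
      have : 0 ≤ x * (q * (q - 1)) := by
        have : 0 ≤ q - 1 := by linarith
        positivity
      nlinarith
    linarith

lemma h_aux (x : ℝ) (hx : |x| ≤ 1 / 2) :
    |(1 + x) * Real.log (1 + x) - x - x ^ 2 / 2| ≤ 4 * |x| ^ 3 := by
  have h := Real.abs_log_sub_add_sum_range_le (x := -x) (by rw [abs_neg]; linarith) 2
  simp only [Finset.sum_range_succ, Finset.sum_range_zero, abs_neg, sub_neg_eq_add] at h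
  have h2 : |x| ^ (2 + 1) / (1 - |x|) ≤ 2 * |x| ^ 3 := by
    rw [div_le_iff₀ (by linarith)]
    have h0 : 0 ≤ |x| ^ 3 := by positivity
    have h1 : |x| ^ 3 * (1 / 2) ≤ |x| ^ 3 * (1 - |x|) :=
      mul_le_mul_of_nonneg_left (by linarith) h0
    calc |x| ^ (2 + 1) = 2 * (|x| ^ 3 * (1 / 2)) := by ring
      _ ≤ 2 * (|x| ^ 3 * (1 - |x|)) := by gcongr
      _ = _ := by ring
  have h3 := h.trans h2
  norm_num at h3
  set R := -x + x ^ 2 / 2 + Real.log (1 + x) with hR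
  have e : (1 + x) * Real.log (1 + x) - x - x ^ 2 / 2 = -(x ^ 3 / 2) + (1 + x) * R := by
    rw [hR]; ring
  rw [e]
  calc _ ≤ |x| ^ 3 / 2 + |1 + x| * |R| := by
        refine (abs_add_le _ _).trans ?_
        rw [abs_neg, abs_div, abs_pow, abs_mul, abs_two]
    _ ≤ |x| ^ 3 / 2 + (3 / 2) * (2 * |x| ^ 3) := by
        gcongr
        exact (abs_add_le _ _).trans (by rw [abs_one]; linarith)
    _ ≤ _ := by
      have : 0 ≤ |x| ^ 3 := by positivity
      linarith

lemma r_eq (m n : ℕ) (hm : 0 < m) (hn : 0 < n) :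
    r m n = Real.sqrt Real.pi / Stirling.stirlingSeq n * Real.sqrt (m / n) *
      Real.exp (-(m * ((1 + ((n : ℝ) / m - 1)) * Real.log (1 + ((n : ℝ) / m - 1))
        - ((n : ℝ) / m - 1)))) := by
  have hm' : (0 : ℝ) < m := by exact_mod_cast hm
  have hn' : (0 : ℝ) < n := by exact_mod_cast hn
  have hπ := Real.pi_pos
  have e1 : -(m * ((1 + ((n : ℝ) / m - 1)) * Real.log (1 + ((n : ℝ) / m - 1))
        - ((n : ℝ) / m - 1))) = n * Real.log (m / n) + n + -m := by
    rw [add_sub_cancel, Real.log_div hn'.ne' hm'.ne', Real.log_div hm'.ne' hn'.ne']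
    field_simp; ring
  rw [e1, Real.exp_add, Real.exp_add, Real.exp_nat_mul, Real.exp_log (by positivity),
    Stirling.stirlingSeq, r, Real.sqrt_div hm'.le, Real.sqrt_mul (by positivity),
    Real.sqrt_mul (by positivity) Real.pi, Real.sqrt_mul (by positivity) (n : ℝ), div_pow, div_pow, ← Real.exp_nat_mul, mul_one]
  field_simp

lemma r_tendsto (t : ℝ) :
    Tendsto (fun m : ℕ => r m ⌊t * Real.sqrt m + m⌋₊) atTop (𝓝 (Real.exp (-(t ^ 2 / 2)))) := by
  have hsq : Tendsto (fun m : ℕ => Real.sqrt (m : ℝ)) atTop atTop :=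
    Real.tendsto_sqrt_atTop.comp tendsto_natCast_atTop_atTop
  have hinv : Tendsto (fun m : ℕ => (Real.sqrt (m : ℝ))⁻¹) atTop (𝓝 0) := hsq.inv_tendsto_atTop
  set N : ℕ → ℕ := fun m => ⌊t * Real.sqrt m + m⌋₊ with hN
  set x : ℕ → ℝ := fun m => (N m : ℝ) / m - 1 with hx
  have hnn : ∀ᶠ m : ℕ in atTop, 0 ≤ t * Real.sqrt m + m := by
    filter_upwards [hsq.eventually_ge_atTop (-t)] with m hm
    have h0 := Real.sqrt_nonneg (m : ℝ)
    have h1 : (m : ℝ) = Real.sqrt m * Real.sqrt m := (Real.mul_self_sqrt (by positivity)).symm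
    calc 0 ≤ (t + Real.sqrt m) * Real.sqrt m := mul_nonneg (by linarith) h0
      _ = _ := by rw [add_mul, ← h1]
  have hxt : Tendsto (fun m : ℕ => Real.sqrt m * x m) atTop (𝓝 t) := by
    have hlow : Tendsto (fun m : ℕ => t - (Real.sqrt (m : ℝ))⁻¹) atTop (𝓝 t) := by
      simpa using hinv.const_sub t
    refine tendsto_of_tendsto_of_tendsto_of_le_of_le' hlow tendsto_const_nhds ?_ ?_
    · filter_upwards [eventually_gt_atTop 0, hnn] with m hm h
      have hm' : (0 : ℝ) < m := by exact_mod_cast hm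
      have hs : 0 < Real.sqrt m := Real.sqrt_pos.2 hm'
      have f2 := Nat.lt_floor_add_one (t * Real.sqrt m + m)
      have h1 : Real.sqrt m * Real.sqrt m = m := Real.mul_self_sqrt hm'.le
      have e : Real.sqrt m * x m = ((N m : ℝ) - m) / Real.sqrt m := by
        simp only [hx]; rw [eq_div_iff hs.ne']
        calc _ = (Real.sqrt m * Real.sqrt m) * ((N m : ℝ) / m - 1) := by ring
          _ = _ := by rw [h1]; field_simp
      rw [e, le_div_iff₀ hs, sub_mul, inv_mul_cancel₀ hs.ne']
      linarith
    · filter_upwards [eventually_gt_atTop 0, hnn] with m hm h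
      have hm' : (0 : ℝ) < m := by exact_mod_cast hm
      have hs : 0 < Real.sqrt m := Real.sqrt_pos.2 hm'
      have f1 := Nat.floor_le h
      have h1 : Real.sqrt m * Real.sqrt m = m := Real.mul_self_sqrt hm'.le
      have e : Real.sqrt m * x m = ((N m : ℝ) - m) / Real.sqrt m := by
        simp only [hx]; rw [eq_div_iff hs.ne']
        calc _ = (Real.sqrt m * Real.sqrt m) * ((N m : ℝ) / m - 1) := by ring
          _ = _ := by rw [h1]; field_simp
      rw [e, div_le_iff₀ hs]
      linarith
  have hx0 : Tendsto x atTop (𝓝 0) := by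
    have := hinv.mul hxt
    rw [zero_mul] at this
    refine this.congr' ?_
    filter_upwards [eventually_gt_atTop 0] with m hm
    have hs : 0 < Real.sqrt (m : ℝ) := Real.sqrt_pos.2 (by exact_mod_cast hm)
    rw [inv_mul_cancel_left₀ hs.ne']
  have hmx : Tendsto (fun m : ℕ => (m : ℝ) * x m ^ 2) atTop (𝓝 (t ^ 2)) := by
    refine (hxt.pow 2).congr fun m => ?_
    rw [mul_pow, Real.sq_sqrt (by positivity)]
  have hratio : Tendsto (fun m : ℕ => (N m : ℝ) / m) atTop (𝓝 1) := by
    have := hx0.add_const 1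
    simpa [hx] using this
  have hNtop : Tendsto N atTop atTop := by
    rw [← tendsto_natCast_atTop_iff (R := ℝ)]
    have := hratio.pos_mul_atTop one_pos (tendsto_natCast_atTop_atTop (R := ℝ))
    refine this.congr' ?_
    filter_upwards [eventually_gt_atTop 0] with m hm
    have hm' : (0 : ℝ) < m := by exact_mod_cast hm
    field_simp
  have hE : Tendsto (fun m : ℕ => (m : ℝ) * ((1 + x m) * Real.log (1 + x m) - x m)) atTop
      (𝓝 (t ^ 2 / 2)) := by
    have hz : Tendsto (fun m : ℕ => (m : ℝ) * ((1 + x m) * Real.log (1 + x m) - x m - x m ^ 2 / 2))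
        atTop (𝓝 0) := by
      have hb : Tendsto (fun m : ℕ => 4 * ((m : ℝ) * x m ^ 2) * |x m|) atTop (𝓝 0) := by
        have := (hmx.const_mul 4).mul hx0.abs
        simpa using this
      refine squeeze_zero_norm' ?_ hb
      have : ∀ᶠ m in atTop, |x m| < 1 / 2 := by
        have := hx0.abs
        rw [abs_zero] at this
        exact this.eventually_lt_const (by norm_num)
      filter_upwards [this] with m hm
      rw [Real.norm_eq_abs, abs_mul, Nat.abs_cast]
      calc _ ≤ (m : ℝ) * (4 * |x m| ^ 3) := by gcongr; exact h_aux _ hm.le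
        _ = _ := by rw [← sq_abs (x m)]; ring
    have := hz.add (hmx.div_const 2)
    rw [zero_add] at this
    refine this.congr fun m => ?_
    ring
  have hst := (Stirling.tendsto_stirlingSeq_sqrt_pi.comp hNtop)
  have hπ : 0 < Real.sqrt Real.pi := Real.sqrt_pos.2 Real.pi_pos
  have hA : Tendsto (fun m => Real.sqrt Real.pi / Stirling.stirlingSeq (N m)) atTop (𝓝 1) := by
    have := (tendsto_const_nhds (x := Real.sqrt Real.pi)).div hst hπ.ne'
    rw [div_self hπ.ne'] at this
    exact this
  have hB : Tendsto (fun m : ℕ => Real.sqrt ((m : ℝ) / N m)) atTop (𝓝 1) := by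
    have := (hratio.inv₀ one_ne_zero).sqrt
    simpa using this
  have hC := (hA.mul hB).mul (Real.continuous_exp.continuousAt.tendsto.comp hE.neg)
  rw [one_mul, one_mul] at hC
  refine hC.congr' ?_
  filter_upwards [eventually_gt_atTop 0, hNtop.eventually_gt_atTop 0] with m hm hn
  exact (r_eq m (N m) hm hn).symm

open MeasureTheory

noncomputable def H (ν : ℝ) (m : ℕ) (s : ℝ) : ℝ :=
  (Set.Ici (0 : ℝ)).indicator (fun s => r m ⌊s⌋₊ ^ ν) s

lemma H_meas (ν : ℝ) (m : ℕ) : Measurable (H ν m) := by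
  unfold H
  refine Measurable.indicator ?_ measurableSet_Ici
  exact (measurable_from_nat (f := fun n => r m n ^ ν)).comp Nat.measurable_floor

lemma bound_integrable (ν : ℝ) (hν : 0 < ν) :
    Integrable (fun t : ℝ => Real.exp (-((|t| - 2) / 2)) ^ ν) := by
  have h1 : Integrable (fun t : ℝ => Real.exp (-(ν / 2) * |t|)) := by
    rw [← integrableOn_univ, ← Set.Iic_union_Ioi (a := (0 : ℝ)), integrableOn_union]
    constructor
    · refine (integrableOn_exp_mul_Iic (by positivity : 0 < ν / 2) 0).congr_fun ?_ measurableSet_Iic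
      intro t ht
      simp only
      rw [abs_of_nonpos ht]; ring_nf
    · refine (integrableOn_exp_mul_Ioi (by linarith : -(ν / 2) < 0) 0).congr_fun ?_ measurableSet_Ioi
      intro t ht
      simp only
      rw [abs_of_pos ht]
  refine (h1.const_mul (Real.exp ν)).congr (Eventually.of_forall fun t => ?_)
  simp only
  rw [← Real.exp_mul, ← Real.exp_add]
  congr 1; ring

lemma H_bound (ν : ℝ) (hν : 0 < ν) (m : ℕ) (hm : 0 < m) (t : ℝ) :
    ‖H ν m (t * Real.sqrt m + m)‖ ≤ Real.exp (-((|t| - 2) / 2)) ^ ν := by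
  unfold H
  by_cases h : 0 ≤ t * Real.sqrt m + m
  · rw [Set.indicator_of_mem (by exact h), Real.norm_of_nonneg (Real.rpow_nonneg (r_nonneg _ _) _)]
    exact Real.rpow_le_rpow (r_nonneg _ _) (r_floor_le m hm t h) hν.le
  · rw [Set.indicator_of_notMem (by exact h), norm_zero]
    positivity

lemma F_integrable (ν : ℝ) (hν : 0 < ν) (m : ℕ) (hm : 0 < m) :
    Integrable (fun t => H ν m (t * Real.sqrt m + m)) :=
  (bound_integrable ν hν).mono'
    ((H_meas ν m).comp (by fun_prop)).aestronglyMeasurable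
    (Eventually.of_forall fun t => H_bound ν hν m hm t)

lemma integral_F (ν : ℝ) (hν : 0 < ν) (m : ℕ) (hm : 0 < m) :
    ∫ t, H ν m (t * Real.sqrt m + m) = (Real.sqrt m)⁻¹ * ∑' n, r m n ^ ν := by
  have hs : 0 < Real.sqrt (m : ℝ) := Real.sqrt_pos.2 (by exact_mod_cast hm)
  have hI : Integrable (H ν m) := by
    have := ((F_integrable ν hν m hm).comp_div hs.ne').comp_sub_right (m : ℝ)
    refine this.congr (Eventually.of_forall fun t => ?_)
    simp only
    rw [div_mul_cancel₀ _ hs.ne', sub_add_cancel]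
  have h1 := Measure.integral_comp_mul_right (fun s => H ν m (s + m)) (Real.sqrt m)
  have h2 := integral_add_right_eq_self (μ := volume) (H ν m) (m : ℝ)
  rw [h1, h2, abs_of_pos (inv_pos.2 hs), smul_eq_mul]
  congr 1
  have hU : (⋃ n : ℕ, Set.Ico (n : ℝ) (n + 1)) = Set.Ici 0 := by
    ext s
    simp only [Set.mem_iUnion, Set.mem_Ico, Set.mem_Ici]
    constructor
    · rintro ⟨n, hn, _⟩
      exact le_trans (by positivity) hn
    · intro h
      exact ⟨⌊s⌋₊, Nat.floor_le h, Nat.lt_floor_add_one s⟩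
  have hd : Pairwise (Function.onFun Disjoint fun n : ℕ => Set.Ico (n : ℝ) (n + 1)) := by
    intro a b hab
    rw [Function.onFun, Set.disjoint_left]
    rintro s ⟨h1, h2⟩ ⟨h3, h4⟩
    apply hab
    have p1 := (Nat.floor_eq_iff (le_trans (by positivity) h1)).2 ⟨h1, h2⟩
    have p2 := (Nat.floor_eq_iff (le_trans (by positivity) h1)).2 ⟨h3, h4⟩
    omega
  have h3 := hasSum_integral_iUnion (μ := volume) (f := H ν m) (fun n : ℕ => measurableSet_Ico)
    hd hI.integrableOn
  rw [hU] at h3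
  have h4 : ∫ x in Set.Ici 0, H ν m x = ∫ x, H ν m x := by
    apply setIntegral_eq_integral_of_forall_compl_eq_zero
    intro x hx
    exact Set.indicator_of_notMem hx _
  rw [← h4, ← h3.tsum_eq]
  refine tsum_congr fun n => ?_
  rw [setIntegral_congr_fun (g := fun _ => r m n ^ ν) measurableSet_Ico]
  · simp
  · rintro s ⟨a, b⟩
    have h0 : 0 ≤ s := le_trans (by positivity) a
    simp only [H]
    rw [Set.indicator_of_mem (by exact h0), (Nat.floor_eq_iff h0).2 ⟨a, b⟩]

lemma TT_eq_integral (ν : ℝ) (hν : 0 < ν) (m : ℕ) (hm : 0 < m) :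
    TT ν m = (Real.sqrt (2 * Real.pi))⁻¹ * ∫ t, H ν m (t * Real.sqrt m + m) := by
  have hm' : (0 : ℝ) < m := by exact_mod_cast hm
  have hπ := Real.pi_pos
  rw [integral_F ν hν m hm, ← mul_assoc, ← mul_inv, ← Real.sqrt_mul (by positivity), ← tsum_mul_left,
    TT]
  refine tsum_congr fun n => ?_
  have hr : 0 < r m n := by unfold r; positivity
  have e1 : (m : ℝ) ^ n * Real.exp (-(m : ℝ)) * Real.sqrt (2 * Real.pi * m) / (n.factorial : ℝ)
      = r m n := by unfold r; ring
  have e2 : Real.exp (-(m : ℝ)) * ((m : ℝ) ^ n / (n.factorial : ℝ))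
      = (Real.sqrt (2 * Real.pi * m))⁻¹ * r m n := by unfold r; field_simp
  rw [e1, e2, Real.rpow_sub_one hr.ne']
  field_simp

lemma TT_lim (ν : ℝ) (hν : 0 < ν) :
    Tendsto (fun m : ℕ => TT ν m) atTop (𝓝 (1 / Real.sqrt ν)) := by
  have hπ := Real.pi_pos
  have hd : Tendsto (fun k : ℕ => ∫ t, H ν (k + 1) (t * Real.sqrt ((k + 1 : ℕ) : ℝ) + ((k + 1 : ℕ) : ℝ)))
      atTop (𝓝 (∫ t : ℝ, Real.exp (-(ν / 2) * t ^ 2))) := by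
    refine tendsto_integral_of_dominated_convergence _
      (fun k => (F_integrable ν hν (k + 1) k.succ_pos).aestronglyMeasurable)
      (bound_integrable ν hν)
      (fun k => Eventually.of_forall fun t => H_bound ν hν (k + 1) k.succ_pos t)
      (Eventually.of_forall fun t => ?_)
    have h1 := ((r_tendsto t).rpow_const (p := ν) (Or.inr hν.le))
    rw [← Real.exp_mul, show -(t ^ 2 / 2) * ν = -(ν / 2) * t ^ 2 by ring] at h1
    have h2 : Tendsto (fun m : ℕ => H ν m (t * Real.sqrt m + m)) atTop
        (𝓝 (Real.exp (-(ν / 2) * t ^ 2))) := by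
      refine h1.congr' ?_
      have hsq : Tendsto (fun m : ℕ => Real.sqrt (m : ℝ)) atTop atTop :=
        Real.tendsto_sqrt_atTop.comp tendsto_natCast_atTop_atTop
      filter_upwards [hsq.eventually_ge_atTop (-t)] with m hm
      have h0 := Real.sqrt_nonneg (m : ℝ)
      have h1 : (m : ℝ) = Real.sqrt m * Real.sqrt m := (Real.mul_self_sqrt (by positivity)).symm
      have h2 : 0 ≤ t * Real.sqrt m + m := by
        calc 0 ≤ (t + Real.sqrt m) * Real.sqrt m := mul_nonneg (by linarith) h0
          _ = _ := by rw [add_mul, ← h1]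
      rw [H, Set.indicator_of_mem (by exact h2)]
    exact h2.comp (tendsto_add_atTop_nat 1)
  rw [← tendsto_add_atTop_iff_nat 1]
  have h := hd.const_mul (Real.sqrt (2 * Real.pi))⁻¹
  rw [integral_gaussian] at h
  have e : (Real.sqrt (2 * Real.pi))⁻¹ * Real.sqrt (Real.pi / (ν / 2)) = 1 / Real.sqrt ν := by
    rw [show Real.pi / (ν / 2) = 2 * Real.pi / ν by field_simp, Real.sqrt_div (by positivity)]
    have : 0 < Real.sqrt (2 * Real.pi) := by positivity
    field_simp
  rw [e] at h
  refine h.congr fun k => ?_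
  exact (TT_eq_integral ν hν (k + 1) k.succ_pos).symm

end PSE

/-- For `ν > 0`, the Poisson expectation
`E[f_α(X_α)] = ∑_{n=0}^∞ e^{-α} (α^n/n!) (α^n e^{-α} √(2πα)/n!)^{ν-1}`
satisfies `E[f_α(X_α)] = ν^{-1/2} + O(α^{-1})` as `α → ∞`. -/
theorem poisson_stirling_expectation_asymptotic (ν : ℝ) (hν : 0 < ν) :
    ∃ C > (0 : ℝ), ∃ A > (0 : ℝ), ∀ α : ℝ, α ≥ A →
      |(∑' n : ℕ, Real.exp (-α) * (α ^ n / (n.factorial : ℝ)) *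
          (α ^ n * Real.exp (-α) * Real.sqrt (2 * Real.pi * α) / (n.factorial : ℝ)) ^ (ν - 1)) -
        1 / Real.sqrt ν|
        ≤ C * α⁻¹ := by
  exact PSE.final_aux ν hν (PSE.TT_lim ν hν)
end
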